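/- Let K ⊆ ℝ² be a compact convex set with nonempty interior whose boundary ∂K is a C² curve of strictly positive curvature, let T be its outer billiard map, and place the origin 0 at the Santalo point of K. If every T-orbit is locally minimizing (with respect to the generating function S for this origin), then ∂K is an ellipse, i.e. the image of the unit circle under an invertible affine map of ℝ². -/

import Mathlib

/-!
The boundary of the polar body `K°` is parametrized by a curve `y` with `det (y, y') = 1`, so that
the parameter is twice the swept area and `y'' = -k y` with `k > 0` periodic of period `P`
(`exists_hill`). Then `t ↦ (y₂', -y₁') t` runs through `∂K`, the supporting line of `K` at this
point is `⟪y t, ·⟫ = 1`, the area of `K°` is `P / 2` and that of `K` is `∫ k / 2`. The curve is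
an ellipse as soon as `k` is constant (`isEllipse`).

*Upper bound for `∫ k`.* The Santaló point is where the first variation of the area of the polar
body vanishes; as it is the origin, `∫ y = 0` (`integral_y_eq_zero`). Hence `y` is also the velocity
of a closed convex curve, which encloses an area controlled by the affine isoperimetric inequality
(`affine_arc`); with Minkowski's inequality for the mixed area (`integral_le_zero_of_dirichlet`)
this gives the Blaschke–Santaló inequality `∫ k ≤ 4 π² / P` (`integral_k_le`).

*Lower bound for `∫ √k`.* A point `A` outside `K` has coordinates `(t, s)`, where the positively
oriented tangent line through `A` touches `K` at parameter `t`, and `A` lies before the point of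
contact at distance `s |y t|`. In these coordinates the area is `s ds dt`, and it is preserved
by the outer billiard map (`measurePreserving_next`), which sends `-s` to `s` on the same line. If
every vertex `A` of an orbit is turned about the origin with angular velocity `w(A)`, the second
variation of the action is at most a sum over the edges of

`w₀² |A₀|² (b + s Y) + w₁² |A₁|² (s Y - b) - s (w₀ |A₀|² + w₁ |A₁|²)² / (2 (k + s²))`,

where `Y = |y|²` and `b = ⟪y, y'⟫` (`jet_edge`). Differentiability of the generating function is not
needed: it is bounded above, with equality at the orbit, by the area of the triangle cut off by a
moving tangent line, and the second derivative of this bound is optimized over the speed of the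
tangent line. Choosing `w(A) = u(A) / |A|²` with `u(A) = (1 + ε² |A|²)^(-1/2)` and integrating over
the exterior of `K`, the contributions of the ends of long orbit segments disappear
(`integral_nonneg_of_orbits`). For `ε = 0` the integrand would not be integrable; for `ε > 0` the
integral over `s` is explicit, and as `ε → 0` it yields `0 ≤ ∫ (√k - 1 / |y|²)`
(`integral_edge_le`). As `1 / |y|²` is the derivative of the polar angle of `y`, this says
`2 π ≤ ∫ √k` (`integral_sqrt_ge`).

*Conclusion.* By Cauchy–Schwarz, `4 π² ≤ (∫ √k)² ≤ P ∫ k ≤ 4 π²`, so that `√k` is constant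
(`k_eq_of_le`).
-/

open Real MeasureTheory Set

noncomputable section

/-- Determinant of two plane vectors. -/
def detV (u v : ℝ × ℝ) : ℝ := u.1 * v.2 - u.2 * v.1

/-- The unit vector of polar angle `φ`. -/
def uVec (φ : ℝ) : ℝ × ℝ := (Real.cos φ, Real.sin φ)

/-- The boundary of `K` is a `C²` curve of strictly positive curvature, expressed through the
radial function `r` of `∂K` with respect to the interior point `O`. -/
def HasC2PosCurvBoundary (K : Set (ℝ × ℝ)) (O : ℝ × ℝ) (r : ℝ → ℝ) : Prop :=
  O ∈ interior K ∧ ContDiff ℝ 2 r ∧ (∀ φ, r (φ + 2 * π) = r φ) ∧ (∀ φ, 0 < r φ) ∧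
  (∀ φ, 0 < r φ ^ 2 + 2 * (deriv r φ) ^ 2 - r φ * deriv (deriv r) φ) ∧
  frontier K = {p | ∃ φ, p = O + r φ • uVec φ}

/-- `T` is the outer billiard map of `K`: for `A ∉ K`, the midpoint of `[A, T A]` lies on `∂K`,
the segment `[A, T A]` meets `K` exactly at this midpoint, and `K` lies to the left of the
oriented segment. -/
def IsOuterBilliard (K : Set (ℝ × ℝ)) (T : ℝ × ℝ → ℝ × ℝ) : Prop :=
  ∀ A, A ∉ K →
    T A ∉ K ∧
    (1 / 2 : ℝ) • (A + T A) ∈ frontier K ∧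
    segment ℝ A (T A) ∩ K = {(1 / 2 : ℝ) • (A + T A)} ∧
    ∀ k ∈ K, 0 ≤ detV (T A - A) (k - (1 / 2 : ℝ) • (A + T A))

/-- A set is an ellipse if it is the image of the unit circle under an invertible affine map. -/
def IsEllipse (C : Set (ℝ × ℝ)) : Prop :=
  ∃ (L : (ℝ × ℝ) →ₗ[ℝ] ℝ × ℝ) (c : ℝ × ℝ), Function.Bijective L ∧
    C = (fun x => c + L x) '' {x : ℝ × ℝ | x.1 ^ 2 + x.2 ^ 2 = 1}

/-- The polar dual of `C` with respect to `x`. -/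
def polarDual (C : Set (ℝ × ℝ)) (x : ℝ × ℝ) : Set (ℝ × ℝ) :=
  {y | ∀ c ∈ C, y.1 * (c.1 - x.1) + y.2 * (c.2 - x.2) ≤ 1}

/-- `x` is the Santalo point of `C`: the interior point minimizing the area of the polar dual. -/
def IsSantaloPoint (C : Set (ℝ × ℝ)) (x : ℝ × ℝ) : Prop :=
  x ∈ interior C ∧ ∀ y ∈ interior C, volume (polarDual C x) ≤ volume (polarDual C y)

/-- The data of a segment `[M₀, M₁]` with `Mᵢ` on the open ray of polar angle `φᵢ`,
tangent to `∂K` exactly at its midpoint. -/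
def SegData (K : Set (ℝ × ℝ)) (φ₀ φ₁ : ℝ) (M₀ M₁ : ℝ × ℝ) : Prop :=
  (∃ s > (0 : ℝ), M₀ = s • uVec φ₀) ∧ (∃ s > (0 : ℝ), M₁ = s • uVec φ₁) ∧
  (1 / 2 : ℝ) • (M₀ + M₁) ∈ frontier K ∧
  segment ℝ M₀ M₁ ∩ K = {(1 / 2 : ℝ) • (M₀ + M₁)}

/-- `S` is the generating function of the outer billiard of `K` (with respect to the origin `0`):
`S φ₀ φ₁` is the area of the triangle `0 M₀ M₁`. -/
def IsGenFun (K : Set (ℝ × ℝ)) (S : ℝ → ℝ → ℝ) : Prop :=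
  ∀ φ₀ φ₁ : ℝ, φ₀ < φ₁ → φ₁ < φ₀ + π →
    ∃ M₀ M₁, SegData K φ₀ φ₁ M₀ M₁ ∧ S φ₀ φ₁ = |detV M₀ M₁| / 2

/-- The angular configuration `φ : ℤ → ℝ` is locally minimizing for the generating function `S`. -/
def LocMinConfig (S : ℝ → ℝ → ℝ) (φ : ℤ → ℝ) : Prop :=
  ∀ M N : ℤ, M ≤ N →
    IsLocalMin (fun x : ℤ → ℝ =>
      S (φ (M - 1)) (x M) + (∑ i ∈ Finset.Icc M (N - 1), S (x i) (x (i + 1))) +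
        S (x N) (φ (N + 1))) φ

/-- `φ` is a choice of polar angles for the sequence `A`, with consecutive angles within `(0, π)`
of each other. -/
def IsPolarLift (A : ℤ → ℝ × ℝ) (φ : ℤ → ℝ) : Prop :=
  (∀ n, ∃ ρ > (0 : ℝ), A n = ρ • uVec (φ n)) ∧ ∀ n, φ n < φ (n + 1) ∧ φ (n + 1) < φ n + π

/-- Every orbit of the outer billiard map `T` is locally minimizing with respect to the
generating function `S`. -/
def AllOrbitsLocMin (K : Set (ℝ × ℝ)) (T : ℝ × ℝ → ℝ × ℝ) (S : ℝ → ℝ → ℝ) : Prop :=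
  ∀ A : ℤ → ℝ × ℝ, (∀ n, A n ∉ K) → (∀ n, A (n + 1) = T (A n)) →
    ∀ φ : ℤ → ℝ, IsPolarLift A φ → LocMinConfig S φ

/-! ### Closed solutions of the Hill equation -/

/-- A closed convex curve `y = (y₁, y₂)` around the origin in a parameter for which
`det (y, y') = 1`, with derivative `g = (g₁, g₂)`. Such a curve solves the Hill equation
`y'' = -k y`; the function `Θ` is a continuous polar angle of `y`, and `P` is the period.
For the outer billiard table `K`, the curve `y` is the boundary of the polar body `K°`, and
`(g₂, -g₁)` is the boundary of `K`, the point `(g₂, -g₁) t` being the one where the supporting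
line of `K` is `⟪y t, ·⟫ = 1`. -/
structure Hill (y₁ y₂ g₁ g₂ k Θ : ℝ → ℝ) (P : ℝ) : Prop where
  Ppos : 0 < P
  hy₁ : ∀ t, HasDerivAt y₁ (g₁ t) t
  hy₂ : ∀ t, HasDerivAt y₂ (g₂ t) t
  hg₁ : ∀ t, HasDerivAt g₁ (-(k t * y₁ t)) t
  hg₂ : ∀ t, HasDerivAt g₂ (-(k t * y₂ t)) t
  hk : Continuous k
  kpos : ∀ t, 0 < k t
  det : ∀ t, y₁ t * g₂ t - y₂ t * g₁ t = 1
  hΘ : ∀ t, HasDerivAt Θ (1 / (y₁ t ^ 2 + y₂ t ^ 2)) t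
  hcos : ∀ t, y₁ t = √(y₁ t ^ 2 + y₂ t ^ 2) * Real.cos (Θ t)
  hsin : ∀ t, y₂ t = √(y₁ t ^ 2 + y₂ t ^ 2) * Real.sin (Θ t)
  perΘ : ∀ t, Θ (t + P) = Θ t + 2 * π
  pery₁ : ∀ t, y₁ (t + P) = y₁ t
  pery₂ : ∀ t, y₂ (t + P) = y₂ t
  perg₁ : ∀ t, g₁ (t + P) = g₁ t
  perg₂ : ∀ t, g₂ (t + P) = g₂ t
  perk : ∀ t, k (t + P) = k t

namespace Hill

variable {y₁ y₂ g₁ g₂ k Θ : ℝ → ℝ} {P : ℝ}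

lemma cy₁ (H : Hill y₁ y₂ g₁ g₂ k Θ P) : Continuous y₁ :=
  continuous_iff_continuousAt.2 fun t => (H.hy₁ t).continuousAt
lemma cy₂ (H : Hill y₁ y₂ g₁ g₂ k Θ P) : Continuous y₂ :=
  continuous_iff_continuousAt.2 fun t => (H.hy₂ t).continuousAt
lemma cg₁ (H : Hill y₁ y₂ g₁ g₂ k Θ P) : Continuous g₁ :=
  continuous_iff_continuousAt.2 fun t => (H.hg₁ t).continuousAt
lemma cg₂ (H : Hill y₁ y₂ g₁ g₂ k Θ P) : Continuous g₂ :=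
  continuous_iff_continuousAt.2 fun t => (H.hg₂ t).continuousAt
lemma cΘ (H : Hill y₁ y₂ g₁ g₂ k Θ P) : Continuous Θ :=
  continuous_iff_continuousAt.2 fun t => (H.hΘ t).continuousAt

lemma Ypos (H : Hill y₁ y₂ g₁ g₂ k Θ P) (t : ℝ) : 0 < y₁ t ^ 2 + y₂ t ^ 2 := by
  have h := H.det t
  by_contra hc
  have h1 : y₁ t = 0 := by nlinarith [sq_nonneg (y₁ t), sq_nonneg (y₂ t)]
  have h2 : y₂ t = 0 := by nlinarith [sq_nonneg (y₁ t), sq_nonneg (y₂ t)]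
  simp [h1, h2] at h

lemma Θmono (H : Hill y₁ y₂ g₁ g₂ k Θ P) : StrictMono Θ :=
  strictMono_of_hasDerivAt_pos H.hΘ fun t => one_div_pos.2 (H.Ypos t)

lemma perΘ_int (H : Hill y₁ y₂ g₁ g₂ k Θ P) (t : ℝ) (n : ℤ) :
    Θ (t + n * P) = Θ t + n * (2 * π) := by
  induction n using Int.induction_on with
  | zero => simp
  | succ i hi =>
    have := H.perΘ (t + (i : ℤ) * P)
    push_cast at *
    rw [show t + (i + 1) * P = t + i * P + P by ring, this, hi]; ring
  | pred i hi =>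
    have := H.perΘ (t + (-(i : ℤ) - 1 : ℤ) * P)
    push_cast at *
    rw [show t + (-i - 1) * P + P = t + -i * P by ring, hi] at this
    linarith

lemma Θsurj (H : Hill y₁ y₂ g₁ g₂ k Θ P) : Function.Surjective Θ := by
  intro x
  obtain ⟨n, hn⟩ := exists_nat_gt (|x - Θ 0| / (2 * π))
  have hpi := Real.two_pi_pos
  rw [div_lt_iff₀ hpi] at hn
  have h1 := H.perΘ_int 0 n
  have h2 := H.perΘ_int 0 (-n)
  push_cast at h1 h2
  have h3 := abs_lt.1 hn
  obtain ⟨t, -, ht⟩ := intermediate_value_Icc (a := 0 + -(n:ℝ) * P) (b := 0 + n * P)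
    (by nlinarith [H.Ppos, (Nat.cast_nonneg n : (0:ℝ) ≤ n)]) H.cΘ.continuousOn
    (show x ∈ Set.Icc _ _ by rw [h1, h2]; constructor <;> linarith [h3.1, h3.2])
  exact ⟨t, ht⟩

end Hill

/-! ### Minkowski and affine isoperimetric inequalities on an arc -/

/-- A function with nonnegative derivative on an open interval increases between its limits at the
ends, where it need not be defined. -/
lemma le_of_deriv_nonneg_of_tendsto {F F' : ℝ → ℝ} {α β A B : ℝ} (hαβ : α < β)
    (hF : ∀ t ∈ Set.Ioo α β, HasDerivAt F (F' t) t) (hF' : ∀ t ∈ Set.Ioo α β, 0 ≤ F' t)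
    (hA : Filter.Tendsto F (nhdsWithin α (Set.Ioi α)) (nhds A))
    (hB : Filter.Tendsto F (nhdsWithin β (Set.Iio β)) (nhds B)) : A ≤ B := by
  have hmono : MonotoneOn F (Set.Ioo α β) := by
    apply monotoneOn_of_deriv_nonneg (convex_Ioo α β)
    · exact fun t ht => (hF t ht).continuousAt.continuousWithinAt
    · rw [interior_Ioo]
      exact fun t ht => (hF t ht).differentiableAt.differentiableWithinAt
    · rw [interior_Ioo]
      intro t ht
      rw [(hF t ht).deriv]
      exact hF' t ht
  have key : ∀ s ∈ Set.Ioo α β, A ≤ F s := by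
    intro s hs
    refine le_of_tendsto hA ?_
    filter_upwards [Ioo_mem_nhdsGT hs.1] with t ht
    exact hmono ⟨ht.1, ht.2.trans hs.2⟩ hs ht.2.le
  refine ge_of_tendsto hB ?_
  filter_upwards [Ioo_mem_nhdsLT hαβ] with t ht
  exact key t ht

lemma tendsto_div_zero_of_hasDerivAt {f y : ℝ → ℝ} {α g : ℝ} (hf : HasDerivAt f 0 α)
    (hf0 : f α = 0) (hy : HasDerivAt y g α) (hy0 : y α = 0) (hg : g ≠ 0) :
    Filter.Tendsto (fun t => f t / y t) (nhdsWithin α {α}ᶜ) (nhds 0) := by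
  have h1 := hasDerivAt_iff_tendsto_slope.1 hf
  have h2 := hasDerivAt_iff_tendsto_slope.1 hy
  have h3 := h1.div h2 hg
  rw [zero_div] at h3
  refine h3.congr' ?_
  filter_upwards [self_mem_nhdsWithin] with t ht
  have : t - α ≠ 0 := sub_ne_zero.2 ht
  simp only [Pi.div_apply, slope_def_field, hf0, hy0, sub_zero]
  field_simp

/-- The Wirtinger-type inequality behind Minkowski's inequality, for a function `p` which vanishes
at two consecutive zeros of `y₁` and has derivative `χ y₁`. It holds because
`(y₂ / y₁)' = 1 / y₁ ^ 2`, so that the integral equals `-∫ p ^ 2 / (2 y₁ ^ 2)`. -/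
lemma integral_le_zero_of_dirichlet {y₁ y₂ g₁ g₂ p χ : ℝ → ℝ} {α β : ℝ} (hαβ : α < β)
    (hy₁ : ∀ t, HasDerivAt y₁ (g₁ t) t) (hy₂ : ∀ t, HasDerivAt y₂ (g₂ t) t)
    (det : ∀ t, y₁ t * g₂ t - y₂ t * g₁ t = 1)
    (hpos : ∀ t ∈ Set.Ioo α β, 0 < y₁ t) (hα : y₁ α = 0) (hβ : y₁ β = 0)
    (hp : ∀ t, HasDerivAt p (χ t * y₁ t) t) (hpα : p α = 0) (hpβ : p β = 0)
    (hχ : Continuous χ) : ∫ t in α..β, y₂ t * p t * χ t ≤ 0 := by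
  have cy₂ : Continuous y₂ := continuous_iff_continuousAt.2 fun t => (hy₂ t).continuousAt
  have cp : Continuous p := continuous_iff_continuousAt.2 fun t => (hp t).continuousAt
  have cI : Continuous fun t => y₂ t * p t * χ t := (cy₂.mul cp).mul hχ
  have hI : ∀ t, HasDerivAt (fun s => ∫ u in α..s, y₂ u * p u * χ u) (y₂ t * p t * χ t) t :=
    fun t => intervalIntegral.integral_hasDerivAt_right (cI.intervalIntegrable _ _)
      (cI.stronglyMeasurableAtFilter _ _) cI.continuousAt
  have cInt : Continuous (fun s => ∫ u in α..s, y₂ u * p u * χ u) :=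
    continuous_iff_continuousAt.2 fun t => (hI t).continuousAt
  have lim : ∀ γ, y₁ γ = 0 → p γ = 0 →
      Filter.Tendsto (fun t => p t ^ 2 / y₁ t * (y₂ t / 2) - ∫ u in α..t, y₂ u * p u * χ u)
        (nhdsWithin γ {γ}ᶜ) (nhds (0 * (y₂ γ / 2) - ∫ u in α..γ, y₂ u * p u * χ u)) := by
    intro γ hγ hpγ
    have hg : g₁ γ ≠ 0 := by
      intro h; have := det γ; simp [h, hγ] at this
    refine Filter.Tendsto.sub (Filter.Tendsto.mul ?_ ?_) ?_
    · refine tendsto_div_zero_of_hasDerivAt (f := fun t => p t ^ 2) ?_ (by simp [hpγ])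
        (hy₁ γ) hγ hg
      have := (hp γ).fun_pow 2
      simpa [hpγ] using this
    · exact ((cy₂.tendsto γ).div_const 2).mono_left nhdsWithin_le_nhds
    · exact (cInt.tendsto γ).mono_left nhdsWithin_le_nhds
  have h := le_of_deriv_nonneg_of_tendsto
    (F := fun t => p t ^ 2 / y₁ t * (y₂ t / 2) - ∫ u in α..t, y₂ u * p u * χ u)
    (F' := fun t => p t ^ 2 / (2 * y₁ t ^ 2)) hαβ ?_ (fun t _ => by positivity)
    ((lim α hα hpα).mono_left (nhdsWithin_mono _ fun x hx => ne_of_gt hx))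
    ((lim β hβ hpβ).mono_left (nhdsWithin_mono _ fun x hx => ne_of_lt hx))
  · simp only [intervalIntegral.integral_same] at h
    linarith
  · intro t ht
    have hne := (hpos t ht).ne'
    have h := ((((hp t).pow 2).div (hy₁ t) hne).mul ((hy₂ t).div_const 2)).sub (hI t)
    refine h.congr_deriv ?_
    have hd := det t
    have : y₁ t * g₂ t = 1 + y₂ t * g₁ t := by linarith
    simp only [Pi.pow_apply, Pi.div_apply, Nat.cast_ofNat, pow_one, Nat.add_one_sub_one]
    field_simp
    linear_combination (p t ^ 2) * hd

/-- Half of the planar affine isoperimetric inequality, on an arc between two consecutive points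
with vertical tangent of a curve `(X, ·)` with velocity `(y₁, y₂)`. With `X = a sin σ`, the
inequality is the integral of `1 ≤ (2 c σ' + σ' ^ (-2) / c ^ 2) / 3`. -/
lemma affine_arc {y₁ y₂ g₁ g₂ X : ℝ → ℝ} {α β a c : ℝ} (hαβ : α < β)
    (hy₁ : ∀ t, HasDerivAt y₁ (g₁ t) t) (hy₂ : ∀ t, HasDerivAt y₂ (g₂ t) t)
    (det : ∀ t, y₁ t * g₂ t - y₂ t * g₁ t = 1)
    (hpos : ∀ t ∈ Set.Ioo α β, 0 < y₁ t) (hα : y₁ α = 0) (hβ : y₁ β = 0)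
    (hX : ∀ t, HasDerivAt X (y₁ t) t) (hXα : X α = -a) (hXβ : X β = a) (hc : 0 < c) :
    β - α ≤ 2 * c / 3 * π + 1 / (3 * c ^ 2) * (2 * ∫ t in α..β, y₂ t * X t) := by
  have cy₂ : Continuous y₂ := continuous_iff_continuousAt.2 fun t => (hy₂ t).continuousAt
  have cX : Continuous X := continuous_iff_continuousAt.2 fun t => (hX t).continuousAt
  have cI : Continuous fun t => y₂ t * X t := cy₂.mul cX
  have hmono : StrictMonoOn X (Set.Icc α β) := by
    apply strictMonoOn_of_deriv_pos (convex_Icc α β) cX.continuousOn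
    rw [interior_Icc]
    intro t ht
    rw [(hX t).deriv]
    exact hpos t ht
  have hlt : ∀ t ∈ Set.Ioo α β, -a < X t ∧ X t < a := fun t ht =>
    ⟨hXα ▸ hmono ⟨le_rfl, hαβ.le⟩ ⟨ht.1.le, ht.2.le⟩ ht.1,
      hXβ ▸ hmono ⟨ht.1.le, ht.2.le⟩ ⟨hαβ.le, le_rfl⟩ ht.2⟩
  have ha : 0 < a := by
    have := hmono ⟨le_rfl, hαβ.le⟩ ⟨hαβ.le, le_rfl⟩ hαβ
    rw [hXα, hXβ] at this; linarith
  have hI : ∀ t, HasDerivAt (fun s => ∫ u in α..s, y₂ u * X u) (y₂ t * X t) t :=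
    fun t => intervalIntegral.integral_hasDerivAt_right (cI.intervalIntegrable _ _)
      (cI.stronglyMeasurableAtFilter _ _) cI.continuousAt
  have cInt : Continuous (fun s => ∫ u in α..s, y₂ u * X u) :=
    continuous_iff_continuousAt.2 fun t => (hI t).continuousAt
  have lim : ∀ γ, y₁ γ = 0 → X γ ^ 2 = a ^ 2 →
      Filter.Tendsto (fun t => 2 * c / 3 * Real.arcsin (X t / a) + 1 / (3 * c ^ 2) *
          ((a ^ 2 - X t ^ 2) / y₁ t * y₂ t + 2 * ∫ u in α..t, y₂ u * X u) - t)
        (nhdsWithin γ {γ}ᶜ) (nhds (2 * c / 3 * Real.arcsin (X γ / a) + 1 / (3 * c ^ 2) *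
          (0 * y₂ γ + 2 * ∫ u in α..γ, y₂ u * X u) - γ)) := by
    intro γ hγ hXγ
    have hg : g₁ γ ≠ 0 := by
      intro h; have := det γ; simp [h, hγ] at this
    refine Filter.Tendsto.sub (Filter.Tendsto.add ?_ (Filter.Tendsto.const_mul _
      (Filter.Tendsto.add (Filter.Tendsto.mul ?_ ?_) ?_))) ?_
    · have : Continuous fun t => 2 * c / 3 * Real.arcsin (X t / a) :=
        continuous_const.mul (Real.continuous_arcsin.comp (cX.div_const a))
      exact (this.tendsto γ).mono_left nhdsWithin_le_nhds
    · refine tendsto_div_zero_of_hasDerivAt (f := fun t => a ^ 2 - X t ^ 2) ?_ (by simp [hXγ])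
        (hy₁ γ) hγ hg
      have := ((hX γ).fun_pow 2).const_sub (a ^ 2)
      simpa [hγ] using this
    · exact (cy₂.tendsto γ).mono_left nhdsWithin_le_nhds
    · exact ((cInt.tendsto γ).const_mul 2).mono_left nhdsWithin_le_nhds
    · exact (continuous_id.tendsto γ).mono_left nhdsWithin_le_nhds
  have h := le_of_deriv_nonneg_of_tendsto
    (F := fun t => 2 * c / 3 * Real.arcsin (X t / a) + 1 / (3 * c ^ 2) *
          ((a ^ 2 - X t ^ 2) / y₁ t * y₂ t + 2 * ∫ u in α..t, y₂ u * X u) - t)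
    (F' := fun t => 2 * c / 3 * (y₁ t / √(a ^ 2 - X t ^ 2)) +
      1 / (3 * c ^ 2) * ((a ^ 2 - X t ^ 2) / y₁ t ^ 2) - 1) hαβ ?_ ?_
    ((lim α hα (by rw [hXα]; ring)).mono_left (nhdsWithin_mono _ fun x hx => ne_of_gt hx))
    ((lim β hβ (by rw [hXβ])).mono_left (nhdsWithin_mono _ fun x hx => ne_of_lt hx))
  · rw [hXα, hXβ, neg_div, div_self ha.ne', Real.arcsin_neg, Real.arcsin_one] at h
    simp only [intervalIntegral.integral_same] at h
    linarith
  · intro t ht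
    have hne := (hpos t ht).ne'
    have hlt' := hlt t ht
    have hsq : 0 < a ^ 2 - X t ^ 2 := by nlinarith
    have h1 : X t / a ≠ -1 := by
      intro h; rw [div_eq_iff ha.ne'] at h; linarith
    have h2 : X t / a ≠ 1 := by
      intro h; rw [div_eq_iff ha.ne'] at h; linarith
    have h := ((((Real.hasDerivAt_arcsin h1 h2).comp t ((hX t).div_const a)).const_mul
      (2 * c / 3)).add ((((((hX t).pow 2).const_sub (a ^ 2)).div (hy₁ t) hne).mul (hy₂ t)).add
        ((hI t).const_mul 2) |>.const_mul (1 / (3 * c ^ 2)))).sub (hasDerivAt_id t)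
    refine h.congr_deriv ?_
    have hs : √(1 - (X t / a) ^ 2) = √(a ^ 2 - X t ^ 2) / a := by
      rw [show 1 - (X t / a) ^ 2 = (a ^ 2 - X t ^ 2) / a ^ 2 by field_simp,
        Real.sqrt_div hsq.le, Real.sqrt_sq ha.le]
    rw [hs]
    have hd := det t
    have hs' := Real.sqrt_pos.2 hsq
    set w := √(a ^ 2 - X t ^ 2) with hw
    have e1 : 1 / (w / a) * (y₁ t / a) = y₁ t / w := by field_simp
    rw [e1]
    congr 2
    simp only [Pi.pow_apply, Pi.div_apply, Nat.cast_ofNat, pow_one, Nat.add_one_sub_one]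
    congr 1
    field_simp
    linear_combination (a ^ 2 - X t ^ 2) * hd
  · intro t ht
    have hlt' := hlt t ht
    have hsq : 0 < a ^ 2 - X t ^ 2 := by nlinarith
    have hs' := Real.sqrt_pos.2 hsq
    have hy := hpos t ht
    -- AM-GM in the form `3 ≤ 2 x + 1 / x ^ 2` for `x = c * y₁ / √(a ^ 2 - X ^ 2)`
    set w := √(a ^ 2 - X t ^ 2) with hw
    have hw2 : a ^ 2 - X t ^ 2 = w ^ 2 := (Real.sq_sqrt hsq.le).symm
    rw [hw2]
    have hx : 0 < c * y₁ t / w := by positivity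
    set x := c * y₁ t / w with hxdef
    have e : 2 * c / 3 * (y₁ t / w) + 1 / (3 * c ^ 2) * (w ^ 2 / y₁ t ^ 2) - 1
        = (2 * x + 1) * (x - 1) ^ 2 / (3 * x ^ 2) := by
      rw [hxdef]; field_simp; ring
    rw [e]
    positivity

/-! ### The Blaschke–Santaló inequality and its equality case -/

namespace Hill

variable {y₁ y₂ g₁ g₂ k Θ : ℝ → ℝ} {P : ℝ}

lemma y₁_pos (H : Hill y₁ y₂ g₁ g₂ k Θ P) {t : ℝ} (h : -(π / 2) < Θ t) (h' : Θ t < π / 2) :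
    0 < y₁ t := by
  rw [H.hcos t]
  exact mul_pos (Real.sqrt_pos.2 (H.Ypos t)) (Real.cos_pos_of_mem_Ioo ⟨h, h'⟩)

lemma y₁_neg (H : Hill y₁ y₂ g₁ g₂ k Θ P) {t : ℝ} (h : π / 2 < Θ t) (h' : Θ t < π + π / 2) :
    y₁ t < 0 := by
  rw [H.hcos t]
  exact mul_neg_of_pos_of_neg (Real.sqrt_pos.2 (H.Ypos t))
    (Real.cos_neg_of_pi_div_two_lt_of_lt h h')

set_option maxHeartbeats 1000000 in
/-- The Blaschke–Santaló inequality: the area of the polar body is `P / 2`, that of the body is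
`∫ k / 2`, and the centroid of the polar body is the origin. It combines Minkowski's inequality
for the body and for the curve with velocity `y` with the affine isoperimetric inequality for
the latter. -/
lemma integral_k_le (H : Hill y₁ y₂ g₁ g₂ k Θ P) (h₁ : ∫ t in (0)..P, y₁ t = 0)
    (h₂ : ∫ t in (0)..P, y₂ t = 0) : ∫ t in (0)..P, k t ≤ 4 * π ^ 2 / P := by
  obtain ⟨t₀, ht₀⟩ := H.Θsurj (-(π / 2))
  obtain ⟨t₁, ht₁⟩ := H.Θsurj (π / 2)
  obtain ⟨t₂, ht₂⟩ : ∃ t₂, t₂ = t₀ + P := ⟨_, rfl⟩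
  have hpi := Real.pi_pos
  have hP := H.Ppos
  have hΘ₂ : Θ t₂ = π + π / 2 := by rw [ht₂, H.perΘ, ht₀]; ring
  have h01 : t₀ < t₁ := H.Θmono.lt_iff_lt.1 (by rw [ht₀, ht₁]; linarith)
  have h12 : t₁ < t₂ := H.Θmono.lt_iff_lt.1 (by rw [hΘ₂, ht₁]; linarith)
  have hpos : ∀ t ∈ Set.Ioo t₀ t₁, 0 < y₁ t := fun t ht =>
    H.y₁_pos (ht₀ ▸ H.Θmono ht.1) (ht₁ ▸ H.Θmono ht.2)
  have hneg : ∀ t ∈ Set.Ioo t₁ t₂, 0 < -y₁ t := fun t ht =>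
    neg_pos.2 (H.y₁_neg (ht₁ ▸ H.Θmono ht.1) (hΘ₂ ▸ H.Θmono ht.2))
  have z₀ : y₁ t₀ = 0 := by rw [H.hcos, ht₀]; simp
  have z₁ : y₁ t₁ = 0 := by rw [H.hcos, ht₁]; simp
  have z₂ : y₁ t₂ = 0 := by rw [ht₂, H.pery₁, z₀]
  have shift : ∀ f : ℝ → ℝ, (∀ t, f (t + P) = f t) →
      ∫ t in t₀..t₂, f t = ∫ t in (0)..P, f t := by
    intro f hf
    have := Function.Periodic.intervalIntegral_add_eq (f := f) (T := P) hf t₀ 0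
    rw [ht₂, this, zero_add]
  -- the curve with velocity `y`, with abscissa centred at the middle of its range
  set a := (∫ t in t₀..t₁, y₁ t) / 2 with ha
  set X : ℝ → ℝ := fun t => (∫ u in t₀..t, y₁ u) - a with hXdef
  have ii : ∀ {f : ℝ → ℝ} (_ : Continuous f) (u v : ℝ), IntervalIntegrable f volume u v :=
    fun hf u v => hf.intervalIntegrable u v
  have hX : ∀ t, HasDerivAt X (y₁ t) t := fun t =>
    (intervalIntegral.integral_hasDerivAt_right (ii H.cy₁ _ _)
      (H.cy₁.stronglyMeasurableAtFilter _ _) H.cy₁.continuousAt).sub_const a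
  have cX : Continuous X := continuous_iff_continuousAt.2 fun t => (hX t).continuousAt
  have X₀ : X t₀ = -a := by simp [hXdef]
  have X₁ : X t₁ = a := by simp only [hXdef, ha]; ring
  have X₂ : X t₂ = -a := by simp only [hXdef]; rw [shift y₁ H.pery₁, h₁]; ring
  have apos : 0 < a := by
    have : 0 < ∫ t in t₀..t₁, y₁ t :=
      intervalIntegral.intervalIntegral_pos_of_pos_on (ii H.cy₁ _ _) hpos h01
    rw [ha]; linarith
  have det' : ∀ t, (-y₁ t) * (-g₂ t) - (-y₂ t) * (-g₁ t) = 1 := fun t => by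
    linarith [H.det t]
  -- the affine isoperimetric inequality
  -- `c = P / (2 π)` is the constant for which an ellipse gives equality
  have hc : 0 < P / (2 * π) := by positivity
  have A1 := affine_arc h01 H.hy₁ H.hy₂ H.det hpos z₀ z₁ hX X₀ X₁ hc
  have A2 := affine_arc (y₁ := fun t => -y₁ t) (y₂ := fun t => -y₂ t) (g₁ := fun t => -g₁ t)
    (g₂ := fun t => -g₂ t) (X := fun t => -X t) (a := a) h12 (fun t => (H.hy₁ t).neg)
    (fun t => (H.hy₂ t).neg) det' hneg (by simp [z₁]) (by simp [z₂])
    (fun t => (hX t).neg) (by simp [X₁]) (by simp [X₂]) hc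
  simp only [neg_mul_neg] at A2
  have cyX : Continuous fun t => y₂ t * X t := H.cy₂.mul cX
  have hG : P ^ 3 / (8 * π ^ 2) ≤ ∫ t in t₀..t₂, y₂ t * X t := by
    rw [← intervalIntegral.integral_add_adjacent_intervals (ii cyX t₀ t₁) (ii cyX t₁ t₂)]
    set u := ∫ t in t₀..t₁, y₂ t * X t
    set v := ∫ t in t₁..t₂, y₂ t * X t
    have e : 2 * (2 * (P / (2 * π)) / 3 * π) = 2 * P / 3 := by field_simp
    have e2 : 1 / (3 * (P / (2 * π)) ^ 2) = 4 * π ^ 2 / (3 * P ^ 2) := by field_simp; ring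
    rw [e2] at A1 A2
    have h3 : P / 3 ≤ 4 * π ^ 2 / (3 * P ^ 2) * (2 * (u + v)) := by
      rw [ht₂] at A2; linarith
    rw [div_le_iff₀ (by positivity)]
    have h4 := mul_le_mul_of_nonneg_left h3 (show 0 ≤ 3 * P ^ 2 by positivity)
    field_simp at h4
    nlinarith
  -- Minkowski's inequality
  -- with the scaling factor `l` the body and the curve with velocity `l y` have the same horizontal
  -- extent, so that the difference `p` of their abscissas vanishes at `t₀`, `t₁` and `t₂`
  set b := (g₁ t₀ - g₁ t₁) / 2 with hb
  set c := -(g₁ t₀ + g₁ t₁) / 2 with hcdef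
  set l := b / a with hl
  have hla : l * a = b := by rw [hl]; field_simp
  set p : ℝ → ℝ := fun t => -g₁ t - c - l * X t with hpdef
  have hp : ∀ t, HasDerivAt p ((k t - l) * y₁ t) t := fun t =>
    ((((H.hg₁ t).neg).sub_const c).sub ((hX t).const_mul l)).congr_deriv (by ring)
  have cp : Continuous p := continuous_iff_continuousAt.2 fun t => (hp t).continuousAt
  have p₀ : p t₀ = 0 := by
    simp only [hpdef, X₀]; rw [mul_neg, hla, hb, hcdef]; ring
  have p₁ : p t₁ = 0 := by
    simp only [hpdef, X₁]; rw [hla, hb, hcdef]; ring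
  have p₂ : p t₂ = 0 := by
    simp only [hpdef, X₂]; rw [mul_neg, hla, hb, hcdef, ht₂, H.perg₁]; ring
  have cχ : Continuous fun t => k t - l := H.hk.sub continuous_const
  have D1 := integral_le_zero_of_dirichlet h01 H.hy₁ H.hy₂ H.det hpos z₀ z₁ hp p₀ p₁ cχ
  have D2 := integral_le_zero_of_dirichlet (y₁ := fun t => -y₁ t) (y₂ := fun t => -y₂ t)
    (g₁ := fun t => -g₁ t) (g₂ := fun t => -g₂ t) (p := fun t => -p t)
    (χ := fun t => k t - l) h12 (fun t => (H.hy₁ t).neg)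
    (fun t => (H.hy₂ t).neg) det' hneg (by simp [z₁]) (by simp [z₂])
    (fun t => ((hp t).neg).congr_deriv (by ring)) (by simp [p₁]) (by simp [p₂]) cχ
  simp only [neg_mul_neg] at D2
  have cI : Continuous fun t => y₂ t * p t * (k t - l) := (H.cy₂.mul cp).mul cχ
  have D : ∫ t in t₀..t₂, y₂ t * p t * (k t - l) ≤ 0 := by
    rw [← intervalIntegral.integral_add_adjacent_intervals (ii cI t₀ t₁) (ii cI t₁ t₂)]
    linarith
  set F : ℝ → ℝ := fun t => g₁ t * g₂ t / 2 + c * g₂ t + l * (g₂ t * X t) with hF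
  have hF' : ∀ t, HasDerivAt F (y₂ t * p t * (k t - l) -
      (k t / 2 - l + l ^ 2 * (y₂ t * X t) + c * l * y₂ t)) t := by
    intro t
    refine (((((H.hg₁ t).mul (H.hg₂ t)).div_const 2).add ((H.hg₂ t).const_mul c)).add
      (((H.hg₂ t).mul (hX t)).const_mul l)).congr_deriv ?_
    simp only [hpdef]
    linear_combination (-(k t / 2 - l)) * H.det t
  have cJ : Continuous fun t => k t / 2 - l + l ^ 2 * (y₂ t * X t) + c * l * y₂ t :=
    (((H.hk.div_const 2).sub continuous_const).add (cyX.const_mul _)).add (H.cy₂.const_mul _)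
  have hFint := intervalIntegral.integral_eq_sub_of_hasDerivAt (a := t₀) (b := t₂)
    (fun t _ => hF' t) (ii (cI.sub cJ) _ _)
  have hF0 : F t₂ = F t₀ := by
    simp only [hF, X₀, X₂]; rw [ht₂, H.perg₁, H.perg₂]
  rw [hF0, sub_self, intervalIntegral.integral_sub (ii cI _ _) (ii cJ _ _)] at hFint
  have hJ : ∫ t in t₀..t₂, (k t / 2 - l + l ^ 2 * (y₂ t * X t) + c * l * y₂ t) =
      (∫ t in (0)..P, k t) / 2 - l * P + l ^ 2 * ∫ t in t₀..t₂, y₂ t * X t := by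
    have c1 : Continuous fun t => k t / 2 - l := (H.hk.div_const 2).sub continuous_const
    have c2 : Continuous fun t => l ^ 2 * (y₂ t * X t) := cyX.const_mul _
    have c3 : Continuous fun t => k t / 2 - l + l ^ 2 * (y₂ t * X t) := c1.add c2
    have c4 : Continuous fun t => c * l * y₂ t := H.cy₂.const_mul _
    have c5 : Continuous fun t => k t / 2 := H.hk.div_const 2
    have c6 : Continuous fun _ : ℝ => l := continuous_const
    rw [intervalIntegral.integral_add (ii c3 _ _) (ii c4 _ _),
      intervalIntegral.integral_add (ii c1 _ _) (ii c2 _ _),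
      intervalIntegral.integral_sub (ii c5 _ _) (ii c6 _ _),
      intervalIntegral.integral_const_mul, intervalIntegral.integral_const_mul,
      intervalIntegral.integral_div, intervalIntegral.integral_const,
      shift y₂ H.pery₂, h₂, shift k H.perk, ht₂]
    simp only [add_sub_cancel_left, smul_eq_mul, mul_zero, add_zero]
    ring
  rw [hJ] at hFint
  rw [le_div_iff₀ hP]
  have hl2 : l ^ 2 * (P ^ 3 / (8 * π ^ 2)) ≤ l ^ 2 * ∫ t in t₀..t₂, y₂ t * X t :=
    mul_le_mul_of_nonneg_left hG (sq_nonneg l)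
  have h5 : (∫ t in (0)..P, k t) ≤ 2 * l * P - l ^ 2 * (P ^ 3 / (4 * π ^ 2)) := by
    have : l ^ 2 * (P ^ 3 / (4 * π ^ 2)) = 2 * (l ^ 2 * (P ^ 3 / (8 * π ^ 2))) := by
      field_simp; ring
    linarith
  have h6 := mul_le_mul_of_nonneg_right h5 hP.le
  have h7 : (2 * l * P - l ^ 2 * (P ^ 3 / (4 * π ^ 2))) * P =
      4 * π ^ 2 - (l * P ^ 2 / (2 * π) - 2 * π) ^ 2 := by
    field_simp; ring
  nlinarith [sq_nonneg (l * P ^ 2 / (2 * π) - 2 * π)]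

/-- The integrand is the derivative of the polar angle of `y`. -/
lemma integral_inv_Y (H : Hill y₁ y₂ g₁ g₂ k Θ P) :
    ∫ t in (0)..P, 1 / (y₁ t ^ 2 + y₂ t ^ 2) = 2 * π := by
  have hc : Continuous fun t => 1 / (y₁ t ^ 2 + y₂ t ^ 2) :=
    continuous_const.div ((H.cy₁.pow 2).add (H.cy₂.pow 2)) fun t => (H.Ypos t).ne'
  rw [intervalIntegral.integral_eq_sub_of_hasDerivAt (fun t _ => H.hΘ t)
    (hc.intervalIntegrable _ _)]
  have := H.perΘ 0
  rw [zero_add] at this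
  linarith

/-- If the centroaffine length `∫ √k` is at least `2 π`, the equality case of the
Blaschke–Santaló inequality is attained, and `k` is constant. -/
lemma k_eq_of_le (H : Hill y₁ y₂ g₁ g₂ k Θ P) (h₁ : ∫ t in (0)..P, y₁ t = 0)
    (h₂ : ∫ t in (0)..P, y₂ t = 0) (h : 2 * π ≤ ∫ t in (0)..P, √(k t)) (t : ℝ) :
    k t = (2 * π / P) ^ 2 := by
  have hP := H.Ppos
  have hpi := Real.pi_pos
  have hle := H.integral_k_le h₁ h₂
  have cs : Continuous fun t => √(k t) := H.hk.sqrt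
  have cd : Continuous fun t => (√(k t) - 2 * π / P) ^ 2 := (cs.sub continuous_const).pow 2
  have hint : ∫ t in (0)..P, (√(k t) - 2 * π / P) ^ 2 ≤ 0 := by
    have e : ∀ t, (√(k t) - 2 * π / P) ^ 2 = k t - 2 * (2 * π / P) * √(k t) + (2 * π / P) ^ 2 := by
      intro t
      rw [sub_sq, Real.sq_sqrt (H.kpos t).le]; ring
    simp only [e]
    rw [intervalIntegral.integral_add, intervalIntegral.integral_sub,
      intervalIntegral.integral_const_mul, intervalIntegral.integral_const]
    · simp only [sub_zero, smul_eq_mul]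
      have h3 := mul_le_mul_of_nonneg_left h (show 0 ≤ 2 * (2 * π / P) by positivity)
      have e1 : 2 * (2 * π / P) * (2 * π) = 8 * π ^ 2 / P := by ring
      have e2 : P * (2 * π / P) ^ 2 = 4 * π ^ 2 / P := by field_simp; ring
      have e3 : 8 * π ^ 2 / P = 2 * (4 * π ^ 2 / P) := by ring
      linarith
    all_goals first
      | exact H.hk.intervalIntegrable _ _
      | exact (cs.const_mul _).intervalIntegrable _ _
      | exact (H.hk.sub (cs.const_mul _)).intervalIntegrable _ _
      | exact continuous_const.intervalIntegrable _ _
  have hzero : ∀ s ∈ Set.Ico 0 P, k s = (2 * π / P) ^ 2 := by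
    intro s hs
    by_contra hne
    have hpos : 0 < (√(k s) - 2 * π / P) ^ 2 := by
      have : √(k s) - 2 * π / P ≠ 0 := by
        intro h0
        apply hne
        rw [← sub_eq_zero.1 h0, Real.sq_sqrt (H.kpos s).le]
      positivity
    have := intervalIntegral.integral_pos (a := 0) (b := P) hP cd.continuousOn
      (fun _ _ => sq_nonneg _) ⟨s, ⟨hs.1, hs.2.le⟩, hpos⟩
    linarith
  obtain ⟨s, hs, hts⟩ := Function.Periodic.exists_mem_Ico₀ (f := k) H.perk hP t
  rw [hts, hzero s hs]

end Hill

/-! ### Parametrization of the boundary of the polar body -/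

/-- Reparametrization of the boundary of `K°`, given through the support function `w = 1 / r` of
the polar body, by twice the swept area. -/
lemma exists_hill_of_support {w w1 w2 : ℝ → ℝ} (h0 : ∀ x, HasDerivAt w (w1 x) x)
    (h1 : ∀ x, HasDerivAt w1 (w2 x) x) (c2 : Continuous w2) (wpos : ∀ x, 0 < w x)
    (wpos' : ∀ x, 0 < w x + w2 x) (p0 : ∀ x, w (x + 2 * π) = w x)
    (p1 : ∀ x, w1 (x + 2 * π) = w1 x) (p2 : ∀ x, w2 (x + 2 * π) = w2 x) :
    ∃ (y₁ y₂ g₁ g₂ k Θ f : ℝ → ℝ) (P : ℝ), Hill y₁ y₂ g₁ g₂ k Θ P ∧ Function.Surjective f ∧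
      (∀ t, g₂ t = (1 / w (f t)) * Real.cos (f t)) ∧
      (∀ t, -g₁ t = (1 / w (f t)) * Real.sin (f t)) := by
  have hpi := Real.pi_pos
  have c0 : Continuous w := continuous_iff_continuousAt.2 fun t => (h0 t).continuousAt
  set m : ℝ → ℝ := fun x => w x * (w x + w2 x) with hm
  have cm : Continuous m := c0.mul (c0.add c2)
  have mpos : ∀ x, 0 < m x := fun x => mul_pos (wpos x) (wpos' x)
  have mper : Function.Periodic m (2 * π) := fun x => by simp only [hm, p0, p2]
  set τ : ℝ → ℝ := fun x => ∫ u in (0)..x, m u with hτ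
  have ii : ∀ a b : ℝ, IntervalIntegrable m volume a b := fun a b => cm.intervalIntegrable a b
  have dτ : ∀ x, HasDerivAt τ (m x) x := fun x =>
    intervalIntegral.integral_hasDerivAt_right (ii _ _)
      (cm.stronglyMeasurableAtFilter _ _) cm.continuousAt
  have cτ : Continuous τ := continuous_iff_continuousAt.2 fun t => (dτ t).continuousAt
  have mono : StrictMono τ := strictMono_of_hasDerivAt_pos dτ mpos
  set P := τ (2 * π) with hP
  have τ0 : τ 0 = 0 := by simp [hτ]
  have Ppos : 0 < P := by rw [← τ0]; exact mono (by positivity)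
  have τper : ∀ x, τ (x + 2 * π) = τ x + P := by
    intro x
    have e1 := intervalIntegral.integral_add_adjacent_intervals (ii 0 x) (ii x (x + 2 * π))
    have e2 := mper.intervalIntegral_add_eq x 0
    rw [zero_add] at e2
    rw [e2] at e1
    exact e1.symm
  have τint : ∀ n : ℕ, τ (n * (2 * π)) = n * P ∧ τ (-(n * (2 * π))) = -(n * P) := by
    intro n
    induction n with
    | zero => simp [τ0]
    | succ n ih =>
      push_cast
      constructor
      · rw [show ((n : ℝ) + 1) * (2 * π) = n * (2 * π) + 2 * π by ring, τper, ih.1]; ring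
      · have := τper (-(((n : ℝ) + 1) * (2 * π)))
        rw [show -(((n : ℝ) + 1) * (2 * π)) + 2 * π = -(n * (2 * π)) by ring, ih.2] at this
        linarith
  have τsurj : Function.Surjective τ := by
    intro x
    obtain ⟨n, hn⟩ := exists_nat_gt (|x| / P)
    rw [div_lt_iff₀ Ppos] at hn
    have h3 := abs_lt.1 hn
    obtain ⟨t, -, ht⟩ := intermediate_value_Icc (a := -((n : ℝ) * (2 * π))) (b := n * (2 * π))
      (by nlinarith [(Nat.cast_nonneg n : (0:ℝ) ≤ n)]) cτ.continuousOn
      (show x ∈ Set.Icc _ _ by rw [(τint n).1, (τint n).2]; exact ⟨h3.1.le, h3.2.le⟩)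
    exact ⟨t, ht⟩
  let e := mono.orderIsoOfSurjective τ τsurj
  have eτ : ∀ x, e x = τ x := fun x => rfl
  set f : ℝ → ℝ := fun t => e.symm t with hf
  have τf : ∀ t, τ (f t) = t := fun t => by rw [← eτ]; exact e.apply_symm_apply t
  have fτ : ∀ x, f (τ x) = x := fun x => by rw [← eτ]; exact e.symm_apply_apply x
  have cf : Continuous f := e.symm.continuous
  have df : ∀ t, HasDerivAt f (m (f t))⁻¹ t := fun t =>
    HasDerivAt.of_local_left_inverse cf.continuousAt (dτ (f t)) (mpos _).ne'
      (Filter.Eventually.of_forall τf)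
  have fper : ∀ t, f (t + P) = f t + 2 * π := fun t => by
    apply mono.injective
    rw [τf, τper, τf]
  have wne : ∀ x, w x ≠ 0 := fun x => (wpos x).ne'
  have wne' : ∀ x, w x + w2 x ≠ 0 := fun x => (wpos' x).ne'
  have norm : ∀ x, (w x * cos x - w1 x * sin x) ^ 2 + (w x * sin x + w1 x * cos x) ^ 2 =
      w x ^ 2 + w1 x ^ 2 := fun x => by
    linear_combination (w x ^ 2 + w1 x ^ 2) * Real.sin_sq_add_cos_sq x
  have sq : ∀ x, √(w x ^ 2 + w1 x ^ 2) = w x * √(1 + (w1 x / w x) ^ 2) := fun x => by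
    rw [← Real.sqrt_sq (wpos x).le, ← Real.sqrt_mul (sq_nonneg _), Real.sqrt_sq (wpos x).le]
    congr 1
    have := wne x
    field_simp
  refine ⟨fun t => w (f t) * cos (f t) - w1 (f t) * sin (f t),
    fun t => w (f t) * sin (f t) + w1 (f t) * cos (f t),
    fun t => -(1 / w (f t) * sin (f t)), fun t => 1 / w (f t) * cos (f t),
    fun t => 1 / (m (f t) * w (f t) ^ 2), fun t => f t + Real.arctan (w1 (f t) / w (f t)), f, P,
    ⟨Ppos, ?_, ?_, ?_, ?_, ?_, ?_, ?_, ?_, ?_, ?_, ?_, ?_, ?_, ?_, ?_, ?_⟩,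
    e.symm.surjective, fun _ => rfl, fun _ => neg_neg _⟩
  · intro t
    have := ((((h0 (f t)).mul (Real.hasDerivAt_cos (f t))).sub
      ((h1 (f t)).mul (Real.hasDerivAt_sin (f t)))).comp t (df t))
    refine this.congr_deriv ?_
    have := wne (f t); have := wne' (f t)
    simp only [hm]; field_simp; ring
  · intro t
    have := ((((h0 (f t)).mul (Real.hasDerivAt_sin (f t))).add
      ((h1 (f t)).mul (Real.hasDerivAt_cos (f t)))).comp t (df t))
    refine this.congr_deriv ?_
    have := wne (f t); have := wne' (f t)
    simp only [hm]; field_simp; ring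
  · intro t
    have := (((((hasDerivAt_const (f t) (1:ℝ)).div (h0 (f t)) (wne _)).mul
      (Real.hasDerivAt_sin (f t))).neg).comp t (df t))
    refine this.congr_deriv ?_
    have := wne (f t); have := wne' (f t)
    simp only [hm, Pi.div_apply]; field_simp; ring
  · intro t
    have := ((((hasDerivAt_const (f t) (1:ℝ)).div (h0 (f t)) (wne _)).mul
      (Real.hasDerivAt_cos (f t))).comp t (df t))
    refine this.congr_deriv ?_
    have := wne (f t); have := wne' (f t)
    simp only [hm, Pi.div_apply]; field_simp; ring
  · exact (continuous_const.div (cm.mul (c0.pow 2)) fun x =>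
      (mul_pos (mpos x) (pow_pos (wpos x) 2)).ne').comp cf
  · exact fun t => one_div_pos.2 (mul_pos (mpos _) (pow_pos (wpos _) 2))
  · intro t
    have := wne (f t)
    field_simp
    linear_combination (w (f t)) * Real.sin_sq_add_cos_sq (f t)
  · intro t
    have a := (((h1 (f t)).div (h0 (f t)) (wne _)).arctan).comp t (df t)
    refine ((df t).add a).congr_deriv ?_
    rw [norm]
    have := wpos (f t); have := wne' (f t); have := wne (f t)
    have : w (f t) ^ 2 + w1 (f t) ^ 2 ≠ 0 := by positivity
    simp only [hm, Pi.div_apply]; field_simp; ring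
  · intro t
    rw [norm, Real.cos_add, Real.cos_arctan, Real.sin_arctan, sq]
    have := wne (f t)
    have : √(1 + (w1 (f t) / w (f t)) ^ 2) ≠ 0 := (Real.sqrt_pos.2 (by positivity)).ne'
    field_simp
  · intro t
    rw [norm, Real.sin_add, Real.cos_arctan, Real.sin_arctan, sq]
    have := wne (f t)
    have : √(1 + (w1 (f t) / w (f t)) ^ 2) ≠ 0 := (Real.sqrt_pos.2 (by positivity)).ne'
    field_simp
    try ring
  all_goals
    intro t
    simp only [fper, p0, p1, hm, p2, Real.cos_add_two_pi, Real.sin_add_two_pi]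
    try ring

/-- With `w = 1 / r` the support function of the polar body, the curvature condition is
that `w` plus its second derivative, the radius of curvature of the boundary of the polar
body, is positive. -/
lemma exists_hill {K : Set (ℝ × ℝ)} {r : ℝ → ℝ} (h : HasC2PosCurvBoundary K 0 r) :
    ∃ (y₁ y₂ g₁ g₂ k Θ : ℝ → ℝ) (P : ℝ), Hill y₁ y₂ g₁ g₂ k Θ P ∧
      frontier K = {p | ∃ t, p = (g₂ t, -g₁ t)} := by
  obtain ⟨-, hr, hper, hpos, hcurv, hfr⟩ := h
  have hr1 : ContDiff ℝ 1 (deriv r) := ((contDiff_succ_iff_deriv (n := 1)).1 hr).2.2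
  have d0 : ∀ x, HasDerivAt r (deriv r x) x := fun x =>
    ((hr.differentiable (by norm_num)) x).hasDerivAt
  have d1 : ∀ x, HasDerivAt (deriv r) (deriv (deriv r) x) x := fun x =>
    ((hr1.differentiable (by norm_num)) x).hasDerivAt
  have c2 : Continuous (deriv (deriv r)) := hr1.continuous_deriv le_rfl
  have c1 : Continuous (deriv r) := hr1.continuous
  have c0 : Continuous r := hr.continuous
  have ne : ∀ x, r x ≠ 0 := fun x => (hpos x).ne'
  have per1 : ∀ x, deriv r (x + 2 * π) = deriv r x := fun x => by
    rw [← deriv_comp_add_const]; simp only [hper]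
  have per2 : ∀ x, deriv (deriv r) (x + 2 * π) = deriv (deriv r) x := fun x => by
    rw [← deriv_comp_add_const]; simp only [per1]
  obtain ⟨y₁, y₂, g₁, g₂, k, Θ, f, P, H, hf, e1, e2⟩ := exists_hill_of_support
    (w := fun x => 1 / r x) (w1 := fun x => -deriv r x / r x ^ 2)
    (w2 := fun x => (2 * deriv r x ^ 2 - r x * deriv (deriv r) x) / r x ^ 3)
    (fun x => ((hasDerivAt_const x (1:ℝ)).div (d0 x) (ne x)).congr_deriv (by simp))
    (fun x => ((d1 x).neg.div ((d0 x).pow 2) (pow_ne_zero _ (ne x))).congr_deriv (by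
      have := ne x
      simp only [Pi.neg_apply, Pi.pow_apply]
      field_simp
      ring))
    (((continuous_const.mul (c1.pow 2)).sub (c0.mul c2)).div (c0.pow 3)
      fun x => pow_ne_zero _ (ne x))
    (fun x => one_div_pos.2 (hpos x))
    (fun x => by
      have := ne x
      have e : 1 / r x + (2 * deriv r x ^ 2 - r x * deriv (deriv r) x) / r x ^ 3 =
        (r x ^ 2 + 2 * deriv r x ^ 2 - r x * deriv (deriv r) x) / r x ^ 3 := by
        field_simp; ring
      rw [e]
      exact div_pos (hcurv x) (pow_pos (hpos x) 3))
    (fun x => by simp only [hper]) (fun x => by simp only [hper, per1])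
    (fun x => by simp only [hper, per1, per2])
  refine ⟨y₁, y₂, g₁, g₂, k, Θ, P, H, ?_⟩
  rw [hfr]
  ext p
  have key : ∀ t, (g₂ t, -g₁ t) = (0 : ℝ × ℝ) + r (f t) • uVec (f t) := fun t => by
    rw [e1, e2]
    simp [uVec]
  constructor
  · rintro ⟨φ, rfl⟩
    obtain ⟨t, rfl⟩ := hf φ
    exact ⟨t, (key t).symm⟩
  · rintro ⟨t, rfl⟩
    exact ⟨f t, key t⟩

/-! ### Tangent lines and the outer billiard map -/

/-- The point at signed distance `s` (in units of `|y t|`) from the boundary point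
`(g₂ t, -g₁ t)` of `K`, on the tangent line at that point. -/
def tanPt (y₁ y₂ g₁ g₂ : ℝ → ℝ) (t s : ℝ) : ℝ × ℝ := (g₂ t - s * y₂ t, -g₁ t + s * y₁ t)

namespace Hill

variable {y₁ y₂ g₁ g₂ k Θ : ℝ → ℝ} {P : ℝ}

lemma per_int {f : ℝ → ℝ} (hf : ∀ t, f (t + P) = f t) (t : ℝ) (n : ℤ) : f (t + n * P) = f t :=
  (show Function.Periodic f P from hf).int_mul n t

lemma det_eq (H : Hill y₁ y₂ g₁ g₂ k Θ P) (t t' : ℝ) :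
    y₁ t * y₂ t' - y₂ t * y₁ t' =
      √(y₁ t ^ 2 + y₂ t ^ 2) * √(y₁ t' ^ 2 + y₂ t' ^ 2) * Real.sin (Θ t' - Θ t) := by
  rw [Real.sin_sub]
  linear_combination (y₂ t') * H.hcos t + √(y₁ t ^ 2 + y₂ t ^ 2) * Real.cos (Θ t) * H.hsin t' -
    (y₁ t') * H.hsin t - √(y₁ t ^ 2 + y₂ t ^ 2) * Real.sin (Θ t) * H.hcos t'

lemma det_pos (H : Hill y₁ y₂ g₁ g₂ k Θ P) {t t' : ℝ} (h : Θ t < Θ t') (h' : Θ t' < Θ t + π) :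
    0 < y₁ t * y₂ t' - y₂ t * y₁ t' := by
  rw [H.det_eq]
  exact mul_pos (mul_pos (Real.sqrt_pos.2 (H.Ypos t)) (Real.sqrt_pos.2 (H.Ypos t')))
    (Real.sin_pos_of_mem_Ioo ⟨by linarith, by linarith⟩)

lemma exists_shift (H : Hill y₁ y₂ g₁ g₂ k Θ P) (c t : ℝ) :
    ∃ n : ℤ, c ≤ Θ (t + n * P) ∧ Θ (t + n * P) < c + 2 * π := by
  obtain ⟨n, hn, -⟩ := existsUnique_add_zsmul_mem_Ico Real.two_pi_pos (Θ t) c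
  refine ⟨n, ?_⟩
  rw [H.perΘ_int]
  simpa using hn

lemma exists_shift' (H : Hill y₁ y₂ g₁ g₂ k Θ P) (c t : ℝ) :
    ∃ n : ℤ, c < Θ (t + n * P) ∧ Θ (t + n * P) ≤ c + 2 * π := by
  obtain ⟨n, hn, -⟩ := existsUnique_add_zsmul_mem_Ioc Real.two_pi_pos (Θ t) c
  refine ⟨n, ?_⟩
  rw [H.perΘ_int]
  simpa using hn

lemma hasDerivAt_W (H : Hill y₁ y₂ g₁ g₂ k Θ P) (t t' : ℝ) :
    HasDerivAt (fun x => y₁ t * g₂ x - y₂ t * g₁ x)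
      (-(k t' * (y₁ t * y₂ t' - y₂ t * y₁ t'))) t' :=
  (((H.hg₂ t').const_mul (y₁ t)).sub ((H.hg₁ t').const_mul (y₂ t))).congr_deriv (by ring)

/-- Away from its point of contact, the boundary of `K` lies strictly below the supporting line
`⟪y t, ·⟫ = 1`; this is monotonicity of `⟪y t, ·⟫` along the two boundary arcs. -/
lemma W_lt (H : Hill y₁ y₂ g₁ g₂ k Θ P) {t t' : ℝ} (h : Θ t - π ≤ Θ t') (h' : Θ t' ≤ Θ t + π)
    (hne : Θ t' ≠ Θ t) : y₁ t * g₂ t' - y₂ t * g₁ t' < 1 := by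
  have hc : Continuous fun x => y₁ t * g₂ x - y₂ t * g₁ x :=
    (continuous_const.mul H.cg₂).sub (continuous_const.mul H.cg₁)
  rcases lt_or_gt_of_ne hne with hlt | hlt
  · have htt : t' < t := H.Θmono.lt_iff_lt.1 hlt
    have mono : StrictMonoOn (fun x => y₁ t * g₂ x - y₂ t * g₁ x) (Set.Icc t' t) := by
      refine strictMonoOn_of_deriv_pos (convex_Icc _ _) hc.continuousOn fun x hx => ?_
      rw [interior_Icc] at hx
      rw [(H.hasDerivAt_W t x).deriv]
      have h1 := H.Θmono hx.1
      have h2 := H.det_pos (H.Θmono hx.2) (by linarith)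
      nlinarith [mul_pos (H.kpos x) h2]
    have := mono (Set.left_mem_Icc.2 htt.le) (Set.right_mem_Icc.2 htt.le) htt
    simpa only [H.det t] using this
  · have htt : t < t' := H.Θmono.lt_iff_lt.1 hlt
    have anti : StrictAntiOn (fun x => y₁ t * g₂ x - y₂ t * g₁ x) (Set.Icc t t') := by
      refine strictAntiOn_of_deriv_neg (convex_Icc _ _) hc.continuousOn fun x hx => ?_
      rw [interior_Icc] at hx
      rw [(H.hasDerivAt_W t x).deriv]
      have h1 := H.Θmono hx.2
      have h2 := H.det_pos (H.Θmono hx.1) (by linarith)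
      nlinarith [mul_pos (H.kpos x) h2]
    have := anti (Set.left_mem_Icc.2 htt.le) (Set.right_mem_Icc.2 htt.le) htt
    simpa only [H.det t] using this

lemma W_le (H : Hill y₁ y₂ g₁ g₂ k Θ P) (t t' : ℝ) : y₁ t * g₂ t' - y₂ t * g₁ t' ≤ 1 := by
  obtain ⟨n, hn, hn'⟩ := H.exists_shift (Θ t - π) t'
  have e1 := per_int H.perg₁ t' n
  have e2 := per_int H.perg₂ t' n
  rw [← e1, ← e2]
  by_cases h : Θ (t' + n * P) = Θ t
  · rw [H.Θmono.injective h, H.det]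
  · exact (H.W_lt hn (by linarith) h).le

lemma inner_tanPt (t t' s : ℝ) :
    y₁ t' * (tanPt y₁ y₂ g₁ g₂ t s).1 + y₂ t' * (tanPt y₁ y₂ g₁ g₂ t s).2 =
      (y₁ t' * g₂ t - y₂ t' * g₁ t) - s * (y₁ t' * y₂ t - y₂ t' * y₁ t) := by
  simp only [tanPt]; ring

lemma inner_tanPt_self (H : Hill y₁ y₂ g₁ g₂ k Θ P) (t s : ℝ) :
    y₁ t * (tanPt y₁ y₂ g₁ g₂ t s).1 + y₂ t * (tanPt y₁ y₂ g₁ g₂ t s).2 = 1 := by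
  rw [inner_tanPt, H.det]; ring

lemma inner_tanPt_g (H : Hill y₁ y₂ g₁ g₂ k Θ P) (t s : ℝ) :
    g₁ t * (tanPt y₁ y₂ g₁ g₂ t s).1 + g₂ t * (tanPt y₁ y₂ g₁ g₂ t s).2 = s := by
  simp only [tanPt]
  linear_combination s * H.det t

/-- A point on the forward half of the tangent line at `t` lies strictly inside the
supporting half-planes at parameters up to half a turn earlier. -/
lemma inner_lt_of_nonneg (H : Hill y₁ y₂ g₁ g₂ k Θ P) {t t' s : ℝ} (hs : 0 ≤ s)
    (h : Θ t - π ≤ Θ t') (h' : Θ t' < Θ t) :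
    y₁ t' * (tanPt y₁ y₂ g₁ g₂ t s).1 + y₂ t' * (tanPt y₁ y₂ g₁ g₂ t s).2 < 1 := by
  rw [inner_tanPt, H.det_eq t' t]
  have h1 := H.W_lt (t := t') (t' := t) (by linarith [Real.pi_pos]) (by linarith) h'.ne'
  have h2 : 0 ≤ Real.sin (Θ t - Θ t') :=
    Real.sin_nonneg_of_nonneg_of_le_pi (by linarith) (by linarith)
  have : 0 ≤ s * (√(y₁ t' ^ 2 + y₂ t' ^ 2) * √(y₁ t ^ 2 + y₂ t ^ 2) * Real.sin (Θ t - Θ t')) := by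
    positivity
  linarith

/-- A point on the backward half of the tangent line at `t` lies strictly inside the
supporting half-planes at parameters up to half a turn later. -/
lemma inner_lt_of_nonpos (H : Hill y₁ y₂ g₁ g₂ k Θ P) {t t' s : ℝ} (hs : s ≤ 0)
    (h : Θ t < Θ t') (h' : Θ t' ≤ Θ t + π) :
    y₁ t' * (tanPt y₁ y₂ g₁ g₂ t s).1 + y₂ t' * (tanPt y₁ y₂ g₁ g₂ t s).2 < 1 := by
  have e : y₁ t' * y₂ t - y₂ t' * y₁ t = -(y₁ t * y₂ t' - y₂ t * y₁ t') := by ring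
  rw [inner_tanPt, e, H.det_eq t t']
  have h1 := H.W_lt (t := t') (t' := t) (by linarith) (by linarith [Real.pi_pos]) h.ne
  have h2 : 0 ≤ Real.sin (Θ t' - Θ t) :=
    Real.sin_nonneg_of_nonneg_of_le_pi (by linarith) (by linarith)
  have : 0 ≤ (-s) *
      (√(y₁ t ^ 2 + y₂ t ^ 2) * √(y₁ t' ^ 2 + y₂ t' ^ 2) * Real.sin (Θ t' - Θ t)) :=
    mul_nonneg (by linarith) (by positivity)
  linarith

lemma tanPt_per (H : Hill y₁ y₂ g₁ g₂ k Θ P) (t s : ℝ) (n : ℤ) :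
    tanPt y₁ y₂ g₁ g₂ (t + n * P) s = tanPt y₁ y₂ g₁ g₂ t s := by
  simp only [tanPt, per_int H.pery₁, per_int H.pery₂, per_int H.perg₁, per_int H.perg₂]

/-- Through a point outside `K` there is only one tangent line with a given orientation. -/
lemma tanPt_inj (H : Hill y₁ y₂ g₁ g₂ k Θ P) {t t' s s' : ℝ}
    (hs : (0 < s ∧ 0 < s') ∨ (s < 0 ∧ s' < 0))
    (h : tanPt y₁ y₂ g₁ g₂ t s = tanPt y₁ y₂ g₁ g₂ t' s') :
    s = s' ∧ ∃ n : ℤ, t = t' + n * P := by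
  have key : ∃ n : ℤ, t = t' + n * P := by
    rcases hs with ⟨h1, h2⟩ | ⟨h1, h2⟩
    · obtain ⟨n, hn, hn'⟩ := H.exists_shift (Θ t - π) t'
      rw [← H.tanPt_per t' s' n] at h
      refine ⟨n, ?_⟩
      rcases lt_trichotomy (Θ (t' + n * P)) (Θ t) with hl | hl | hl
      · have := H.inner_lt_of_nonneg h1.le hn hl
        rw [h, H.inner_tanPt_self] at this
        exact absurd this (lt_irrefl _)
      · exact (H.Θmono.injective hl).symm
      · have := H.inner_lt_of_nonneg h2.le (t := t' + n * P) (t' := t) (by linarith) hl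
        rw [← h, H.inner_tanPt_self] at this
        exact absurd this (lt_irrefl _)
    · obtain ⟨n, hn, hn'⟩ := H.exists_shift' (Θ t - π) t'
      rw [← H.tanPt_per t' s' n] at h
      refine ⟨n, ?_⟩
      rcases lt_trichotomy (Θ (t' + n * P)) (Θ t) with hl | hl | hl
      · have := H.inner_lt_of_nonpos h2.le (t := t' + n * P) (t' := t) hl (by linarith)
        rw [← h, H.inner_tanPt_self] at this
        exact absurd this (lt_irrefl _)
      · exact (H.Θmono.injective hl).symm
      · have := H.inner_lt_of_nonpos h1.le hl (by linarith)
        rw [h, H.inner_tanPt_self] at this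
        exact absurd this (lt_irrefl _)
  obtain ⟨n, hn⟩ := key
  refine ⟨?_, n, hn⟩
  have e1 := H.inner_tanPt_g t s
  rw [h, hn, per_int H.perg₁, per_int H.perg₂, H.inner_tanPt_g] at e1
  exact e1.symm

lemma hasDerivAt_inner (H : Hill y₁ y₂ g₁ g₂ k Θ P) (z : ℝ × ℝ) (t : ℝ) :
    HasDerivAt (fun t => y₁ t * z.1 + y₂ t * z.2) (g₁ t * z.1 + g₂ t * z.2) t :=
  ((H.hy₁ t).mul_const _).add ((H.hy₂ t).mul_const _)

lemma eq_tanPt (H : Hill y₁ y₂ g₁ g₂ k Θ P) {z : ℝ × ℝ} {t : ℝ}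
    (h : y₁ t * z.1 + y₂ t * z.2 = 1) :
    z = tanPt y₁ y₂ g₁ g₂ t (g₁ t * z.1 + g₂ t * z.2) := by
  have hd := H.det t
  ext
  · simp only [tanPt]; linear_combination g₂ t * h - z.1 * hd
  · simp only [tanPt]; linear_combination -g₁ t * h - z.2 * hd

/-- A table given as `K = {z | ∀ t, ⟪y t, z⟫ ≤ 1}` has boundary points `(g₂ t, -g₁ t)`. -/
structure Table (H : Hill y₁ y₂ g₁ g₂ k Θ P) (K : Set (ℝ × ℝ)) : Prop where
  mem : ∀ z, z ∈ K ↔ ∀ t, y₁ t * z.1 + y₂ t * z.2 ≤ 1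
  fr : frontier K = {p | ∃ t, p = (g₂ t, -g₁ t)}
  zero : (0 : ℝ × ℝ) ∈ interior K

/-- A point `z` of the complement violates one of the inequalities: the segment from `0` to `z` crosses
`∂K`, where one of them is an equality. -/
lemma table (H : Hill y₁ y₂ g₁ g₂ k Θ P) {K : Set (ℝ × ℝ)} (hcomp : IsCompact K)
    (h0 : (0 : ℝ × ℝ) ∈ interior K)
    (hfr : frontier K = {p | ∃ t, p = (g₂ t, -g₁ t)}) : H.Table K := by
  refine ⟨fun z => ⟨fun hz t => ?_, fun h => ?_⟩, hfr, h0⟩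
  · have hc : Continuous fun z : ℝ × ℝ => y₁ t * z.1 + y₂ t * z.2 := by fun_prop
    obtain ⟨p, hp, hmax⟩ := hcomp.exists_isMaxOn ⟨z, hz⟩ hc.continuousOn
    have hpf : p ∈ frontier K := by
      rw [hcomp.isClosed.frontier_eq]
      refine ⟨hp, fun hpi => ?_⟩
      have hl : IsLocalMax (fun u : ℝ => y₁ t * (p.1 + u * y₁ t) + y₂ t * (p.2 + u * y₂ t)) 0 := by
        have hcu : Continuous fun u : ℝ => (p.1 + u * y₁ t, p.2 + u * y₂ t) := by fun_prop
        have hm : ∀ᶠ u in nhds (0 : ℝ), (p.1 + u * y₁ t, p.2 + u * y₂ t) ∈ K := by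
          apply hcu.continuousAt.eventually_mem
          simpa using mem_interior_iff_mem_nhds.1 hpi
        filter_upwards [hm] with u hu
        simpa using hmax hu
      have hd : HasDerivAt
          (fun u : ℝ => y₁ t * (p.1 + u * y₁ t) + y₂ t * (p.2 + u * y₂ t))
          (y₁ t ^ 2 + y₂ t ^ 2) 0 :=
        ((((((hasDerivAt_id (0:ℝ)).mul_const (y₁ t)).const_add p.1).const_mul (y₁ t)).add
          ((((hasDerivAt_id (0:ℝ)).mul_const (y₂ t)).const_add p.2).const_mul (y₂ t))).congr_deriv
          (by ring))
      exact (H.Ypos t).ne' (hl.hasDerivAt_eq_zero hd)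
    rw [hfr] at hpf
    obtain ⟨t', rfl⟩ := hpf
    have := hmax hz
    simp only [Set.mem_ofPred_eq] at this
    linarith [H.W_le t t']
  · by_contra hz
    obtain ⟨q, hq, hqf⟩ : ∃ q ∈ segment ℝ (0 : ℝ × ℝ) z, q ∈ frontier K := by
      by_contra! hc
      obtain ⟨q, -, hq1, hq2⟩ := (convex_segment (0 : ℝ × ℝ) z).isPreconnected (interior K) Kᶜ
        isOpen_interior hcomp.isClosed.isOpen_compl
        (fun q hq => by
          by_contra hn
          rw [Set.mem_union, not_or, Set.mem_compl_iff, not_not] at hn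
          exact hc q hq (by rw [hcomp.isClosed.frontier_eq]; exact ⟨hn.2, hn.1⟩))
        ⟨0, left_mem_segment _ _ _, h0⟩ ⟨z, right_mem_segment _ _ _, hz⟩
      exact hq2 (interior_subset hq1)
    rw [segment_eq_image] at hq
    obtain ⟨l, ⟨hl0, hl1⟩, rfl⟩ := hq
    simp only [smul_zero, zero_add] at hqf
    have hmem : l • z ∈ K := hcomp.isClosed.frontier_subset hqf
    have hl : l < 1 := lt_of_le_of_ne hl1 fun e => hz (by simpa [e] using hmem)
    rw [hfr] at hqf
    obtain ⟨t, ht⟩ := hqf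
    have e1 : l * z.1 = g₂ t := by simpa using congrArg Prod.fst ht
    have e2 : l * z.2 = -g₁ t := by simpa using congrArg Prod.snd ht
    have h3 := mul_le_mul_of_nonneg_left (h t) hl0
    have : l * (y₁ t * z.1 + y₂ t * z.2) = 1 := by
      linear_combination y₁ t * e1 + y₂ t * e2 + H.det t
    linarith

lemma gamma_mem {H : Hill y₁ y₂ g₁ g₂ k Θ P} {K : Set (ℝ × ℝ)} (hK : H.Table K) (t : ℝ) :
    (g₂ t, -g₁ t) ∈ K :=
  (hK.mem _).2 fun t' => by simpa [sub_eq_add_neg] using H.W_le t' t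

lemma tanPt_notMem {H : Hill y₁ y₂ g₁ g₂ k Θ P} {K : Set (ℝ × ℝ)} (hK : H.Table K) (t : ℝ) {s : ℝ}
    (hs : s ≠ 0) : tanPt y₁ y₂ g₁ g₂ t s ∉ K := by
  intro h
  rw [hK.mem] at h
  have hl : IsLocalMax (fun t' => y₁ t' * (tanPt y₁ y₂ g₁ g₂ t s).1 +
      y₂ t' * (tanPt y₁ y₂ g₁ g₂ t s).2) t :=
    Filter.Eventually.of_forall fun t' => by
      simp only
      rw [H.inner_tanPt_self]; exact h t'
  have := hl.hasDerivAt_eq_zero (H.hasDerivAt_inner _ t)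
  rw [H.inner_tanPt_g] at this
  exact hs this

lemma exists_down {f f' : ℝ → ℝ} (hf : ∀ t, HasDerivAt f (f' t) t) {a b : ℝ} (hab : a ≤ b)
    (ha : 1 < f a) (hb : f b < 1) : ∃ t, f t = 1 ∧ f' t ≤ 0 := by
  by_contra! hc
  have := image_le_of_deriv_right_lt_deriv_boundary (f := fun t => -f t) (f' := fun t => -f' t)
    (a := a) (b := b) (B := fun _ => -1) (B' := fun _ => 0)
    (fun t _ => (hf t).neg.continuousAt.continuousWithinAt)
    (fun t _ => (hf t).neg.hasDerivWithinAt) (by linarith) (fun t => hasDerivAt_const _ _)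
    (fun t _ e => by have := hc t (by linarith); linarith) (Set.right_mem_Icc.2 hab)
  linarith

lemma exists_up {f f' : ℝ → ℝ} (hf : ∀ t, HasDerivAt f (f' t) t) {a b : ℝ} (hab : a ≤ b)
    (ha : f a < 1) (hb : 1 < f b) : ∃ t, f t = 1 ∧ 0 ≤ f' t := by
  by_contra! hc
  have := image_le_of_deriv_right_lt_deriv_boundary (f := f) (f' := f')
    (a := a) (b := b) (B := fun _ => 1) (B' := fun _ => 0)
    (fun t _ => (hf t).continuousAt.continuousWithinAt)
    (fun t _ => (hf t).hasDerivWithinAt) ha.le (fun t => hasDerivAt_const _ _)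
    (fun t _ e => hc t e) (Set.right_mem_Icc.2 hab)
  linarith

lemma exists_mem_Ioc (H : Hill y₁ y₂ g₁ g₂ k Θ P) (t : ℝ) :
    ∃ n : ℤ, t + n * P ∈ Set.Ioc 0 P := by
  obtain ⟨n, hn, -⟩ := existsUnique_add_zsmul_mem_Ioc H.Ppos t 0
  exact ⟨n, by simpa using hn⟩

/-- Both tangent lines through an exterior point `z`: the function `t ↦ ⟪y t, z⟫` exceeds `1`
somewhere and is less than `1` at the opposite direction, so it crosses the value `1` upwards and
downwards. -/
lemma exists_tanPt {H : Hill y₁ y₂ g₁ g₂ k Θ P} {K : Set (ℝ × ℝ)} (hK : H.Table K) {z : ℝ × ℝ}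
    (hz : z ∉ K) :
    (∃ t ∈ Set.Ioc 0 P, ∃ s > 0, tanPt y₁ y₂ g₁ g₂ t s = z) ∧
    (∃ t ∈ Set.Ioc 0 P, ∃ s > 0, tanPt y₁ y₂ g₁ g₂ t (-s) = z) := by
  have hz' := hz
  rw [hK.mem] at hz'
  push Not at hz'
  obtain ⟨a, ha⟩ := hz'
  have hpi := Real.pi_pos
  obtain ⟨b, hb⟩ := H.Θsurj (Θ a + π)
  have hab : a < b := H.Θmono.lt_iff_lt.1 (by linarith)
  have hba : b < a + P := H.Θmono.lt_iff_lt.1 (by rw [H.perΘ]; linarith)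
  have hb1 : y₁ b * z.1 + y₂ b * z.2 < 1 := by
    have e1 := H.hcos b
    have e2 := H.hsin b
    rw [hb, Real.cos_add_pi] at e1
    rw [hb, Real.sin_add_pi] at e2
    have e3 := H.hcos a
    have e4 := H.hsin a
    have p1 := Real.sqrt_pos.2 (H.Ypos a)
    have p2 := Real.sqrt_pos.2 (H.Ypos b)
    generalize √(y₁ a ^ 2 + y₂ a ^ 2) = A at *
    generalize √(y₁ b ^ 2 + y₂ b ^ 2) = B at *
    have e5 : y₁ a * z.1 + y₂ a * z.2 = A * (Real.cos (Θ a) * z.1 + Real.sin (Θ a) * z.2) := by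
      linear_combination z.1 * e3 + z.2 * e4
    have e6 : y₁ b * z.1 + y₂ b * z.2 =
        -(B * (Real.cos (Θ a) * z.1 + Real.sin (Θ a) * z.2)) := by
      linear_combination z.1 * e1 + z.2 * e2
    rw [e5] at ha
    have : 0 < Real.cos (Θ a) * z.1 + Real.sin (Θ a) * z.2 :=
      (pos_iff_pos_of_mul_pos (by linarith)).1 p1
    rw [e6]
    nlinarith [mul_pos p2 this]
  have ha2 : 1 < y₁ (a + P) * z.1 + y₂ (a + P) * z.2 := by rwa [H.pery₁, H.pery₂]
  have fin : ∀ t, y₁ t * z.1 + y₂ t * z.2 = 1 →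
      g₁ t * z.1 + g₂ t * z.2 ≠ 0 ∧ ∃ t' ∈ Set.Ioc 0 P,
        tanPt y₁ y₂ g₁ g₂ t' (g₁ t * z.1 + g₂ t * z.2) = z := by
    intro t ht
    have e := H.eq_tanPt ht
    constructor
    · intro h0
      rw [h0] at e
      apply hz
      rw [e]
      simpa [tanPt] using gamma_mem hK t
    · obtain ⟨n, hn⟩ := H.exists_mem_Ioc t
      exact ⟨_, hn, by rw [H.tanPt_per]; exact e.symm⟩
  constructor
  · obtain ⟨t, ht, ht'⟩ := exists_up (H.hasDerivAt_inner z) hba.le hb1 ha2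
    obtain ⟨h1, t', h2, h3⟩ := fin t ht
    exact ⟨t', h2, _, lt_of_le_of_ne ht' h1.symm, h3⟩
  · obtain ⟨t, ht, ht'⟩ := exists_down (H.hasDerivAt_inner z) hab.le ha hb1
    obtain ⟨h1, t', h2, h3⟩ := fin t ht
    exact ⟨t', h2, -(g₁ t * z.1 + g₂ t * z.2), neg_pos.2 (lt_of_le_of_ne ht' h1),
      by rwa [neg_neg]⟩

/-- The orientation of the outer billiard map is that of increasing `s`. -/
lemma T_tanPt {H : Hill y₁ y₂ g₁ g₂ k Θ P} {K : Set (ℝ × ℝ)} (hK : H.Table K)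
    {T : ℝ × ℝ → ℝ × ℝ} (hT : IsOuterBilliard K T) (t : ℝ) {s : ℝ} (hs : 0 < s) :
    T (tanPt y₁ y₂ g₁ g₂ t (-s)) = tanPt y₁ y₂ g₁ g₂ t s := by
  have hA := tanPt_notMem hK t (neg_ne_zero.2 hs.ne')
  set A := tanPt y₁ y₂ g₁ g₂ t (-s) with hAdef
  obtain ⟨-, hfr, -, hdet⟩ := hT A hA
  rw [hK.fr] at hfr
  obtain ⟨t₀, ht₀⟩ := hfr
  rw [ht₀] at hdet
  have m1 : A.1 + (T A).1 = 2 * g₂ t₀ := by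
    have := congrArg Prod.fst ht₀
    simp at this; linarith
  have m2 : A.2 + (T A).2 = -2 * g₁ t₀ := by
    have := congrArg Prod.snd ht₀
    simp at this; linarith
  have h0 := hdet 0 (interior_subset hK.zero)
  simp only [detV, Prod.fst_sub, Prod.snd_sub, Prod.fst_zero, Prod.snd_zero] at h0
  have hl : IsLocalMin (fun x => ((T A).1 - A.1) * (-g₁ x - -g₁ t₀) -
      ((T A).2 - A.2) * (g₂ x - g₂ t₀)) t₀ :=
    Filter.Eventually.of_forall fun x => by
      have := hdet _ (gamma_mem hK x)
      simp only [detV, Prod.fst_sub, Prod.snd_sub] at this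
      simpa using this
  have hd := hl.hasDerivAt_eq_zero
    (((((H.hg₁ t₀).neg.sub_const _).const_mul _)).sub (((H.hg₂ t₀).sub_const _).const_mul _))
  have hk := (H.kpos t₀).ne'
  have hd' : ((T A).1 - A.1) * y₁ t₀ + ((T A).2 - A.2) * y₂ t₀ = 0 := by
    apply mul_left_cancel₀ hk
    linear_combination hd
  have hdt := H.det t₀
  obtain ⟨c, hc⟩ : ∃ c, c = (g₁ t₀ * ((T A).1 - A.1) + g₂ t₀ * ((T A).2 - A.2)) / 2 := ⟨_, rfl⟩
  have d1 : (T A).1 - A.1 = -2 * c * y₂ t₀ := by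
    rw [hc]; linear_combination g₂ t₀ * hd' - ((T A).1 - A.1) * hdt
  have d2 : (T A).2 - A.2 = 2 * c * y₁ t₀ := by
    rw [hc]; linear_combination -g₁ t₀ * hd' - ((T A).2 - A.2) * hdt
  have hA' : A = tanPt y₁ y₂ g₁ g₂ t₀ (-c) := by
    ext <;> simp only [tanPt] <;> linarith
  have hTA : T A = tanPt y₁ y₂ g₁ g₂ t₀ c := by
    ext <;> simp only [tanPt] <;> linarith
  have hc0 : 0 ≤ c := by
    rw [d1, d2] at h0; nlinarith
  have hcpos : 0 < c := by
    refine lt_of_le_of_ne hc0 fun h => hA ?_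
    rw [hA', ← h]
    simpa [tanPt] using gamma_mem hK t₀
  obtain ⟨e, n, hn⟩ := H.tanPt_inj (Or.inr ⟨neg_lt_zero.2 hs, neg_lt_zero.2 hcpos⟩)
    (hAdef.symm.trans hA')
  rw [hTA, hn, H.tanPt_per, neg_inj.1 e]

end Hill

/-! ### Constant coefficient -/

namespace Hill

variable {y₁ y₂ g₁ g₂ k Θ : ℝ → ℝ} {P : ℝ}

/-- The two combinations of `y` and `g` which are constant along solutions determine `g`. -/
lemma sol_const_coeff {y g : ℝ → ℝ} {ω : ℝ} (hω : ω ≠ 0) (hy : ∀ t, HasDerivAt y (g t) t)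
    (hg : ∀ t, HasDerivAt g (-(ω ^ 2 * y t)) t) (t : ℝ) :
    g t = cos (ω * t) * g 0 - ω * sin (ω * t) * y 0 := by
  have dc : ∀ t, HasDerivAt (fun t => cos (ω * t)) (-sin (ω * t) * ω) t := fun t =>
    ((hasDerivAt_id t).const_mul ω).cos.congr_deriv (by simp)
  have ds : ∀ t, HasDerivAt (fun t => sin (ω * t)) (cos (ω * t) * ω) t := fun t =>
    ((hasDerivAt_id t).const_mul ω).sin.congr_deriv (by simp)
  have hA : ∀ t, HasDerivAt (fun t => cos (ω * t) * g t + ω * (sin (ω * t) * y t)) 0 t :=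
    fun t => (((dc t).mul (hg t)).add (((ds t).mul (hy t)).const_mul ω)).congr_deriv (by ring)
  have hB : ∀ t, HasDerivAt (fun t => cos (ω * t) * y t - sin (ω * t) * g t / ω) 0 t :=
    fun t => (((dc t).mul (hy t)).sub (((ds t).mul (hg t)).div_const ω)).congr_deriv (by
      field_simp; ring)
  have eA := is_const_of_deriv_eq_zero (fun t => (hA t).differentiableAt)
    (fun t => (hA t).deriv) t 0
  have eB := is_const_of_deriv_eq_zero (fun t => (hB t).differentiableAt)
    (fun t => (hB t).deriv) t 0
  simp only [mul_zero, cos_zero, sin_zero, one_mul, zero_mul, add_zero, zero_div, sub_zero]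
    at eA eB
  rw [← eA, ← eB]
  field_simp
  linear_combination (-g t) * Real.sin_sq_add_cos_sq (ω * t)

/-- For constant `k = ω ^ 2` the boundary point `(g₂, -g₁)` is the image of
`(cos ω t, sin ω t)` under a fixed linear map. -/
lemma isEllipse (H : Hill y₁ y₂ g₁ g₂ k Θ P) {ω : ℝ} (hω : 0 < ω) (hk : ∀ t, k t = ω ^ 2)
    {C : Set (ℝ × ℝ)} (hC : C = {p | ∃ t, p = (g₂ t, -g₁ t)}) : IsEllipse C := by
  have e1 := sol_const_coeff hω.ne' H.hy₁ (fun t => hk t ▸ H.hg₁ t)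
  have e2 := sol_const_coeff hω.ne' H.hy₂ (fun t => hk t ▸ H.hg₂ t)
  have hd := H.det 0
  let L : (ℝ × ℝ) →ₗ[ℝ] ℝ × ℝ :=
    { toFun := fun x => (x.1 * g₂ 0 - x.2 * (ω * y₂ 0), -(x.1 * g₁ 0) + x.2 * (ω * y₁ 0))
      map_add' := fun x y => by ext <;> simp <;> ring
      map_smul' := fun c x => by ext <;> simp <;> ring }
  have hL : ∀ x, L x = (x.1 * g₂ 0 - x.2 * (ω * y₂ 0), -(x.1 * g₁ 0) + x.2 * (ω * y₁ 0)) :=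
    fun x => rfl
  refine ⟨L, 0, ⟨?_, ?_⟩, ?_⟩
  · intro x x' h
    rw [hL, hL, Prod.mk.injEq] at h
    have h1 : x.1 = x'.1 := by
      linear_combination y₁ 0 * h.1 + y₂ 0 * h.2 - (x.1 - x'.1) * hd
    have h2 : ω * x.2 = ω * x'.2 := by
      linear_combination g₁ 0 * h.1 + g₂ 0 * h.2 - ω * (x.2 - x'.2) * hd
    exact Prod.ext h1 (mul_left_cancel₀ hω.ne' h2)
  · intro z
    refine ⟨(y₁ 0 * z.1 + y₂ 0 * z.2, (g₁ 0 * z.1 + g₂ 0 * z.2) / ω), ?_⟩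
    rw [hL]
    ext
    · field_simp; linear_combination z.1 * hd
    · field_simp; linear_combination z.2 * hd
  · rw [hC]
    ext p
    simp only [zero_add, Set.mem_ofPred_eq, Set.mem_image]
    constructor
    · rintro ⟨t, rfl⟩
      refine ⟨(cos (ω * t), sin (ω * t)), by simp, ?_⟩
      rw [hL, e1 t, e2 t]
      ext <;> simp <;> ring
    · rintro ⟨x, hx, rfl⟩
      have hn : ‖(⟨x.1, x.2⟩ : ℂ)‖ = 1 := by
        rw [Complex.norm_eq_sqrt_sq_add_sq]; simp [hx]
      have c1 := Complex.norm_mul_cos_arg ⟨x.1, x.2⟩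
      have c2 := Complex.norm_mul_sin_arg ⟨x.1, x.2⟩
      rw [hn, one_mul] at c1 c2
      refine ⟨Complex.arg ⟨x.1, x.2⟩ / ω, ?_⟩
      rw [hL, e1 (_ / ω), e2 (_ / ω), mul_div_cancel₀ _ hω.ne', c1, c2]
      ext <;> simp <;> ring

end Hill

/-! ### The Santaló point -/

/-- The linear map of the plane with matrix `!![a, b; c, d]`. -/
def mat2 (a b c d : ℝ) : ℝ × ℝ →L[ℝ] ℝ × ℝ :=
  LinearMap.toContinuousLinearMap
    (Matrix.toLin (Module.Basis.finTwoProd ℝ) (Module.Basis.finTwoProd ℝ) !![a, b; c, d])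

lemma mat2_det (a b c d : ℝ) : (mat2 a b c d).det = a * d - b * c := by
  rw [mat2, LinearMap.det_toContinuousLinearMap, LinearMap.det_toLin, Matrix.det_fin_two_of]

lemma mat2_apply (a b c d : ℝ) (p : ℝ × ℝ) :
    mat2 a b c d p = (a * p.1 + b * p.2, c * p.1 + d * p.2) := by
  simp [mat2, Matrix.toLin_finTwoProd_apply]

namespace Hill

variable {y₁ y₂ g₁ g₂ k Θ : ℝ → ℝ} {P : ℝ}

/-- Polar coordinates adapted to the curve `y`; uniqueness is `ray_inj`. -/
lemma exists_ray (H : Hill y₁ y₂ g₁ g₂ k Θ P) {p : ℝ × ℝ} (hp : p ≠ 0) :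
    ∃ t ∈ Set.Ioc 0 P, ∃ l > 0, p = (l * y₁ t, l * y₂ t) := by
  obtain ⟨t', ht'⟩ := H.Θsurj (Complex.arg ⟨p.1, p.2⟩)
  obtain ⟨n, hn⟩ := H.exists_mem_Ioc t'
  have c1 := Complex.norm_mul_cos_arg ⟨p.1, p.2⟩
  have c2 := Complex.norm_mul_sin_arg ⟨p.1, p.2⟩
  rw [← ht'] at c1 c2
  have hY := Real.sqrt_pos.2 (H.Ypos t')
  have e1 := H.hcos t'
  have e2 := H.hsin t'
  have hnp : 0 < ‖(⟨p.1, p.2⟩ : ℂ)‖ := by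
    rw [norm_pos_iff]
    intro h
    apply hp
    rw [Complex.ext_iff] at h
    exact Prod.ext h.1 h.2
  refine ⟨_, hn, ‖(⟨p.1, p.2⟩ : ℂ)‖ / √(y₁ t' ^ 2 + y₂ t' ^ 2), by positivity, ?_⟩
  rw [per_int H.pery₁, per_int H.pery₂]
  generalize √(y₁ t' ^ 2 + y₂ t' ^ 2) = Y at *
  generalize ‖(⟨p.1, p.2⟩ : ℂ)‖ = N at *
  ext
  · simp only at c1 ⊢
    rw [e1, ← c1]; field_simp
  · simp only at c2 ⊢
    rw [e2, ← c2]; field_simp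

lemma ray_inj (H : Hill y₁ y₂ g₁ g₂ k Θ P) {t t' l l' : ℝ} (hl : 0 < l) (hl' : 0 < l')
    (h1 : l * y₁ t = l' * y₁ t') (h2 : l * y₂ t = l' * y₂ t') :
    l = l' ∧ ∃ n : ℤ, t = t' + n * P := by
  have w1 := H.W_le t' t
  have w2 := H.W_le t t'
  have e1 : l * (y₁ t * g₂ t - y₂ t * g₁ t) = l' * (y₁ t' * g₂ t - y₂ t' * g₁ t) := by
    linear_combination g₂ t * h1 - g₁ t * h2
  have e2 : l * (y₁ t * g₂ t' - y₂ t * g₁ t') = l' * (y₁ t' * g₂ t' - y₂ t' * g₁ t') := by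
    linear_combination g₂ t' * h1 - g₁ t' * h2
  rw [H.det, mul_one] at e1 e2
  have hll : l = l' := le_antisymm (by nlinarith) (by nlinarith)
  refine ⟨hll, ?_⟩
  obtain ⟨n, hn, hn'⟩ := H.exists_shift (Θ t - π) t'
  refine ⟨n, ?_⟩
  by_contra hne
  have := H.W_lt hn (by linarith) fun h => hne (H.Θmono.injective h).symm
  rw [per_int H.perg₁, per_int H.perg₂] at this
  rw [hll] at e2
  nlinarith

/-- The boundary of the polar body with respect to `x` is the curve `y / (1 - ⟪y, x⟫)`. -/
lemma polarDual_eq {H : Hill y₁ y₂ g₁ g₂ k Θ P} {K : Set (ℝ × ℝ)} (hK : H.Table K) {x : ℝ × ℝ}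
    (hx : ∀ t, 0 < 1 - (y₁ t * x.1 + y₂ t * x.2)) :
    polarDual K x = insert 0 ((fun q : ℝ × ℝ =>
      (q.2 * (y₁ q.1 / (1 - (y₁ q.1 * x.1 + y₂ q.1 * x.2))),
        q.2 * (y₂ q.1 / (1 - (y₁ q.1 * x.1 + y₂ q.1 * x.2))))) '' (Set.Ioc 0 P ×ˢ Set.Ioc 0 1)) := by
  ext p
  rw [Set.mem_insert_iff, polarDual, Set.mem_ofPred_eq]
  constructor
  · intro h
    by_cases hp : p = 0
    · exact Or.inl hp
    right
    obtain ⟨t, ht, l, hl, rfl⟩ := H.exists_ray hp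
    have hd := H.det t
    have h1 := h _ (gamma_mem hK t)
    simp only at h1
    have h2 := hx t
    refine ⟨(t, l * (1 - (y₁ t * x.1 + y₂ t * x.2))), ⟨ht, mul_pos hl h2, ?_⟩, ?_⟩
    · have e : l * y₁ t * (g₂ t - x.1) + l * y₂ t * (-g₁ t - x.2) =
        l * (1 - (y₁ t * x.1 + y₂ t * x.2)) := by linear_combination l * hd
      simp only
      linarith
    · simp only
      rw [mul_assoc, mul_div_cancel₀ _ h2.ne', mul_assoc, mul_div_cancel₀ _ h2.ne']
  · rintro (rfl | ⟨⟨t, σ⟩, ⟨ht, hσ0, hσ1⟩, rfl⟩) c hc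
    · simp
    · have h1 := (hK.mem c).1 hc t
      have h2 := hx t
      simp only at hσ0 hσ1 ⊢
      have e : σ * (y₁ t / (1 - (y₁ t * x.1 + y₂ t * x.2))) * (c.1 - x.1) +
          σ * (y₂ t / (1 - (y₁ t * x.1 + y₂ t * x.2))) * (c.2 - x.2) =
          σ * ((y₁ t * c.1 + y₂ t * c.2 - (y₁ t * x.1 + y₂ t * x.2)) /
            (1 - (y₁ t * x.1 + y₂ t * x.2))) := by ring
      rw [e]
      have h3 : (y₁ t * c.1 + y₂ t * c.2 - (y₁ t * x.1 + y₂ t * x.2)) /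
            (1 - (y₁ t * x.1 + y₂ t * x.2)) ≤ 1 := (div_le_one h2).2 (by linarith)
      nlinarith

/-- Area of the polar body with respect to `x`: the map `(t, σ) ↦ σ y / (1 - ⟪y, x⟫)` has Jacobian
`σ / (1 - ⟪y, x⟫) ^ 2` up to sign. -/
lemma volume_polarDual {H : Hill y₁ y₂ g₁ g₂ k Θ P} {K : Set (ℝ × ℝ)} (hK : H.Table K) {x : ℝ × ℝ}
    (hx : ∀ t, 0 < 1 - (y₁ t * x.1 + y₂ t * x.2)) :
    volume (polarDual K x) =
      ENNReal.ofReal ((∫ t in (0)..P, 1 / (1 - (y₁ t * x.1 + y₂ t * x.2)) ^ 2) * (1 / 2)) := by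
  set h : ℝ → ℝ := fun t => 1 - (y₁ t * x.1 + y₂ t * x.2) with hh
  set h' : ℝ → ℝ := fun t => -(g₁ t * x.1 + g₂ t * x.2) with hh'
  have dh : ∀ t, HasDerivAt h (h' t) t := fun t => (H.hasDerivAt_inner x t).const_sub 1
  have hne : ∀ t, h t ≠ 0 := fun t => (hx t).ne'
  have ch : Continuous h := continuous_iff_continuousAt.2 fun t => (dh t).continuousAt
  set f : ℝ × ℝ → ℝ × ℝ := fun q => (q.2 * (y₁ q.1 / h q.1), q.2 * (y₂ q.1 / h q.1)) with hf
  have df : ∀ q : ℝ × ℝ, HasFDerivAt f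
      (mat2 (q.2 * ((g₁ q.1 * h q.1 - y₁ q.1 * h' q.1) / h q.1 ^ 2)) (y₁ q.1 / h q.1)
        (q.2 * ((g₂ q.1 * h q.1 - y₂ q.1 * h' q.1) / h q.1 ^ 2)) (y₂ q.1 / h q.1)) q := by
    intro q
    have a1 := (hasFDerivAt_snd (𝕜 := ℝ) (p := q)).mul
      ((((H.hy₁ q.1).div (dh q.1) (hne _))).comp_hasFDerivAt q (hasFDerivAt_fst (𝕜 := ℝ) (p := q)))
    have a2 := (hasFDerivAt_snd (𝕜 := ℝ) (p := q)).mul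
      ((((H.hy₂ q.1).div (dh q.1) (hne _))).comp_hasFDerivAt q (hasFDerivAt_fst (𝕜 := ℝ) (p := q)))
    refine (a1.prodMk a2).congr_fderiv ?_
    ext <;> simp [mat2_apply]
  have inj : Set.InjOn f (Set.Ioc 0 P ×ˢ Set.Ioc 0 1) := by
    rintro ⟨t, σ⟩ ⟨ht, hσ⟩ ⟨t', σ'⟩ ⟨ht', hσ'⟩ he
    simp only [hf, Prod.mk.injEq] at he ht ht' hσ hσ'
    obtain ⟨hl, n, hn⟩ := H.ray_inj (t := t) (t' := t') (l := σ / h t) (l' := σ' / h t')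
      (div_pos hσ.1 (hx t)) (div_pos hσ'.1 (hx t'))
      (by linear_combination he.1) (by linear_combination he.2)
    have : t = t' := by
      obtain ⟨m, -, hm⟩ := existsUnique_add_zsmul_mem_Ioc H.Ppos t' 0
      have i1 := hm n (by simpa [← hn] using ht)
      have i2 := hm 0 (by simpa using ht')
      rw [hn, i1, ← i2]; simp
    subst this
    rw [div_left_inj' (hne t)] at hl
    rw [hl]
  have vol := lintegral_abs_det_fderiv_eq_addHaar_image (volume : Measure (ℝ × ℝ))
    (measurableSet_Ioc.prod measurableSet_Ioc) (fun q _ => (df q).hasFDerivWithinAt) inj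
  rw [polarDual_eq hK hx, measure_congr (insert_ae_eq_self _ _), ← vol]
  have cinv : Continuous fun t => 1 / h t ^ 2 :=
    continuous_const.div (ch.pow 2) fun t => pow_ne_zero _ (hne t)
  have eq : ∀ q ∈ Set.Ioc (0:ℝ) P ×ˢ Set.Ioc (0:ℝ) 1, ENNReal.ofReal |(mat2
      (q.2 * ((g₁ q.1 * h q.1 - y₁ q.1 * h' q.1) / h q.1 ^ 2)) (y₁ q.1 / h q.1)
      (q.2 * ((g₂ q.1 * h q.1 - y₂ q.1 * h' q.1) / h q.1 ^ 2)) (y₂ q.1 / h q.1)).det| =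
      ENNReal.ofReal (1 / h q.1 ^ 2 * q.2) := by
    intro q hq
    congr 1
    rw [mat2_det]
    have h1 := hne q.1
    have e : q.2 * ((g₁ q.1 * h q.1 - y₁ q.1 * h' q.1) / h q.1 ^ 2) * (y₂ q.1 / h q.1) -
        y₁ q.1 / h q.1 * (q.2 * ((g₂ q.1 * h q.1 - y₂ q.1 * h' q.1) / h q.1 ^ 2)) =
        -(1 / h q.1 ^ 2 * q.2) := by
      field_simp
      linear_combination -(q.2 * h q.1) * H.det q.1
    rw [e, abs_neg, abs_of_nonneg]
    exact mul_nonneg (by positivity) hq.2.1.le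
  rw [setLIntegral_congr_fun (measurableSet_Ioc.prod measurableSet_Ioc) eq,
    ← ofReal_integral_eq_lintegral_ofReal]
  · rw [Measure.volume_eq_prod, setIntegral_prod_mul (fun t => 1 / h t ^ 2) (fun s => s),
      ← intervalIntegral.integral_of_le H.Ppos.le, ← intervalIntegral.integral_of_le zero_le_one]
    simp [hh]
  · rw [Measure.volume_eq_prod, ← Measure.prod_restrict]
    refine Integrable.mul_prod (f := fun t => 1 / h t ^ 2) (g := fun s : ℝ => s) ?_ ?_
    · exact (cinv.integrableOn_Icc).mono_set Set.Ioc_subset_Icc_self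
    · exact (continuous_id.integrableOn_Icc).mono_set Set.Ioc_subset_Icc_self
  · refine (ae_restrict_iff' (measurableSet_Ioc.prod measurableSet_Ioc)).2
      (Filter.Eventually.of_forall fun q hq => ?_)
    exact mul_nonneg (by positivity) hq.2.1.le

lemma exists_bound (H : Hill y₁ y₂ g₁ g₂ k Θ P) {f : ℝ → ℝ} (hf : Continuous f)
    (hper : ∀ t, f (t + P) = f t) : ∃ C > 0, ∀ t, |f t| ≤ C := by
  obtain ⟨C, hC⟩ := (isCompact_Icc (a := (0:ℝ)) (b := P)).exists_bound_of_continuousOn hf.continuousOn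
  refine ⟨max C 1, by positivity, fun t => ?_⟩
  obtain ⟨n, hn⟩ := H.exists_mem_Ioc t
  rw [← per_int hper t n]
  exact (hC _ (Set.Ioc_subset_Icc_self hn)).trans (le_max_left _ _)

/-- First variation of the area of the polar body at the Santaló point. -/
lemma santalo_nonneg {H : Hill y₁ y₂ g₁ g₂ k Θ P} {K : Set (ℝ × ℝ)} (hK : H.Table K)
    (hs : IsSantaloPoint K 0) (a b : ℝ) : 0 ≤ ∫ t in (0)..P, (a * y₁ t + b * y₂ t) := by
  set η : ℝ → ℝ := fun t => a * y₁ t + b * y₂ t with hη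
  have cη : Continuous η := (continuous_const.mul H.cy₁).add (continuous_const.mul H.cy₂)
  obtain ⟨C, hC0, hC⟩ := H.exists_bound cη fun t => by simp only [hη, H.pery₁, H.pery₂]
  have hP := H.Ppos
  have ev : ∀ᶠ ε in nhdsWithin (0:ℝ) (Set.Ioi 0), -(8 * P * C ^ 2) * ε ≤ ∫ t in (0)..P, η t := by
    have cx : Continuous fun ε : ℝ => (ε * a, ε * b) := by fun_prop
    have e1 : ∀ᶠ ε in nhdsWithin (0:ℝ) (Set.Ioi 0), (ε * a, ε * b) ∈ interior K := by
      refine (cx.continuousAt.eventually_mem ?_).filter_mono nhdsWithin_le_nhds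
      rw [zero_mul, zero_mul]
      exact isOpen_interior.mem_nhds hK.zero
    have e2 : ∀ᶠ ε in nhdsWithin (0:ℝ) (Set.Ioi 0), ε < 1 / (2 * C) :=
      (eventually_lt_nhds (by positivity)).filter_mono nhdsWithin_le_nhds
    filter_upwards [e1, e2, self_mem_nhdsWithin] with ε h1 h2 (h3 : 0 < ε)
    rw [lt_div_iff₀ (by positivity)] at h2
    have hz : ∀ t, |ε * η t| ≤ 1 / 2 := fun t => by
      rw [abs_mul, abs_of_pos h3]
      nlinarith [hC t]
    have hz' : ∀ t, y₁ t * (ε * a) + y₂ t * (ε * b) = ε * η t := fun t => by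
      simp only [hη]; ring
    have hx : ∀ t, 0 < 1 - (y₁ t * (ε * a, ε * b).1 + y₂ t * (ε * a, ε * b).2) := fun t => by
      simp only [hz']; linarith [(abs_le.1 (hz t)).2]
    have hv := hs.2 _ h1
    rw [volume_polarDual hK hx, volume_polarDual hK (by simp)] at hv
    simp only [hz', Prod.fst_zero, Prod.snd_zero, mul_zero, add_zero, sub_zero, one_pow, div_one,
      intervalIntegral.integral_const, smul_eq_mul, mul_one] at hv
    have cinv : Continuous fun t => 1 / (1 - ε * η t) ^ 2 :=
      continuous_const.div ((continuous_const.sub (continuous_const.mul cη)).pow 2) fun t => by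
        have := (abs_le.1 (hz t)).2
        exact pow_ne_zero _ (by linarith)
    have hP' : P ≤ ∫ t in (0)..P, 1 / (1 - ε * η t) ^ 2 := by
      have h0 : 0 ≤ ∫ t in (0)..P, 1 / (1 - ε * η t) ^ 2 :=
        intervalIntegral.integral_nonneg hP.le fun t _ => by positivity
      have := (ENNReal.ofReal_le_ofReal_iff (by positivity)).1 hv
      linarith
    have hle : ∀ t, 1 / (1 - ε * η t) ^ 2 ≤ (1 + 16 * ε ^ 2 * C ^ 2) + 2 * ε * η t := by
      intro t
      obtain ⟨z1, z2⟩ := abs_le.1 (hz t)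
      have hsq : (ε * η t) ^ 2 ≤ ε ^ 2 * C ^ 2 := by
        rw [mul_pow]
        exact mul_le_mul_of_nonneg_left (sq_le_sq' (abs_le.1 (hC t)).1 (abs_le.1 (hC t)).2)
          (sq_nonneg _)
      have : 1 / (1 - ε * η t) ^ 2 ≤ 1 + 2 * (ε * η t) + 16 * (ε * η t) ^ 2 := by
        generalize ε * η t = z at *
        rw [div_le_iff₀ (by nlinarith)]
        have : 0 ≤ z ^ 2 * (13 - 30 * z + 16 * z ^ 2) :=
          mul_nonneg (sq_nonneg _) (by nlinarith)
        linarith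
      linarith
    have c1 : Continuous fun t => (1 + 16 * ε ^ 2 * C ^ 2) + 2 * ε * η t :=
      continuous_const.add (continuous_const.mul cη)
    have := intervalIntegral.integral_mono_on (μ := volume) (a := 0) (b := P) hP.le
      (cinv.intervalIntegrable _ _) (c1.intervalIntegrable _ _) fun t _ => hle t
    have c2 : Continuous fun t => 2 * ε * η t := continuous_const.mul cη
    have c3 : Continuous fun _ : ℝ => 1 + 16 * ε ^ 2 * C ^ 2 := continuous_const
    rw [intervalIntegral.integral_add (c3.intervalIntegrable _ _) (c2.intervalIntegrable _ _),
      intervalIntegral.integral_const,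
      intervalIntegral.integral_const_mul, smul_eq_mul] at this
    have h5 : 0 ≤ (2 * ε) * (8 * P * C ^ 2 * ε + ∫ t in (0)..P, η t) := by
      nlinarith
    have := nonneg_of_mul_nonneg_right h5 (by positivity : 0 < 2 * ε)
    linarith
  have lim : Filter.Tendsto (fun ε : ℝ => -(8 * P * C ^ 2) * ε) (nhdsWithin (0:ℝ) (Set.Ioi 0))
      (nhds 0) := by
    have : Continuous fun ε : ℝ => -(8 * P * C ^ 2) * ε := by fun_prop
    simpa using (this.tendsto 0).mono_left nhdsWithin_le_nhds
  exact le_of_tendsto lim ev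

/-- If the origin is the Santaló point, it is the centroid of the polar body. -/
lemma integral_y_eq_zero {H : Hill y₁ y₂ g₁ g₂ k Θ P} {K : Set (ℝ × ℝ)} (hK : H.Table K)
    (hs : IsSantaloPoint K 0) :
    (∫ t in (0)..P, y₁ t = 0) ∧ ∫ t in (0)..P, y₂ t = 0 := by
  have h1 := santalo_nonneg hK hs 1 0
  have h2 := santalo_nonneg hK hs (-1) 0
  have h3 := santalo_nonneg hK hs 0 1
  have h4 := santalo_nonneg hK hs 0 (-1)
  simp only [one_mul, zero_mul, add_zero, zero_add, neg_mul, intervalIntegral.integral_neg]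
    at h1 h2 h3 h4
  exact ⟨by linarith, by linarith⟩

end Hill

/-! ### The integral along a tangent line -/

lemma integrable_inv_add_sq {a b : ℝ} (ha : 0 < a) (hb : 0 < b) :
    Integrable fun s : ℝ => 1 / (a ^ 2 + b ^ 2 * s ^ 2) := by
  have h := (integrable_inv_one_add_sq.comp_mul_left' (R := b / a) (by positivity)).const_mul
    (1 / a ^ 2)
  refine h.congr (Filter.Eventually.of_forall fun s => ?_)
  simp only
  field_simp

lemma integral_inv_add_sq {a b : ℝ} (ha : 0 < a) (hb : 0 < b) :
    ∫ s : ℝ, 1 / (a ^ 2 + b ^ 2 * s ^ 2) = π / (a * b) := by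
  have e : (fun s : ℝ => 1 / (a ^ 2 + b ^ 2 * s ^ 2)) =
      fun s => 1 / a ^ 2 * (1 + (b / a * s) ^ 2)⁻¹ := by
    ext s; field_simp
  rw [e, integral_const_mul, Measure.integral_comp_mul_left (fun s => (1 + s ^ 2)⁻¹),
    integral_univ_inv_one_add_sq, abs_of_pos (by positivity), smul_eq_mul]
  field_simp

lemma integral_Ioi_inv_add_sq {a b : ℝ} (ha : 0 < a) (hb : 0 < b) :
    ∫ s in Set.Ioi (0:ℝ), 2 * (1 / (a ^ 2 + b ^ 2 * s ^ 2)) = π / (a * b) := by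
  have e : (fun s : ℝ => 2 * (1 / (a ^ 2 + b ^ 2 * s ^ 2))) =
      fun s => 2 / a ^ 2 * (1 + (b / a * s) ^ 2)⁻¹ := by
    ext s; field_simp
  rw [e, integral_const_mul, integral_comp_mul_left_Ioi (fun s => (1 + s ^ 2)⁻¹) 0 (by positivity),
    mul_zero, integral_Ioi_inv_one_add_sq, arctan_zero, smul_eq_mul]
  field_simp
  ring

/-- With `σ = s Y + b` the integrand is a difference of two Cauchy densities plus an odd
function of `σ`. -/
lemma integral_edge {b Y G ε : ℝ} (hY : 0 < Y) (hG : Y * G = 1 + b ^ 2) (hε : 0 < ε) :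
    Integrable (fun s : ℝ => s * ((b + s * Y) / ((G + 2 * b * s + Y * s ^ 2) *
      (1 + ε ^ 2 * (G + 2 * b * s + Y * s ^ 2))))) ∧
    ∫ s : ℝ, s * ((b + s * Y) / ((G + 2 * b * s + Y * s ^ 2) *
      (1 + ε ^ 2 * (G + 2 * b * s + Y * s ^ 2)))) =
      π / Y * (√(Y / ε ^ 2 + 1) - 1) := by
  set q : ℝ := √(1 + ε ^ 2 / Y) with hq
  set p : ℝ := √(ε ^ 2 / Y) with hp
  have hq2 : q ^ 2 = 1 + ε ^ 2 / Y := Real.sq_sqrt (by positivity)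
  have hp2 : p ^ 2 = ε ^ 2 / Y := Real.sq_sqrt (by positivity)
  have qpos : 0 < q := Real.sqrt_pos.2 (by positivity)
  have ppos : 0 < p := Real.sqrt_pos.2 (by positivity)
  set o : ℝ → ℝ := fun σ => b * (σ / (1 + σ ^ 2) * (1 / (q ^ 2 + p ^ 2 * σ ^ 2))) with ho
  set h : ℝ → ℝ := fun σ => (q ^ 2 * (1 / (q ^ 2 + p ^ 2 * σ ^ 2)) - (1 + σ ^ 2)⁻¹) - o σ with hh
  have i1 := (integrable_inv_add_sq qpos ppos).const_mul (q ^ 2)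
  have i2 := integrable_inv_one_add_sq
  have io : Integrable o := by
    refine Integrable.const_mul ?_ b
    refine (integrable_inv_add_sq qpos ppos).bdd_mul (c := 1) ?_ ?_
    · exact (Continuous.div continuous_id (by fun_prop)
        fun σ => by positivity).aestronglyMeasurable
    · refine Filter.Eventually.of_forall fun σ => ?_
      rw [Real.norm_eq_abs, abs_div, div_le_one (by positivity), abs_of_pos (a := 1 + σ ^ 2)
        (by positivity)]
      nlinarith [sq_abs σ, sq_nonneg (|σ| - 1)]
  have into : ∫ σ, o σ = 0 := by
    have : ∫ σ, o (-σ) = ∫ σ, o σ := integral_neg_eq_self o volume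
    have e : (fun σ => o (-σ)) = fun σ => -o σ := by
      ext σ; simp only [ho]; rw [neg_sq]; ring
    rw [e, integral_neg] at this
    linarith
  have i12 : Integrable fun σ => q ^ 2 * (1 / (q ^ 2 + p ^ 2 * σ ^ 2)) - (1 + σ ^ 2)⁻¹ := i1.sub i2
  have ih : Integrable h := i12.sub io
  have inth : ∫ σ, h σ = π * (√(Y / ε ^ 2 + 1) - 1) := by
    simp only [hh]
    rw [integral_sub i12 io, into, integral_sub i1 i2, integral_const_mul,
      integral_inv_add_sq qpos ppos, integral_univ_inv_one_add_sq, sub_zero]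
    have : q ^ 2 * (π / (q * p)) = π * (q / p) := by field_simp
    rw [this, hq, hp, ← Real.sqrt_div (by positivity)]
    have : (1 + ε ^ 2 / Y) / (ε ^ 2 / Y) = Y / ε ^ 2 + 1 := by field_simp
    rw [this]; ring
  have eq : (fun s : ℝ => s * ((b + s * Y) / ((G + 2 * b * s + Y * s ^ 2) *
      (1 + ε ^ 2 * (G + 2 * b * s + Y * s ^ 2))))) = fun s => h (Y * s + b) := by
    ext s
    have e : G + 2 * b * s + Y * s ^ 2 = (1 + (Y * s + b) ^ 2) / Y := by
      rw [eq_div_iff hY.ne']; linear_combination hG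
    have es : s = ((Y * s + b) - b) / Y := by field_simp; ring
    rw [e]
    simp only [hh, ho, hq2, hp2]
    generalize hσ : Y * s + b = σ at *
    have e2 : b + s * Y = σ := by rw [← hσ]; ring
    rw [e2, es]
    have : 1 + σ ^ 2 ≠ 0 := by positivity
    field_simp
    ring
  rw [eq]
  refine ⟨(ih.comp_add_right b).comp_mul_left' hY.ne', ?_⟩
  rw [Measure.integral_comp_mul_left (fun s => h (s + b)), integral_add_right_eq_self h,
    inth, abs_of_pos (by positivity), smul_eq_mul]
  ring

/-- The integral over `s` of the second variation, for `κ = k t`, up to an error of order `ε`. The first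
two summands are interchanged up to sign by `s ↦ -s`, so they amount to an integral over the real
line; the last one is compared with a difference of Cauchy densities. -/
lemma integral_edge_le {b Y G ε κ : ℝ} (hY : 0 < Y) (hG : Y * G = 1 + b ^ 2) (hε : 0 < ε)
    (hκ : 0 < κ) :
    ∫ s in Set.Ioi (0:ℝ), s * (((b + s * Y) / ((G + 2 * b * s + Y * s ^ 2) *
      (1 + ε ^ 2 * (G + 2 * b * s + Y * s ^ 2))) + (s * Y - b) / ((G - 2 * b * s + Y * s ^ 2) *
      (1 + ε ^ 2 * (G - 2 * b * s + Y * s ^ 2)))) -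
      2 * s / ((κ + s ^ 2) * (1 + ε ^ 2 * (G + s ^ 2 * Y)))) ≤
      π * (√κ - 1 / Y) + ε * (π * (1 / (2 * Y * √Y) + G / (2 * √Y))) := by
  obtain ⟨i1, e1⟩ := integral_edge hY hG hε
  set F : ℝ → ℝ := fun s => s * ((b + s * Y) / ((G + 2 * b * s + Y * s ^ 2) *
      (1 + ε ^ 2 * (G + 2 * b * s + Y * s ^ 2)))) with hF
  have Gpos : 0 < G := by
    have : 0 < Y * G := by rw [hG]; positivity
    exact (pos_iff_pos_of_mul_pos this).1 hY
  have hpi := Real.pi_pos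
  set c := √(1 + ε ^ 2 * G) with hc
  set w := √Y with hw
  set r := √κ with hr
  have c2 : c ^ 2 = 1 + ε ^ 2 * G := Real.sq_sqrt (by positivity)
  have w2 : w ^ 2 = Y := Real.sq_sqrt hY.le
  have r2 : r ^ 2 = κ := Real.sq_sqrt hκ.le
  have cpos : 0 < c := Real.sqrt_pos.2 (by positivity)
  have wpos : 0 < w := Real.sqrt_pos.2 hY
  have rpos : 0 < r := Real.sqrt_pos.2 hκ
  have j1 := (integrable_inv_add_sq cpos (mul_pos hε wpos)).const_mul 2
  have j2 := ((integrable_inv_add_sq rpos zero_lt_one).const_mul 2).const_mul κ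
  have i1' : Integrable fun s => F (-s) := i1.comp_neg
  have ia : Integrable fun s => F s + F (-s) := i1.add i1'
  have jd : Integrable fun s => 2 * (1 / (c ^ 2 + (ε * w) ^ 2 * s ^ 2)) -
      κ * (2 * (1 / (r ^ 2 + 1 ^ 2 * s ^ 2))) := j1.sub j2
  have tot : ∫ s in Set.Ioi (0:ℝ), (F s + F (-s)) = ∫ s, F s := by
    rw [integral_add i1.integrableOn i1'.integrableOn, integral_comp_neg_Ioi, neg_zero, add_comm]
    exact intervalIntegral.integral_Iic_add_Ioi i1.integrableOn i1.integrableOn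
  have le : ∀ s ∈ Set.Ioi (0:ℝ), s * (((b + s * Y) / ((G + 2 * b * s + Y * s ^ 2) *
      (1 + ε ^ 2 * (G + 2 * b * s + Y * s ^ 2))) + (s * Y - b) / ((G - 2 * b * s + Y * s ^ 2) *
      (1 + ε ^ 2 * (G - 2 * b * s + Y * s ^ 2)))) -
      2 * s / ((κ + s ^ 2) * (1 + ε ^ 2 * (G + s ^ 2 * Y)))) ≤
      (F s + F (-s)) - (2 * (1 / (c ^ 2 + (ε * w) ^ 2 * s ^ 2)) -
        κ * (2 * (1 / (r ^ 2 + 1 ^ 2 * s ^ 2)))) := by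
    intro s hs
    have e : F s + F (-s) = s * ((b + s * Y) / ((G + 2 * b * s + Y * s ^ 2) *
      (1 + ε ^ 2 * (G + 2 * b * s + Y * s ^ 2))) + (s * Y - b) / ((G - 2 * b * s + Y * s ^ 2) *
      (1 + ε ^ 2 * (G - 2 * b * s + Y * s ^ 2)))) := by
      simp only [hF]
      rw [show G + 2 * b * -s + Y * (-s) ^ 2 = G - 2 * b * s + Y * s ^ 2 by ring]
      ring
    rw [e, c2, r2, mul_pow, w2, one_pow, one_mul, mul_sub]
    refine sub_le_sub_left ?_ _
    have hden : 1 + ε ^ 2 * (G + s ^ 2 * Y) = 1 + ε ^ 2 * G + ε ^ 2 * Y * s ^ 2 := by ring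
    rw [hden]
    have d1 : 1 ≤ 1 + ε ^ 2 * G + ε ^ 2 * Y * s ^ 2 := by
      have : 0 ≤ ε ^ 2 * G + ε ^ 2 * Y * s ^ 2 := by positivity
      linarith
    generalize 1 + ε ^ 2 * G + ε ^ 2 * Y * s ^ 2 = D at *
    have d0 : 0 < D := by linarith
    have d2 : 0 < κ + s ^ 2 := by positivity
    have e3 : s * (2 * s / ((κ + s ^ 2) * D)) = 2 * (1 / D) - κ * (2 * (1 / (κ + s ^ 2))) * (1 / D) := by
      field_simp; ring
    rw [e3]
    have : 1 / D ≤ 1 := (div_le_one d0).2 d1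
    have : κ * (2 * (1 / (κ + s ^ 2))) * (1 / D) ≤ κ * (2 * (1 / (κ + s ^ 2))) * 1 :=
      mul_le_mul_of_nonneg_left this (by positivity)
    linarith
  have ig : IntegrableOn (fun s => (F s + F (-s)) - (2 * (1 / (c ^ 2 + (ε * w) ^ 2 * s ^ 2)) -
        κ * (2 * (1 / (r ^ 2 + 1 ^ 2 * s ^ 2))))) (Set.Ioi (0:ℝ)) :=
    (ia.sub jd).integrableOn
  have val : ∫ s in Set.Ioi (0:ℝ), ((F s + F (-s)) - (2 * (1 / (c ^ 2 + (ε * w) ^ 2 * s ^ 2)) -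
        κ * (2 * (1 / (r ^ 2 + 1 ^ 2 * s ^ 2))))) =
      π / Y * (√(Y / ε ^ 2 + 1) - 1) - (π / (c * (ε * w)) - π * r) := by
    rw [integral_sub ia.integrableOn jd.integrableOn, tot, e1,
      integral_sub j1.integrableOn j2.integrableOn,
      integral_Ioi_inv_add_sq cpos (mul_pos hε wpos), integral_const_mul,
      integral_Ioi_inv_add_sq rpos zero_lt_one]
    have : κ * (π / (r * 1)) = π * r := by rw [← r2]; field_simp
    rw [this]
  have step : ∫ s in Set.Ioi (0:ℝ), s * (((b + s * Y) / ((G + 2 * b * s + Y * s ^ 2) *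
      (1 + ε ^ 2 * (G + 2 * b * s + Y * s ^ 2))) + (s * Y - b) / ((G - 2 * b * s + Y * s ^ 2) *
      (1 + ε ^ 2 * (G - 2 * b * s + Y * s ^ 2)))) -
      2 * s / ((κ + s ^ 2) * (1 + ε ^ 2 * (G + s ^ 2 * Y)))) ≤
      π / Y * (√(Y / ε ^ 2 + 1) - 1) - (π / (c * (ε * w)) - π * r) := by
    rw [← val]
    have hint : IntegrableOn (fun s => s * (((b + s * Y) / ((G + 2 * b * s + Y * s ^ 2) *
      (1 + ε ^ 2 * (G + 2 * b * s + Y * s ^ 2))) + (s * Y - b) / ((G - 2 * b * s + Y * s ^ 2) *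
      (1 + ε ^ 2 * (G - 2 * b * s + Y * s ^ 2)))) -
      2 * s / ((κ + s ^ 2) * (1 + ε ^ 2 * (G + s ^ 2 * Y))))) (Set.Ioi (0:ℝ)) := by
      have im : Integrable fun s : ℝ => s ^ 2 / (κ + s ^ 2) *
          (2 * (1 / (c ^ 2 + (ε * w) ^ 2 * s ^ 2))) := by
        refine j1.bdd_mul (c := 1) ?_ (Filter.Eventually.of_forall fun s => ?_)
        · exact (Continuous.div (by fun_prop) (by fun_prop)
            fun s => by positivity).aestronglyMeasurable
        · rw [Real.norm_eq_abs, abs_of_nonneg (by positivity), div_le_one (by positivity)]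
          linarith
      refine (ia.sub im).integrableOn.congr_fun (fun s _ => ?_) measurableSet_Ioi
      simp only [Pi.sub_apply, hF]
      rw [show G + 2 * b * -s + Y * (-s) ^ 2 = G - 2 * b * s + Y * s ^ 2 by ring, c2, mul_pow, w2,
        show 1 + ε ^ 2 * G + ε ^ 2 * Y * s ^ 2 = 1 + ε ^ 2 * (G + s ^ 2 * Y) by ring, mul_sub]
      congr 1
      · ring
      · have : 1 + ε ^ 2 * (G + s ^ 2 * Y) ≠ 0 := by positivity
        field_simp
    exact setIntegral_mono_on hint ig measurableSet_Ioi le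
  refine step.trans ?_
  have u1 : √(Y / ε ^ 2 + 1) ≤ w / ε + ε / (2 * w) := by
    apply Real.sqrt_le_iff.2 ⟨by positivity, ?_⟩
    have : (w / ε + ε / (2 * w)) ^ 2 = Y / ε ^ 2 + 1 + (ε / (2 * w)) ^ 2 := by
      rw [← w2]; field_simp; ring
    rw [this]; nlinarith [sq_nonneg (ε / (2 * w))]
  have u2 : 1 - ε ^ 2 * G / 2 ≤ 1 / c := by
    have hcle : c ≤ 1 + ε ^ 2 * G / 2 := by nlinarith [sq_nonneg (c - 1)]
    rw [le_div_iff₀ cpos]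
    by_cases h0 : 0 ≤ 1 - ε ^ 2 * G / 2
    · nlinarith [mul_le_mul_of_nonneg_left hcle h0, sq_nonneg (ε ^ 2 * G / 2)]
    · nlinarith
  have v1 := mul_le_mul_of_nonneg_left u1 (show 0 ≤ π / Y by positivity)
  have v2 := mul_le_mul_of_nonneg_left u2 (show 0 ≤ π / (ε * w) by positivity)
  have v3 : π / Y * (w / ε + ε / (2 * w)) = π / (ε * w) + ε * (π * (1 / (2 * Y * w))) := by
    rw [← w2]; field_simp
  have v4 : π / (ε * w) * (1 - ε ^ 2 * G / 2) = π / (ε * w) - ε * (π * (G / (2 * w))) := by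
    field_simp
  have v5 : π / (ε * w) * (1 / c) = π / (c * (ε * w)) := by field_simp
  have v6 : π / Y * 1 = π * (1 / Y) := by ring
  linarith

/-! ### Bounds for the generating function and second order jets -/

lemma detV_smul_uVec (a b φ₀ φ₁ : ℝ) :
    detV (a • uVec φ₀) (b • uVec φ₁) = a * b * Real.sin (φ₁ - φ₀) := by
  simp only [detV, uVec, Prod.smul_fst, Prod.smul_snd, smul_eq_mul, Real.sin_sub]; ring

/-- A functional that is at most `1` on the table bounds the generating function from above. -/
lemma genFun_le {K : Set (ℝ × ℝ)} (hcl : IsClosed K) {S : ℝ → ℝ → ℝ} (hS : IsGenFun K S)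
    {φ₀ φ₁ r₀ r₁ : ℝ} (h : φ₀ < φ₁) (h' : φ₁ < φ₀ + π) (hr₀ : 0 < r₀) (hr₁ : 0 < r₁)
    {M₀ M₁ : ℝ × ℝ} (hM₀ : M₀ = r₀ • uVec φ₀) (hM₁ : M₁ = r₁ • uVec φ₁)
    (f : ℝ × ℝ →ₗ[ℝ] ℝ) (hf : ∀ z ∈ K, f z ≤ 1) (h₀ : 0 < f M₀) (h₁ : 0 < f M₁) :
    S φ₀ φ₁ ≤ detV M₀ M₁ / 2 * (1 / f M₀ * (1 / f M₁)) := by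
  obtain ⟨N₀, N₁, ⟨⟨a, ha, rfl⟩, ⟨b, hb, rfl⟩, hfr, -⟩, hval⟩ := hS φ₀ φ₁ h h'
  have hs : 0 < Real.sin (φ₁ - φ₀) := Real.sin_pos_of_pos_of_lt_pi (by linarith) (by linarith)
  have hm := hf _ (hcl.frontier_subset hfr)
  simp only [map_smul, map_add, smul_eq_mul] at hm
  subst hM₀ hM₁
  simp only [map_smul, smul_eq_mul] at h₀ h₁ ⊢
  have p₀ := (pos_iff_pos_of_mul_pos h₀).1 hr₀
  have p₁ := (pos_iff_pos_of_mul_pos h₁).1 hr₁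
  rw [hval, detV_smul_uVec, detV_smul_uVec, abs_of_pos (by positivity)]
  set P := f (uVec φ₀)
  set Q := f (uVec φ₁)
  have key : (a * P) * (b * Q) ≤ 1 := by
    have : 0 < a * P := by positivity
    have : 0 < b * Q := by positivity
    nlinarith [sq_nonneg (a * P - b * Q)]
  have e : r₀ * r₁ * Real.sin (φ₁ - φ₀) / 2 * (1 / (r₀ * P) * (1 / (r₁ * Q))) =
      Real.sin (φ₁ - φ₀) / 2 / (P * Q) := by field_simp
  rw [e, le_div_iff₀ (by positivity)]
  nlinarith

/-- The generating segment is the one of least area among the segments between the two rays whose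
midpoint lies in the table. -/
lemma le_genFun {K : Set (ℝ × ℝ)} (hconv : Convex ℝ K) (hcl : IsClosed K)
    (h0 : (0 : ℝ × ℝ) ∈ interior K) {S : ℝ → ℝ → ℝ} (hS : IsGenFun K S)
    {φ₀ φ₁ r₀ r₁ : ℝ} (h : φ₀ < φ₁) (h' : φ₁ < φ₀ + π) (hr₀ : 0 < r₀) (hr₁ : 0 < r₁)
    {M₀ M₁ : ℝ × ℝ} (hM₀ : M₀ = r₀ • uVec φ₀) (hM₁ : M₁ = r₁ • uVec φ₁)
    (hmid : (1 / 2 : ℝ) • (M₀ + M₁) ∈ K) :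
    detV M₀ M₁ / 2 ≤ S φ₀ φ₁ := by
  obtain ⟨N₀, N₁, ⟨⟨a, ha, hN₀⟩, ⟨b, hb, hN₁⟩, hfr, hseg⟩, hval⟩ := hS φ₀ φ₁ h h'
  have hs : 0 < Real.sin (φ₁ - φ₀) := Real.sin_pos_of_pos_of_lt_pi (by linarith) (by linarith)
  have hmN := hcl.frontier_subset hfr
  have disj : Disjoint (interior K) (segment ℝ N₀ N₁) := by
    rw [Set.disjoint_left]
    intro z hz hz'
    have : z ∈ segment ℝ N₀ N₁ ∩ K := ⟨hz', interior_subset hz⟩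
    rw [hseg, Set.mem_singleton_iff] at this
    rw [this] at hz
    exact hfr.2 hz
  obtain ⟨f, u, hfu, huf⟩ := geometric_hahn_banach_open hconv.interior isOpen_interior
    (convex_segment N₀ N₁) disj
  have hu : 0 < u := by simpa using hfu 0 h0
  have hfK : ∀ z ∈ K, f z ≤ u := by
    have hcl' : closure (interior K) = K := by
      rw [hconv.closure_interior_eq_closure_of_nonempty_interior ⟨0, h0⟩, hcl.closure_eq]
    intro z hz
    rw [← hcl'] at hz
    exact closure_minimal (fun x hx => (hfu x hx).le)
      (isClosed_le f.continuous continuous_const) hz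
  have e0 := huf _ (left_mem_segment ℝ N₀ N₁)
  have e1 := huf _ (right_mem_segment ℝ N₀ N₁)
  have em := hfK _ hmN
  have em' := hfK _ hmid
  subst hN₀ hN₁ hM₀ hM₁
  simp only [map_smul, map_add, smul_eq_mul] at e0 e1 em em'
  rw [hval, detV_smul_uVec, detV_smul_uVec, abs_of_pos (by positivity)]
  have f0 : a * f (uVec φ₀) = u := by linarith
  have f1 : b * f (uVec φ₁) = u := by linarith
  set p := f (uVec φ₀)
  set q := f (uVec φ₁)
  have pp : 0 < p := (pos_iff_pos_of_mul_pos (by rw [f0]; exact hu)).1 ha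
  have qp : 0 < q := (pos_iff_pos_of_mul_pos (by rw [f1]; exact hu)).1 hb
  have key : (r₀ * p) * (r₁ * q) ≤ (a * p) * (b * q) := by
    rw [f0, f1]
    have : 0 < r₀ * p := by positivity
    have : 0 < r₁ * q := by positivity
    nlinarith [sq_nonneg (r₀ * p - r₁ * q)]
  have : r₀ * r₁ ≤ a * b := by
    have : (r₀ * r₁) * (p * q) ≤ (a * b) * (p * q) := by linarith
    exact le_of_mul_le_mul_right this (by positivity)
  have := mul_le_mul_of_nonneg_right this hs.le
  linarith

/-- `f` is differentiable near `0`, twice differentiable at `0`, and has value `a`, derivative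
`b` and second derivative `c` at `0`. -/
def Jet2 (f : ℝ → ℝ) (a b c : ℝ) : Prop :=
  f 0 = a ∧ ∃ f' : ℝ → ℝ, (∀ᶠ x in nhds 0, HasDerivAt f (f' x) x) ∧ f' 0 = b ∧ HasDerivAt f' c 0

namespace Jet2

lemma congr {f : ℝ → ℝ} {a b c a' c' : ℝ} (hf : Jet2 f a b c) (ha : a = a') (hc : c = c') :
    Jet2 f a' b c' := by
  subst ha hc; exact hf

lemma affine (a b : ℝ) : Jet2 (fun x => a + x * b) a b 0 :=
  ⟨by simp, fun _ => b, Filter.Eventually.of_forall fun x =>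
    (((hasDerivAt_id x).mul_const b).const_add a).congr_deriv (by simp), rfl, hasDerivAt_const _ _⟩

lemma add {f g : ℝ → ℝ} {a b c a' b' c' : ℝ} (hf : Jet2 f a b c) (hg : Jet2 g a' b' c') :
    Jet2 (fun x => f x + g x) (a + a') (b + b') (c + c') := by
  obtain ⟨f0, f', hf', f1, f2⟩ := hf
  obtain ⟨g0, g', hg', g1, g2⟩ := hg
  refine ⟨by simp [f0, g0], fun x => f' x + g' x, ?_, by simp [f1, g1], f2.add g2⟩
  filter_upwards [hf', hg'] with x h1 h2
  exact h1.add h2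

lemma const_mul {f : ℝ → ℝ} {a b c : ℝ} (l : ℝ) (hf : Jet2 f a b c) :
    Jet2 (fun x => l * f x) (l * a) (l * b) (l * c) := by
  obtain ⟨f0, f', hf', f1, f2⟩ := hf
  refine ⟨by simp [f0], fun x => l * f' x, ?_, by simp [f1], f2.const_mul l⟩
  filter_upwards [hf'] with x h1
  exact h1.const_mul l

lemma mul {f g : ℝ → ℝ} {a b c a' b' c' : ℝ} (hf : Jet2 f a b c) (hg : Jet2 g a' b' c') :
    Jet2 (fun x => f x * g x) (a * a') (b * a' + a * b') (c * a' + 2 * b * b' + a * c') := by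
  obtain ⟨f0, f', hf', f1, f2⟩ := hf
  obtain ⟨g0, g', hg', g1, g2⟩ := hg
  have df := hf'.self_of_nhds
  have dg := hg'.self_of_nhds
  refine ⟨by simp [f0, g0], fun x => f' x * g x + f x * g' x, ?_, by simp [f1, g1, f0, g0],
    ((f2.mul dg).add (df.mul g2)).congr_deriv ?_⟩
  · filter_upwards [hf', hg'] with x h1 h2
    exact h1.mul h2
  · rw [f0, g0, f1, g1]; ring

lemma inv {f : ℝ → ℝ} {b c : ℝ} (hf : Jet2 f 1 b c) :
    Jet2 (fun x => 1 / f x) 1 (-b) (2 * b ^ 2 - c) := by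
  obtain ⟨f0, f', hf', f1, f2⟩ := hf
  have df := hf'.self_of_nhds
  have hne : ∀ᶠ x in nhds 0, f x ≠ 0 :=
    df.continuousAt.eventually_ne (by rw [f0]; exact one_ne_zero)
  refine ⟨by simp [f0], fun x => -f' x / f x ^ 2, ?_, by simp [f0, f1],
    (f2.neg.div (df.pow 2) (by simp [f0])).congr_deriv ?_⟩
  · filter_upwards [hf', hne] with x h1 h2
    simp only [one_div]
    exact h1.inv h2
  · simp [f0, f1]; ring

lemma sum {ι : Type*} (s : Finset ι) {f : ι → ℝ → ℝ} {a b c : ι → ℝ}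
    (h : ∀ i, Jet2 (f i) (a i) (b i) (c i)) :
    Jet2 (fun x => ∑ i ∈ s, f i x) (∑ i ∈ s, a i) (∑ i ∈ s, b i) (∑ i ∈ s, c i) := by
  classical
  induction s using Finset.induction_on with
  | empty => simpa using affine 0 0
  | insert i s hi ih =>
    simp only [Finset.sum_insert hi]
    exact (h i).add ih

lemma continuousAt {f : ℝ → ℝ} {a b c : ℝ} (hf : Jet2 f a b c) : ContinuousAt f 0 := by
  obtain ⟨-, f', hf', -, -⟩ := hf
  exact hf'.self_of_nhds.continuousAt

/-- The second derivative at a local minimum is nonnegative. -/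
lemma nonneg {f : ℝ → ℝ} {a b c : ℝ} (hf : Jet2 f a b c) (hmin : IsLocalMin f 0) : 0 ≤ c := by
  have hcont := hf.continuousAt
  obtain ⟨-, f', hf', -, f2⟩ := hf
  by_contra! hc
  have e : deriv f =ᶠ[nhds 0] f' := hf'.mono fun x hx => hx.deriv
  have d2 : deriv (deriv f) 0 = c := by rw [e.deriv_eq, f2.deriv]
  have hmax := isLocalMax_of_deriv_deriv_neg (by rw [d2]; exact hc) hmin.deriv_eq_zero hcont
  have ec : f =ᶠ[nhds 0] fun _ => f 0 := by
    filter_upwards [hmin, hmax] with x h1 h2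
    exact le_antisymm h2 h1
  have := ec.deriv.deriv_eq
  rw [d2] at this
  simp at this
  exact hc.ne this

end Jet2

/-! ### Second variation along an edge -/

/-- The endpoint of `z + (ε w) J z`, where `J` is the rotation by a right angle. -/
def turn (z : ℝ × ℝ) (w ε : ℝ) : ℝ × ℝ := (z.1 + ε * (-(w * z.2)), z.2 + ε * (w * z.1))

namespace Hill

variable {y₁ y₂ g₁ g₂ k Θ : ℝ → ℝ} {P : ℝ}

lemma jet_y (H : Hill y₁ y₂ g₁ g₂ k Θ P) (t δ : ℝ) :
    Jet2 (fun x => y₁ (t + x * δ)) (y₁ t) (g₁ t * δ) (-(k t * y₁ t) * δ * δ) ∧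
    Jet2 (fun x => y₂ (t + x * δ)) (y₂ t) (g₂ t * δ) (-(k t * y₂ t) * δ * δ) := by
  have ha : ∀ x, HasDerivAt (fun x => t + x * δ) δ x := fun x =>
    (((hasDerivAt_id x).mul_const δ).const_add t).congr_deriv (by simp)
  have e : t + 0 * δ = t := by simp
  constructor
  · refine ⟨by simp, fun x => g₁ (t + x * δ) * δ, Filter.Eventually.of_forall fun x =>
      (H.hy₁ _).comp x (ha x), by simp, ?_⟩
    have := ((H.hg₁ (t + 0 * δ)).comp (0:ℝ) (ha 0)).mul_const δ
    rw [e] at this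
    exact this
  · refine ⟨by simp, fun x => g₂ (t + x * δ) * δ, Filter.Eventually.of_forall fun x =>
      (H.hy₂ _).comp x (ha x), by simp, ?_⟩
    have := ((H.hg₂ (t + 0 * δ)).comp (0:ℝ) (ha 0)).mul_const δ
    rw [e] at this
    exact this

lemma YG (H : Hill y₁ y₂ g₁ g₂ k Θ P) (t : ℝ) :
    (y₁ t ^ 2 + y₂ t ^ 2) * (g₁ t ^ 2 + g₂ t ^ 2) = 1 + (y₁ t * g₁ t + y₂ t * g₂ t) ^ 2 := by
  have := H.det t
  have e : (1:ℝ) = (y₁ t * g₂ t - y₂ t * g₁ t) ^ 2 := by rw [this]; norm_num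
  rw [e]; ring

/-- The upper bound for the generating function at the pair of directions of the turned endpoints
of a tangent segment, given by the supporting functional `y (t + ε δ)`. -/
def edgeFun (y₁ y₂ : ℝ → ℝ) (t δ : ℝ) (z₀ z₁ : ℝ × ℝ) (w₀ w₁ ε : ℝ) : ℝ :=
  detV (turn z₀ w₀ ε) (turn z₁ w₁ ε) / 2 *
    (1 / (y₁ (t + ε * δ) * (turn z₀ w₀ ε).1 + y₂ (t + ε * δ) * (turn z₀ w₀ ε).2) *
     (1 / (y₁ (t + ε * δ) * (turn z₁ w₁ ε).1 + y₂ (t + ε * δ) * (turn z₁ w₁ ε).2)))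

lemma tanPt_normSq (t s : ℝ) :
    (tanPt y₁ y₂ g₁ g₂ t s).1 ^ 2 + (tanPt y₁ y₂ g₁ g₂ t s).2 ^ 2 =
      (g₁ t ^ 2 + g₂ t ^ 2) - 2 * (y₁ t * g₁ t + y₂ t * g₂ t) * s +
        (y₁ t ^ 2 + y₂ t ^ 2) * s ^ 2 := by
  simp only [tanPt]; ring

/-- Second variation along a single tangent segment, for the optimal rate `δ` at which the
supporting functional moves along the boundary of the polar body. -/
lemma jet_edge (H : Hill y₁ y₂ g₁ g₂ k Θ P) (t s w₀ w₁ Y b G R₀ R₁ δ : ℝ)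
    (hY : Y = y₁ t ^ 2 + y₂ t ^ 2) (hb : b = y₁ t * g₁ t + y₂ t * g₂ t)
    (hG : G = g₁ t ^ 2 + g₂ t ^ 2) (hR₀ : R₀ = G + 2 * b * s + Y * s ^ 2)
    (hR₁ : R₁ = G - 2 * b * s + Y * s ^ 2)
    (hδ : δ = (w₀ * R₀ + w₁ * R₁) / (2 * (k t + s ^ 2))) :
    ∃ d, Jet2 (edgeFun y₁ y₂ t δ (tanPt y₁ y₂ g₁ g₂ t (-s)) (tanPt y₁ y₂ g₁ g₂ t s) w₀ w₁) s d
      (w₀ ^ 2 * R₀ * (b + s * Y) + w₁ ^ 2 * R₁ * (s * Y - b) -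
        s * (w₀ * R₀ + w₁ * R₁) ^ 2 / (2 * (k t + s ^ 2))) := by
  have hks : 0 < k t + s ^ 2 := by have := H.kpos t; positivity
  obtain ⟨j1, j2⟩ := H.jet_y t δ
  have hdet := H.det t
  have hYG := H.YG t
  rw [← hY, ← hG, ← hb] at hYG
  have pz : ∀ (z : ℝ × ℝ) (w : ℝ), Jet2 (fun ε => y₁ (t + ε * δ) * (turn z w ε).1 +
      y₂ (t + ε * δ) * (turn z w ε).2) _ _ _ := fun z w =>
    (j1.mul (Jet2.affine z.1 (-(w * z.2)))).add (j2.mul (Jet2.affine z.2 (w * z.1)))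
  have q0 := pz (tanPt y₁ y₂ g₁ g₂ t (-s)) w₀
  have q1 := pz (tanPt y₁ y₂ g₁ g₂ t s) w₁
  rw [H.inner_tanPt_self] at q0 q1
  have nu : Jet2 (fun ε => detV (turn (tanPt y₁ y₂ g₁ g₂ t (-s)) w₀ ε)
      (turn (tanPt y₁ y₂ g₁ g₂ t s) w₁ ε) / 2) s ((w₁ - w₀) * (G - s ^ 2 * Y) / 2)
      (2 * s * w₀ * w₁) := by
    have := (Jet2.affine s ((w₁ - w₀) * (G - s ^ 2 * Y) / 2)).add
      ((Jet2.affine 0 1).mul (Jet2.affine 0 (s * w₀ * w₁)))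
    convert this using 1
    · ext ε
      simp only [detV, turn, tanPt, hY, hG]
      linear_combination (s + ε ^ 2 * s * w₀ * w₁) * hdet
    · ring
    · ring
    · ring
  have key := nu.mul (q0.inv.mul q1.inv)
  refine ⟨_, Jet2.congr key (by ring) ?_⟩
  · simp only [tanPt]
    have a0 : g₁ t * δ * (g₂ t - -s * y₂ t) + y₁ t * -(w₀ * (-g₁ t + -s * y₁ t)) +
      (g₂ t * δ * (-g₁ t + -s * y₁ t) + y₂ t * (w₀ * (g₂ t - -s * y₂ t))) =
        -(δ * s) + w₀ * (b + s * Y) := by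
      rw [hb, hY]; linear_combination (-δ * s) * hdet
    have a1 : g₁ t * δ * (g₂ t - s * y₂ t) + y₁ t * -(w₁ * (-g₁ t + s * y₁ t)) +
      (g₂ t * δ * (-g₁ t + s * y₁ t) + y₂ t * (w₁ * (g₂ t - s * y₂ t))) =
        δ * s + w₁ * (b - s * Y) := by
      rw [hb, hY]; linear_combination (δ * s) * hdet
    rw [a0, a1]
    have b0 : -(k t * y₁ t) * δ * δ * (g₂ t - -s * y₂ t) +
        2 * (g₁ t * δ) * -(w₀ * (-g₁ t + -s * y₁ t)) + y₁ t * 0 +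
        (-(k t * y₂ t) * δ * δ * (-g₁ t + -s * y₁ t) +
        2 * (g₂ t * δ) * (w₀ * (g₂ t - -s * y₂ t)) + y₂ t * 0) =
        -(k t * δ ^ 2) + 2 * δ * (w₀ * (G + s * b)) := by
      rw [hb, hG]; linear_combination (-(k t * δ ^ 2)) * hdet
    have b1 : -(k t * y₁ t) * δ * δ * (g₂ t - s * y₂ t) +
        2 * (g₁ t * δ) * -(w₁ * (-g₁ t + s * y₁ t)) + y₁ t * 0 +
        (-(k t * y₂ t) * δ * δ * (-g₁ t + s * y₁ t) +
        2 * (g₂ t * δ) * (w₁ * (g₂ t - s * y₂ t)) + y₂ t * 0) =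
        -(k t * δ ^ 2) + 2 * δ * (w₁ * (G - s * b)) := by
      rw [hb, hG]; linear_combination (-(k t * δ ^ 2)) * hdet
    rw [b0, b1]
    have hd : 2 * (k t + s ^ 2) * δ = w₀ * R₀ + w₁ * R₁ := by rw [hδ]; field_simp
    have e : s * (w₀ * R₀ + w₁ * R₁) ^ 2 / (2 * (k t + s ^ 2)) =
        s * (w₀ * R₀ + w₁ * R₁) * δ := by
      rw [hδ]; field_simp
    rw [e]
    have e2 : s * (w₀ * R₀ + w₁ * R₁) * δ =
        2 * s * (w₀ * R₀ + w₁ * R₁) * δ - 2 * s * (k t + s ^ 2) * δ ^ 2 := by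
      linear_combination (s * δ) * hd
    rw [e2, hR₀, hR₁]
    linear_combination (-2 * s * w₀ * w₁) * hYG

end Hill

/-! ### Second variation along an orbit -/

lemma turn_polar {z : ℝ × ℝ} {ρ φ : ℝ} (hρ : 0 < ρ) (hz : z = ρ • uVec φ) (w ε : ℝ) :
    0 < ρ * √(1 + (ε * w) ^ 2) ∧
      turn z w ε = (ρ * √(1 + (ε * w) ^ 2)) • uVec (φ + Real.arctan (ε * w)) := by
  have h : 0 < √(1 + (ε * w) ^ 2) := Real.sqrt_pos.2 (by positivity)
  refine ⟨by positivity, ?_⟩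
  subst hz
  ext
  · simp only [turn, uVec, Prod.smul_fst, Prod.smul_snd, smul_eq_mul, Real.cos_add,
      Real.cos_arctan, Real.sin_arctan]
    field_simp
    ring
  · simp only [turn, uVec, Prod.smul_fst, Prod.smul_snd, smul_eq_mul, Real.sin_add,
      Real.cos_arctan, Real.sin_arctan]
    field_simp

lemma detV_tanPt {y₁ y₂ g₁ g₂ k Θ : ℝ → ℝ} {P : ℝ} (H : Hill y₁ y₂ g₁ g₂ k Θ P) (t s : ℝ) :
    detV (tanPt y₁ y₂ g₁ g₂ t (-s)) (tanPt y₁ y₂ g₁ g₂ t s) / 2 = s := by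
  simp only [detV, tanPt]
  linear_combination s * H.det t

namespace Hill

variable {y₁ y₂ g₁ g₂ k Θ : ℝ → ℝ} {P : ℝ}

/-- The second derivative of `edgeFun` at the optimal rate, as a function of the base point
`(t, s)` of a tangent segment and the angular velocities `w₀`, `w₁` of its endpoints. -/
def edgeCoef (y₁ y₂ g₁ g₂ k : ℝ → ℝ) (t s w₀ w₁ : ℝ) : ℝ :=
  let Y := y₁ t ^ 2 + y₂ t ^ 2
  let b := y₁ t * g₁ t + y₂ t * g₂ t
  let G := g₁ t ^ 2 + g₂ t ^ 2
  let R₀ := G + 2 * b * s + Y * s ^ 2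
  let R₁ := G - 2 * b * s + Y * s ^ 2
  w₀ ^ 2 * R₀ * (b + s * Y) + w₁ ^ 2 * R₁ * (s * Y - b) -
    s * (w₀ * R₀ + w₁ * R₁) ^ 2 / (2 * (k t + s ^ 2))

/-- The upper bound `edgeFun` touches the generating function along an orbit and has second
derivative `edgeCoef`. -/
lemma exists_edge {H : Hill y₁ y₂ g₁ g₂ k Θ P} {K : Set (ℝ × ℝ)} (hK : H.Table K)
    (hconv : Convex ℝ K) (hcl : IsClosed K) {S : ℝ → ℝ → ℝ} (hS : IsGenFun K S)
    {A₀ A₁ : ℝ × ℝ} {φ₀ φ₁ ρ₀ ρ₁ : ℝ} (hφ : φ₀ < φ₁) (hφ' : φ₁ < φ₀ + π) (hρ₀ : 0 < ρ₀)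
    (hρ₁ : 0 < ρ₁) (hA₀ : A₀ = ρ₀ • uVec φ₀) (hA₁ : A₁ = ρ₁ • uVec φ₁) {t s : ℝ}
    (h₀ : A₀ = tanPt y₁ y₂ g₁ g₂ t (-s)) (h₁ : A₁ = tanPt y₁ y₂ g₁ g₂ t s) (w₀ w₁ : ℝ) :
    ∃ (E : ℝ → ℝ) (d : ℝ), Jet2 E s d (edgeCoef y₁ y₂ g₁ g₂ k t s w₀ w₁) ∧ s ≤ S φ₀ φ₁ ∧
      ∀ᶠ ε in nhds (0:ℝ),
        S (φ₀ + Real.arctan (ε * w₀)) (φ₁ + Real.arctan (ε * w₁)) ≤ E ε := by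
  obtain ⟨d, hd⟩ := H.jet_edge t s w₀ w₁ _ _ _ _ _ _ rfl rfl rfl rfl rfl rfl
  refine ⟨_, d, hd, ?_, ?_⟩
  · have := le_genFun hconv hcl hK.zero hS hφ hφ' hρ₀ hρ₁ hA₀ hA₁ (by
      rw [h₀, h₁]
      convert gamma_mem hK t using 1
      ext <;> simp [tanPt] <;> ring)
    rwa [h₀, h₁, detV_tanPt H] at this
  · rw [← h₀, ← h₁]
    generalize ((w₀ * _ + w₁ * _) / (2 * (k t + s ^ 2)) : ℝ) = δ
    have ca : ∀ w φ : ℝ, ContinuousAt (fun ε : ℝ => φ + Real.arctan (ε * w)) 0 := fun w φ =>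
      (continuous_const.add (Real.continuous_arctan.comp (continuous_id.mul continuous_const))).continuousAt
    have cp : ∀ (z : ℝ × ℝ) (w : ℝ), ContinuousAt (fun ε => y₁ (t + ε * δ) * (turn z w ε).1 +
        y₂ (t + ε * δ) * (turn z w ε).2) 0 := fun z w => by
      have c1 : Continuous fun ε : ℝ => t + ε * δ := by fun_prop
      have c4 : Continuous fun ε => y₁ (t + ε * δ) := H.cy₁.comp c1
      have c5 : Continuous fun ε => y₂ (t + ε * δ) := H.cy₂.comp c1
      have c2 : Continuous fun ε => (turn z w ε).1 := by unfold turn; fun_prop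
      have c3 : Continuous fun ε => (turn z w ε).2 := by unfold turn; fun_prop
      exact ((c4.mul c2).add (c5.mul c3)).continuousAt
    have ev0 : ∀ᶠ ε in nhds (0:ℝ), 0 < y₁ (t + ε * δ) * (turn A₀ w₀ ε).1 +
        y₂ (t + ε * δ) * (turn A₀ w₀ ε).2 := by
      refine (cp A₀ w₀).eventually_const_lt ?_
      rw [h₀]
      simp [turn, H.inner_tanPt_self]
    have ev1 : ∀ᶠ ε in nhds (0:ℝ), 0 < y₁ (t + ε * δ) * (turn A₁ w₁ ε).1 +
        y₂ (t + ε * δ) * (turn A₁ w₁ ε).2 := by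
      refine (cp A₁ w₁).eventually_const_lt ?_
      rw [h₁]
      simp [turn, H.inner_tanPt_self]
    have ev2 : ∀ᶠ ε in nhds (0:ℝ), φ₀ + Real.arctan (ε * w₀) < φ₁ + Real.arctan (ε * w₁) :=
      (ca w₀ φ₀).eventually_lt (ca w₁ φ₁) (by simpa using hφ)
    have ev3 : ∀ᶠ ε in nhds (0:ℝ),
        φ₁ + Real.arctan (ε * w₁) < φ₀ + Real.arctan (ε * w₀) + π :=
      (ca w₁ φ₁).eventually_lt ((ca w₀ φ₀).add continuousAt_const) (by simpa using hφ')
    filter_upwards [ev0, ev1, ev2, ev3] with ε e0 e1 e2 e3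
    obtain ⟨r0, t0⟩ := turn_polar hρ₀ hA₀ w₀ ε
    obtain ⟨r1, t1⟩ := turn_polar hρ₁ hA₁ w₁ ε
    have := genFun_le hcl hS e2 e3 r0 r1 t0 t1
      (y₁ (t + ε * δ) • LinearMap.fst ℝ ℝ ℝ + y₂ (t + ε * δ) • LinearMap.snd ℝ ℝ ℝ)
      (fun z hz => by simpa using (hK.mem z).1 hz _) (by simpa using e0) (by simpa using e1)
    simpa [edgeFun] using this

/-- Second variation of the action along an orbit, for variations of the vertices
`1, …, N`. -/
lemma second_variation {H : Hill y₁ y₂ g₁ g₂ k Θ P} {K : Set (ℝ × ℝ)} (hK : H.Table K)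
    (hconv : Convex ℝ K) (hcl : IsClosed K) {S : ℝ → ℝ → ℝ} (hS : IsGenFun K S)
    {A : ℤ → ℝ × ℝ} {φ : ℤ → ℝ} (hlift : IsPolarLift A φ) (hmin : LocMinConfig S φ)
    {t s : ℤ → ℝ} (h₀ : ∀ n, A n = tanPt y₁ y₂ g₁ g₂ (t n) (-(s n)))
    (h₁ : ∀ n, A (n + 1) = tanPt y₁ y₂ g₁ g₂ (t n) (s n)) (w : ℤ → ℝ) {N : ℤ} (hN : 1 ≤ N)
    (hw0 : w 0 = 0) (hwN : w (N + 1) = 0) :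
    0 ≤ edgeCoef y₁ y₂ g₁ g₂ k (t 0) (s 0) 0 (w 1) +
      ∑ i ∈ Finset.Icc 1 (N - 1), edgeCoef y₁ y₂ g₁ g₂ k (t i) (s i) (w i) (w (i + 1)) +
      edgeCoef y₁ y₂ g₁ g₂ k (t N) (s N) (w N) 0 := by
  obtain ⟨hpol, hφ⟩ := hlift
  choose ρ hρ hA using hpol
  have edge := fun i => exists_edge hK hconv hcl hS (hφ i).1 (hφ i).2 (hρ i) (hρ (i + 1)) (hA i)
    (hA (i + 1)) (h₀ i) (h₁ i) (w i) (w (i + 1))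
  choose E d hE hs hle using edge
  have jet := ((hE 0).add (Jet2.sum (Finset.Icc 1 (N - 1)) hE)).add (hE N)
  rw [zero_add, hw0, hwN] at jet
  refine jet.nonneg ?_
  have htend : Filter.Tendsto (fun ε : ℝ => fun n => φ n + Real.arctan (ε * w n)) (nhds 0)
      (nhds φ) := by
    rw [tendsto_pi_nhds]
    intro n
    have : Continuous fun ε : ℝ => φ n + Real.arctan (ε * w n) :=
      continuous_const.add (Real.continuous_arctan.comp (continuous_id.mul continuous_const))
    simpa using this.tendsto 0
  have hF := htend.eventually (hmin 1 N hN)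
  have hall : ∀ᶠ ε in nhds (0:ℝ), ∀ i ∈ Finset.Icc 1 (N - 1),
      S (φ i + Real.arctan (ε * w i)) (φ (i + 1) + Real.arctan (ε * w (i + 1))) ≤ E i ε :=
    (Filter.eventually_all_finset _).2 fun i _ => hle i
  filter_upwards [hF, hall, hle 0, hle N] with ε e1 e2 e3 e4
  simp only [(hE _).1]
  rw [hw0] at e3
  rw [hwN] at e4
  simp only [mul_zero, Real.arctan_zero, add_zero, zero_add, sub_self] at e1 e3 e4
  have a1 := hs 0
  have a2 := Finset.sum_le_sum fun i (_ : i ∈ Finset.Icc 1 (N - 1)) => hs i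
  have a3 := hs N
  have a4 := Finset.sum_le_sum e2
  rw [zero_add] at a1
  linarith

end Hill

/-! ### Angular velocities and the orbit inequality -/

/-- A relation which is total in both directions has bi-infinite chains through every point. -/
lemma exists_int_seq {X : Type*} {R : X → X → Prop} (h : ∀ x, ∃ y, R x y) (h' : ∀ y, ∃ x, R x y)
    (x₀ : X) : ∃ f : ℤ → X, f 0 = x₀ ∧ ∀ n, R (f n) (f (n + 1)) := by
  choose a ha using h
  choose b hb using h'
  refine ⟨fun n => match n with
    | Int.ofNat n => a^[n] x₀
    | Int.negSucc n => b^[n + 1] x₀, rfl, fun n => ?_⟩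
  rcases n with n | n
  · change R (a^[n] x₀) (a^[n + 1] x₀)
    rw [Function.iterate_succ_apply']
    exact ha _
  · cases n with
    | zero => exact hb x₀
    | succ n =>
      change R (b^[n + 1 + 1] x₀) (b^[n + 1] x₀)
      rw [Function.iterate_succ_apply' b (n + 1)]
      exact hb _

lemma exists_polar {B : ℝ × ℝ} (hB : B ≠ 0) (φ : ℝ) :
    ∃ θ ∈ Set.Ioc (-π) π, ∃ r > (0:ℝ), B = r • uVec (φ + θ) := by
  set c : ℂ := ⟨B.1 * Real.cos φ + B.2 * Real.sin φ, B.2 * Real.cos φ - B.1 * Real.sin φ⟩ with hc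
  have c1 := Complex.norm_mul_cos_arg c
  have c2 := Complex.norm_mul_sin_arg c
  have hre : c.re = B.1 * Real.cos φ + B.2 * Real.sin φ := rfl
  have him : c.im = B.2 * Real.cos φ - B.1 * Real.sin φ := rfl
  rw [hre] at c1
  rw [him] at c2
  have hcs := Real.sin_sq_add_cos_sq φ
  have b1 : B.1 = ‖c‖ * Real.cos (φ + c.arg) := by
    rw [Real.cos_add]
    linear_combination Real.sin φ * c2 - Real.cos φ * c1 - B.1 * hcs
  have b2 : B.2 = ‖c‖ * Real.sin (φ + c.arg) := by
    rw [Real.sin_add]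
    linear_combination -Real.cos φ * c2 - Real.sin φ * c1 - B.2 * hcs
  refine ⟨c.arg, Complex.arg_mem_Ioc c, ‖c‖, ?_, Prod.ext b1 b2⟩
  refine lt_of_le_of_ne (norm_nonneg c) fun h => hB ?_
  rw [← h] at b1 b2
  ext <;> simp [b1, b2]

lemma exists_polar_next {A B : ℝ × ℝ} (h : 0 < detV A B) {φ ρ : ℝ} (hρ : 0 < ρ)
    (hA : A = ρ • uVec φ) : ∃ ψ, (φ < ψ ∧ ψ < φ + π) ∧ ∃ r > (0:ℝ), B = r • uVec ψ := by
  have hB : B ≠ 0 := by rintro rfl; simp [detV] at h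
  obtain ⟨θ, ⟨h1, h2⟩, r, hr, e⟩ := exists_polar hB φ
  rw [hA, e, detV_smul_uVec, add_sub_cancel_left] at h
  have hs : 0 < Real.sin θ := (pos_iff_pos_of_mul_pos h).1 (by positivity)
  refine ⟨φ + θ, ⟨?_, ?_⟩, r, hr, e⟩
  · by_contra! hc
    linarith [Real.sin_nonpos_of_nonpos_of_neg_pi_le (show θ ≤ 0 by linarith) h1.le]
  · refine add_lt_add_right (lt_of_le_of_ne h2 ?_) φ
    rintro rfl
    simp at hs

lemma exists_polar_prev {A B : ℝ × ℝ} (h : 0 < detV A B) {ψ r : ℝ} (hr : 0 < r)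
    (hB : B = r • uVec ψ) : ∃ φ, (φ < ψ ∧ ψ < φ + π) ∧ ∃ ρ > (0:ℝ), A = ρ • uVec φ := by
  have hA : A ≠ 0 := by rintro rfl; simp [detV] at h
  obtain ⟨θ, ⟨h1, h2⟩, ρ, hρ, e⟩ := exists_polar hA ψ
  rw [hB, e, detV_smul_uVec, show ψ - (ψ + θ) = -θ by ring, Real.sin_neg] at h
  have hs : 0 < -Real.sin θ := (pos_iff_pos_of_mul_pos h).1 (by positivity)
  refine ⟨ψ + θ, ⟨?_, by linarith⟩, ρ, hρ, e⟩
  by_contra! hc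
  linarith [Real.sin_nonneg_of_nonneg_of_le_pi (show 0 ≤ θ by linarith) h2]

namespace Hill

variable {y₁ y₂ g₁ g₂ k Θ : ℝ → ℝ} {P : ℝ}

/-- Every point outside the table lies on a complete orbit, which has a lift to polar angles. -/
lemma exists_orbit {H : Hill y₁ y₂ g₁ g₂ k Θ P} {K : Set (ℝ × ℝ)} (hK : H.Table K)
    {T : ℝ × ℝ → ℝ × ℝ} (hT : IsOuterBilliard K T) {A₀ : ℝ × ℝ} (hA₀ : A₀ ∉ K) :
    ∃ (A : ℤ → ℝ × ℝ) (φ : ℤ → ℝ), A 0 = A₀ ∧ (∀ n, A n ∉ K) ∧ (∀ n, A (n + 1) = T (A n)) ∧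
      IsPolarLift A φ := by
  have h0K : ∀ z, z ∉ K → z ≠ 0 := by
    rintro z hz rfl
    exact hz (interior_subset hK.zero)
  have hdet : ∀ t s : ℝ, 0 < s →
      0 < detV (tanPt y₁ y₂ g₁ g₂ t (-s)) (tanPt y₁ y₂ g₁ g₂ t s) := fun t s hs => by
    linarith [detV_tanPt H t s]
  obtain ⟨θ, -, r, hr, e⟩ := exists_polar (h0K _ hA₀) 0
  let X := {p : (ℝ × ℝ) × ℝ // p.1 ∉ K ∧ ∃ ρ > (0:ℝ), p.1 = ρ • uVec p.2}
  let R : X → X → Prop := fun p q =>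
    q.1.1 = T p.1.1 ∧ p.1.2 < q.1.2 ∧ q.1.2 < p.1.2 + π
  have hfwd : ∀ p, ∃ q, R p q := by
    rintro ⟨⟨z, φ⟩, hz, ρ, hρ, hzρ⟩
    obtain ⟨-, t, -, s, hs, hts⟩ := exists_tanPt hK hz
    have hTz := T_tanPt hK hT t hs
    rw [hts] at hTz
    have hd := hdet t s hs
    rw [hts, ← hTz] at hd
    obtain ⟨ψ, h1, h2⟩ := exists_polar_next hd hρ hzρ
    exact ⟨⟨(T z, ψ), (hT z hz).1, h2⟩, rfl, h1⟩
  have hbwd : ∀ q, ∃ p, R p q := by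
    rintro ⟨⟨z, φ⟩, hz, ρ, hρ, hzρ⟩
    obtain ⟨⟨t, -, s, hs, hts⟩, -⟩ := exists_tanPt hK hz
    have hTz := T_tanPt hK hT t hs
    have hd := hdet t s hs
    rw [hts] at hd hTz
    obtain ⟨ψ, h1, h2⟩ := exists_polar_prev hd hρ hzρ
    exact ⟨⟨(tanPt y₁ y₂ g₁ g₂ t (-s), ψ), tanPt_notMem hK t (neg_ne_zero.2 hs.ne'), h2⟩,
      hTz.symm, h1⟩
  obtain ⟨f, hf0, hf⟩ := exists_int_seq hfwd hbwd ⟨(A₀, 0 + θ), hA₀, r, hr, e⟩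
  exact ⟨fun n => (f n).1.1, fun n => (f n).1.2, by simp only [hf0], fun n => (f n).2.1,
    fun n => (hf n).1, fun n => (f n).2.2, fun n => (hf n).2⟩

/-- Contribution of the first vertex of a tangent segment to the second variation, for the
weights `u(A) = (1 + ε² |A|²)^(-1/2)`. -/
def vtxFst (y₁ y₂ g₁ g₂ : ℝ → ℝ) (ε t s : ℝ) : ℝ :=
  let Y := y₁ t ^ 2 + y₂ t ^ 2
  let b := y₁ t * g₁ t + y₂ t * g₂ t
  let G := g₁ t ^ 2 + g₂ t ^ 2
  (b + s * Y) / ((G + 2 * b * s + Y * s ^ 2) * (1 + ε ^ 2 * (G + 2 * b * s + Y * s ^ 2)))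

/-- Contribution of the second vertex of a tangent segment. -/
def vtxSnd (y₁ y₂ g₁ g₂ : ℝ → ℝ) (ε t s : ℝ) : ℝ :=
  let Y := y₁ t ^ 2 + y₂ t ^ 2
  let b := y₁ t * g₁ t + y₂ t * g₂ t
  let G := g₁ t ^ 2 + g₂ t ^ 2
  (s * Y - b) / ((G - 2 * b * s + Y * s ^ 2) * (1 + ε ^ 2 * (G - 2 * b * s + Y * s ^ 2)))

/-- Lower bound for the gain obtained by letting the point of contact move along with the
vertices. -/
def gain (y₁ y₂ g₁ g₂ k : ℝ → ℝ) (ε t s : ℝ) : ℝ :=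
  2 * s / ((k t + s ^ 2) *
    (1 + ε ^ 2 * ((g₁ t ^ 2 + g₂ t ^ 2) + s ^ 2 * (y₁ t ^ 2 + y₂ t ^ 2))))

lemma normSq_pos (H : Hill y₁ y₂ g₁ g₂ k Θ P) (t s : ℝ) :
    0 < (g₁ t ^ 2 + g₂ t ^ 2) - 2 * (y₁ t * g₁ t + y₂ t * g₂ t) * s +
        (y₁ t ^ 2 + y₂ t ^ 2) * s ^ 2 := by
  have hYG := H.YG t
  have hY := H.Ypos t
  refine (pos_iff_pos_of_mul_pos ?_).1 hY
  have : (y₁ t ^ 2 + y₂ t ^ 2) * ((g₁ t ^ 2 + g₂ t ^ 2) - 2 * (y₁ t * g₁ t + y₂ t * g₂ t) * s +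
        (y₁ t ^ 2 + y₂ t ^ 2) * s ^ 2) = 1 + ((y₁ t ^ 2 + y₂ t ^ 2) * s -
        (y₁ t * g₁ t + y₂ t * g₂ t)) ^ 2 := by linear_combination hYG
  rw [this]; positivity

/-- The angular velocity `u(A) / |A|²` as a function of `R = |A|²`. -/
def wgt (ε R : ℝ) : ℝ := 1 / (√(1 + ε ^ 2 * R) * R)

lemma wgt_mul {ε R : ℝ} (hR : 0 < R) : wgt ε R * R = 1 / √(1 + ε ^ 2 * R) := by
  have : 0 < √(1 + ε ^ 2 * R) := Real.sqrt_pos.2 (by positivity)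
  unfold wgt; field_simp

lemma wgt_sq_mul {ε R : ℝ} (hR : 0 < R) : wgt ε R ^ 2 * R = 1 / (R * (1 + ε ^ 2 * R)) := by
  have : 0 < √(1 + ε ^ 2 * R) := Real.sqrt_pos.2 (by positivity)
  have e : √(1 + ε ^ 2 * R) ^ 2 = 1 + ε ^ 2 * R := Real.sq_sqrt (by positivity)
  unfold wgt
  rw [div_pow, mul_pow, e]
  field_simp

lemma normSq_pos' (H : Hill y₁ y₂ g₁ g₂ k Θ P) (t s : ℝ) :
    0 < (g₁ t ^ 2 + g₂ t ^ 2) + 2 * (y₁ t * g₁ t + y₂ t * g₂ t) * s +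
        (y₁ t ^ 2 + y₂ t ^ 2) * s ^ 2 := by
  have := H.normSq_pos t (-s)
  linarith

/-- The last edge of an orbit segment, whose second vertex stays fixed. -/
lemma edgeCoef_fst_le (H : Hill y₁ y₂ g₁ g₂ k Θ P) {ε t s : ℝ} (hs : 0 < s) :
    edgeCoef y₁ y₂ g₁ g₂ k t s (wgt ε ((g₁ t ^ 2 + g₂ t ^ 2) +
      2 * (y₁ t * g₁ t + y₂ t * g₂ t) * s + (y₁ t ^ 2 + y₂ t ^ 2) * s ^ 2)) 0 ≤
      vtxFst y₁ y₂ g₁ g₂ ε t s := by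
  have hR := H.normSq_pos' t s
  have hk := H.kpos t
  simp only [edgeCoef, vtxFst]
  rw [wgt_sq_mul hR, wgt_mul hR, div_eq_mul_one_div (_ + s * _)]
  have : 0 ≤ s * (1 / √(1 + ε ^ 2 * ((g₁ t ^ 2 + g₂ t ^ 2) +
      2 * (y₁ t * g₁ t + y₂ t * g₂ t) * s + (y₁ t ^ 2 + y₂ t ^ 2) * s ^ 2)) + 0 *
      ((g₁ t ^ 2 + g₂ t ^ 2) -
      2 * (y₁ t * g₁ t + y₂ t * g₂ t) * s + (y₁ t ^ 2 + y₂ t ^ 2) * s ^ 2)) ^ 2 /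
      (2 * (k t + s ^ 2)) := by positivity
  linarith

/-- The first edge of an orbit segment, whose first vertex stays fixed. -/
lemma edgeCoef_snd_le (H : Hill y₁ y₂ g₁ g₂ k Θ P) {ε t s : ℝ} (hs : 0 < s) :
    edgeCoef y₁ y₂ g₁ g₂ k t s 0 (wgt ε ((g₁ t ^ 2 + g₂ t ^ 2) -
      2 * (y₁ t * g₁ t + y₂ t * g₂ t) * s + (y₁ t ^ 2 + y₂ t ^ 2) * s ^ 2)) ≤
      vtxSnd y₁ y₂ g₁ g₂ ε t s := by
  have hR := H.normSq_pos t s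
  have hk := H.kpos t
  simp only [edgeCoef, vtxSnd]
  rw [wgt_sq_mul hR, wgt_mul hR, div_eq_mul_one_div (s * _ - _)]
  have : 0 ≤ s * (0 * ((g₁ t ^ 2 + g₂ t ^ 2) +
      2 * (y₁ t * g₁ t + y₂ t * g₂ t) * s + (y₁ t ^ 2 + y₂ t ^ 2) * s ^ 2) +
      1 / √(1 + ε ^ 2 * ((g₁ t ^ 2 + g₂ t ^ 2) -
      2 * (y₁ t * g₁ t + y₂ t * g₂ t) * s + (y₁ t ^ 2 + y₂ t ^ 2) * s ^ 2))) ^ 2 /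
      (2 * (k t + s ^ 2)) := by positivity
  linarith

/-- The convexity inequality for `x ↦ x ^ (-1/2)`, squared. -/
lemma inv_sqrt_add_sq_ge {X Z : ℝ} (hX : 0 < X) (hZ : 0 < Z) :
    4 / ((X + Z) / 2) ≤ (1 / √X + 1 / √Z) ^ 2 := by
  have hx := Real.sqrt_pos.2 hX
  have hz := Real.sqrt_pos.2 hZ
  have ex : √X ^ 2 = X := Real.sq_sqrt hX.le
  have ez : √Z ^ 2 = Z := Real.sq_sqrt hZ.le
  generalize √X = x at *
  generalize √Z = z at *
  subst ex ez
  have h1 : 4 / ((x ^ 2 + z ^ 2) / 2) ≤ 4 / (x * z) := by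
    apply div_le_div_of_nonneg_left (by norm_num) (by positivity)
    nlinarith [sq_nonneg (x - z)]
  have h2 : (1 / x + 1 / z) ^ 2 = 4 / (x * z) + (1 / x - 1 / z) ^ 2 := by field_simp; ring
  rw [h2]
  nlinarith [sq_nonneg (1 / x - 1 / z)]

/-- An inner edge of an orbit segment. The convexity inequality replaces the two squared lengths
in the last term by their mean `G + s ^ 2 Y`, which is even in `s`. -/
lemma edgeCoef_le (H : Hill y₁ y₂ g₁ g₂ k Θ P) {ε t s : ℝ} (hs : 0 < s) :
    edgeCoef y₁ y₂ g₁ g₂ k t s (wgt ε ((g₁ t ^ 2 + g₂ t ^ 2) +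
      2 * (y₁ t * g₁ t + y₂ t * g₂ t) * s + (y₁ t ^ 2 + y₂ t ^ 2) * s ^ 2))
      (wgt ε ((g₁ t ^ 2 + g₂ t ^ 2) -
      2 * (y₁ t * g₁ t + y₂ t * g₂ t) * s + (y₁ t ^ 2 + y₂ t ^ 2) * s ^ 2)) ≤
      vtxFst y₁ y₂ g₁ g₂ ε t s + vtxSnd y₁ y₂ g₁ g₂ ε t s - gain y₁ y₂ g₁ g₂ k ε t s := by
  have hR := H.normSq_pos t s
  have hR' := H.normSq_pos' t s
  have hk := H.kpos t
  simp only [edgeCoef, vtxSnd, vtxFst, gain]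
  rw [wgt_sq_mul hR, wgt_mul hR, wgt_sq_mul hR', wgt_mul hR', div_eq_mul_one_div (s * _ - _),
    div_eq_mul_one_div (_ + s * _)]
  have := inv_sqrt_add_sq_ge (X := 1 + ε ^ 2 * ((g₁ t ^ 2 + g₂ t ^ 2) +
      2 * (y₁ t * g₁ t + y₂ t * g₂ t) * s + (y₁ t ^ 2 + y₂ t ^ 2) * s ^ 2))
      (Z := 1 + ε ^ 2 * ((g₁ t ^ 2 + g₂ t ^ 2) -
      2 * (y₁ t * g₁ t + y₂ t * g₂ t) * s + (y₁ t ^ 2 + y₂ t ^ 2) * s ^ 2))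
      (by positivity) (by positivity)
  rw [show (1 + ε ^ 2 * ((g₁ t ^ 2 + g₂ t ^ 2) +
      2 * (y₁ t * g₁ t + y₂ t * g₂ t) * s + (y₁ t ^ 2 + y₂ t ^ 2) * s ^ 2) +
      (1 + ε ^ 2 * ((g₁ t ^ 2 + g₂ t ^ 2) -
      2 * (y₁ t * g₁ t + y₂ t * g₂ t) * s + (y₁ t ^ 2 + y₂ t ^ 2) * s ^ 2))) / 2 =
      1 + ε ^ 2 * ((g₁ t ^ 2 + g₂ t ^ 2) + s ^ 2 * (y₁ t ^ 2 + y₂ t ^ 2)) by ring] at this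
  have hD : 0 < 1 + ε ^ 2 * ((g₁ t ^ 2 + g₂ t ^ 2) + s ^ 2 * (y₁ t ^ 2 + y₂ t ^ 2)) := by
    positivity
  generalize 1 + ε ^ 2 * ((g₁ t ^ 2 + g₂ t ^ 2) + s ^ 2 * (y₁ t ^ 2 + y₂ t ^ 2)) = D at *
  have h2 := mul_le_mul_of_nonneg_left this (show 0 ≤ s / (2 * (k t + s ^ 2)) by positivity)
  have e1 : s / (2 * (k t + s ^ 2)) * (4 / D) = 2 * s / ((k t + s ^ 2) * D) := by
    field_simp; ring
  rw [e1, div_mul_eq_mul_div] at h2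
  linarith

/-- The orbit inequality in the coordinates `(t, s)`: here `E` returns the coordinates of a
point with respect to the tangent segment that starts there. -/
lemma orbit_ineq {H : Hill y₁ y₂ g₁ g₂ k Θ P} {K : Set (ℝ × ℝ)} (hK : H.Table K)
    (hconv : Convex ℝ K) (hcl : IsClosed K) {S : ℝ → ℝ → ℝ} (hS : IsGenFun K S)
    {T : ℝ × ℝ → ℝ × ℝ} (hT : IsOuterBilliard K T) (hmin : AllOrbitsLocMin K T S)
    {E : ℝ × ℝ → ℝ × ℝ}
    (hE : ∀ z, z ∉ K → 0 < (E z).2 ∧ tanPt y₁ y₂ g₁ g₂ (E z).1 (-(E z).2) = z) (ε : ℝ)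
    {ω : ℕ → ℝ × ℝ} {A₀ : ℝ × ℝ} (hA₀ : A₀ ∉ K) (hω₀ : ω 0 = E A₀)
    (hω : ∀ n, ω (n + 1) = E (tanPt y₁ y₂ g₁ g₂ (ω n).1 (ω n).2)) (m : ℕ) :
    0 ≤ vtxSnd y₁ y₂ g₁ g₂ ε (ω 0).1 (ω 0).2 +
      ∑ n ∈ Finset.Icc 1 m, (vtxFst y₁ y₂ g₁ g₂ ε (ω n).1 (ω n).2 +
        vtxSnd y₁ y₂ g₁ g₂ ε (ω n).1 (ω n).2 - gain y₁ y₂ g₁ g₂ k ε (ω n).1 (ω n).2) +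
      vtxFst y₁ y₂ g₁ g₂ ε (ω (m + 1)).1 (ω (m + 1)).2 := by
  obtain ⟨A, φ, hA0, hAK, hAT, hlift⟩ := exists_orbit hK hT hA₀
  have hs : ∀ n, 0 < (E (A n)).2 := fun n => (hE _ (hAK n)).1
  have h₀ : ∀ n, A n = tanPt y₁ y₂ g₁ g₂ (E (A n)).1 (-(E (A n)).2) :=
    fun n => (hE _ (hAK n)).2.symm
  have h₁ : ∀ n, A (n + 1) = tanPt y₁ y₂ g₁ g₂ (E (A n)).1 (E (A n)).2 := fun n => by
    rw [hAT, ← T_tanPt hK hT _ (hs n), ← h₀]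
  have hωA : ∀ n : ℕ, ω n = E (A n) := by
    intro n
    induction n with
    | zero => rw [hω₀, Int.ofNat_zero, hA0]
    | succ n ih => rw [hω, ih, ← h₁, Nat.cast_succ]
  set r : ℤ → ℝ := fun n => (A n).1 ^ 2 + (A n).2 ^ 2 with hr
  have r₀ : ∀ n, r n = (g₁ (E (A n)).1 ^ 2 + g₂ (E (A n)).1 ^ 2) +
      2 * (y₁ (E (A n)).1 * g₁ (E (A n)).1 + y₂ (E (A n)).1 * g₂ (E (A n)).1) * (E (A n)).2 +
      (y₁ (E (A n)).1 ^ 2 + y₂ (E (A n)).1 ^ 2) * (E (A n)).2 ^ 2 := fun n => by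
    calc
      r n = (tanPt y₁ y₂ g₁ g₂ (E (A n)).1 (-(E (A n)).2)).1 ^ 2 +
          (tanPt y₁ y₂ g₁ g₂ (E (A n)).1 (-(E (A n)).2)).2 ^ 2 := by
        rw [(hE _ (hAK n)).2]
      _ = _ := by rw [tanPt_normSq]; ring
  have r₁ : ∀ n, r (n + 1) = (g₁ (E (A n)).1 ^ 2 + g₂ (E (A n)).1 ^ 2) -
      2 * (y₁ (E (A n)).1 * g₁ (E (A n)).1 + y₂ (E (A n)).1 * g₂ (E (A n)).1) * (E (A n)).2 +
      (y₁ (E (A n)).1 ^ 2 + y₂ (E (A n)).1 ^ 2) * (E (A n)).2 ^ 2 := fun n => by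
    simp only [hr]
    rw [h₁ n]
    exact tanPt_normSq _ _
  have key := second_variation hK hconv hcl hS hlift (hmin A hAK hAT φ hlift) h₀ h₁
    (fun n => if 1 ≤ n ∧ n ≤ (m:ℤ) + 1 then wgt ε (r n) else 0) (N := (m:ℤ) + 1) (by omega)
    (by simp) (by simp)
  have b₀ := H.edgeCoef_snd_le (ε := ε) (t := (E (A 0)).1) (hs 0)
  rw [← r₁, zero_add] at b₀
  have bN := H.edgeCoef_fst_le (ε := ε) (t := (E (A (m + 1))).1) (hs (m + 1))
  rw [← r₀] at bN
  have bi : ∀ n : ℤ, edgeCoef y₁ y₂ g₁ g₂ k (E (A n)).1 (E (A n)).2 (wgt ε (r n))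
      (wgt ε (r (n + 1))) ≤ vtxFst y₁ y₂ g₁ g₂ ε (E (A n)).1 (E (A n)).2 +
        vtxSnd y₁ y₂ g₁ g₂ ε (E (A n)).1 (E (A n)).2 -
        gain y₁ y₂ g₁ g₂ k ε (E (A n)).1 (E (A n)).2 := fun n => by
    rw [r₀, r₁]; exact H.edgeCoef_le (hs n)
  have hsum : ∑ i ∈ Finset.Icc (1:ℤ) (((m:ℤ) + 1) - 1), edgeCoef y₁ y₂ g₁ g₂ k (E (A i)).1
      (E (A i)).2 (if 1 ≤ i ∧ i ≤ (m:ℤ) + 1 then wgt ε (r i) else 0)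
      (if 1 ≤ i + 1 ∧ i + 1 ≤ (m:ℤ) + 1 then wgt ε (r (i + 1)) else 0) ≤
      ∑ n ∈ Finset.Icc 1 m, (vtxFst y₁ y₂ g₁ g₂ ε (ω n).1 (ω n).2 +
        vtxSnd y₁ y₂ g₁ g₂ ε (ω n).1 (ω n).2 - gain y₁ y₂ g₁ g₂ k ε (ω n).1 (ω n).2) := by
    rw [add_sub_cancel_right, show Finset.Icc (1:ℤ) (m:ℤ) =
      (Finset.Icc 1 m).image (fun n : ℕ => (n:ℤ)) from
        by
          ext z
          simp only [Finset.mem_image, Finset.mem_Icc]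
          exact ⟨fun h => ⟨z.toNat, by omega, by omega⟩, by rintro ⟨a, h, rfl⟩; omega⟩,
      Finset.sum_image (fun a _ b _ h => by simpa using h)]
    refine Finset.sum_le_sum fun n hn => ?_
    rw [Finset.mem_Icc] at hn
    rw [if_pos (by omega), if_pos (by omega), hωA]
    exact bi n
  have e0 : ω 0 = E (A 0) := by simpa using hωA 0
  have eN : ω (m + 1) = E (A (m + 1)) := by simpa using hωA (m + 1)
  rw [e0, eN]
  rw [if_pos (show (1:ℤ) ≤ 1 ∧ (1:ℤ) ≤ m + 1 by omega),
    if_pos (show (1:ℤ) ≤ m + 1 ∧ (m:ℤ) + 1 ≤ m + 1 by omega)] at key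
  linarith

end Hill

/-! ### The invariant area form -/

/-- Averaging a telescoping-type inequality over a measure preserving map: the boundary terms
disappear in the limit of long orbit segments. -/
lemma integral_nonneg_of_orbits {α : Type*} [MeasurableSpace α] {μ : Measure α} {N : α → α}
    (hN : MeasurePreserving N μ μ) {a b c : α → ℝ} (ha : Integrable a μ) (hb : Integrable b μ)
    (hc : Integrable c μ)
    (h : ∀ᵐ p ∂μ, ∀ m, 0 ≤ b p + ∑ n ∈ Finset.Icc 1 m, c (N^[n] p) + a (N^[m + 1] p)) :
    0 ≤ ∫ p, c p ∂μ := by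
  have hi : ∀ {f : α → ℝ}, Integrable f μ → ∀ n, Integrable (fun p => f (N^[n] p)) μ :=
    fun hf n => (hN.iterate n).integrable_comp_of_integrable hf
  have he : ∀ {f : α → ℝ}, Integrable f μ → ∀ n, ∫ p, f (N^[n] p) ∂μ = ∫ p, f p ∂μ := by
    intro f hf n
    have hn := hN.iterate n
    rw [← integral_map hn.measurable.aemeasurable
      (by rw [hn.map_eq]; exact hf.aestronglyMeasurable), hn.map_eq]
  have key : ∀ m : ℕ, 0 ≤ ∫ p, b p ∂μ + m * ∫ p, c p ∂μ + ∫ p, a p ∂μ := by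
    intro m
    have h0 : 0 ≤ ∫ p, (b p + ∑ n ∈ Finset.Icc 1 m, c (N^[n] p) + a (N^[m + 1] p)) ∂μ :=
      integral_nonneg_of_ae (h.mono fun p hp => hp m)
    have hm : Integrable (fun p => a (N^[m + 1] p)) μ := hi ha _
    have hs : Integrable (fun p => ∑ n ∈ Finset.Icc 1 m, c (N^[n] p)) μ :=
      integrable_finsetSum _ fun n _ => hi hc n
    have hbs : Integrable (fun p => b p + ∑ n ∈ Finset.Icc 1 m, c (N^[n] p)) μ := hb.add hs
    rw [integral_add hbs hm, integral_add hb hs, integral_finsetSum _ fun n _ => hi hc n, he ha] at h0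
    simpa [he hc] using h0
  by_contra! hneg
  obtain ⟨m, hm⟩ := exists_nat_gt ((∫ p, b p ∂μ + ∫ p, a p ∂μ) / (-∫ p, c p ∂μ))
  rw [div_lt_iff₀ (by linarith)] at hm
  linarith [key m]

namespace Hill

variable {y₁ y₂ g₁ g₂ k Θ : ℝ → ℝ} {P : ℝ}

/-- The coordinate domain of the exterior of the table: `t` is the parameter of the tangent line
through the given point, and `s` the distance along it in units of `|y t|`. -/
def dom (P : ℝ) : Set (ℝ × ℝ) := Set.Ioc 0 P ×ˢ Set.Ioi 0

/-- The area form of the exterior of the table in the coordinates `(t, s)`. -/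
def areaM (P : ℝ) : Measure (ℝ × ℝ) :=
  (volume.restrict (dom P)).withDensity fun p => ENNReal.ofReal |p.2|

lemma measurableSet_dom (P : ℝ) : MeasurableSet (dom P) := measurableSet_Ioc.prod measurableSet_Ioi

lemma hasFDerivAt_tanPt (H : Hill y₁ y₂ g₁ g₂ k Θ P) (σ : ℝ) (p : ℝ × ℝ) :
    HasFDerivAt (fun p : ℝ × ℝ => tanPt y₁ y₂ g₁ g₂ p.1 (σ * p.2))
      (mat2 (-(k p.1 * y₂ p.1) - σ * p.2 * g₂ p.1) (-(σ * y₂ p.1))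
        (k p.1 * y₁ p.1 + σ * p.2 * g₁ p.1) (σ * y₁ p.1)) p := by
  have h1 : HasFDerivAt (fun p : ℝ × ℝ => p.1) (ContinuousLinearMap.fst ℝ ℝ ℝ) p :=
    hasFDerivAt_fst
  have h2 : HasFDerivAt (fun p : ℝ × ℝ => σ * p.2) (σ • ContinuousLinearMap.snd ℝ ℝ ℝ) p :=
    hasFDerivAt_snd.const_mul σ
  have a1 := (H.hy₁ p.1).comp_hasFDerivAt p h1
  have a2 := (H.hy₂ p.1).comp_hasFDerivAt p h1
  have a3 := (H.hg₁ p.1).comp_hasFDerivAt p h1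
  have a4 := (H.hg₂ p.1).comp_hasFDerivAt p h1
  refine ((a4.sub (h2.mul a2)).prodMk (a3.neg.add (h2.mul a1))).congr_fderiv ?_
  ext <;> simp [mat2_apply] <;> ring

lemma measurable_tanPt (H : Hill y₁ y₂ g₁ g₂ k Θ P) (σ : ℝ) :
    Measurable (fun p : ℝ × ℝ => tanPt y₁ y₂ g₁ g₂ p.1 (σ * p.2)) :=
  (continuous_iff_continuousAt.2 fun p => (H.hasFDerivAt_tanPt σ p).continuousAt).measurable

lemma injOn_tanPt (H : Hill y₁ y₂ g₁ g₂ k Θ P) {σ : ℝ} (hσ : σ = 1 ∨ σ = -1) :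
    Set.InjOn (fun p : ℝ × ℝ => tanPt y₁ y₂ g₁ g₂ p.1 (σ * p.2)) (dom P) := by
  rintro ⟨t, s⟩ ⟨ht, hs⟩ ⟨t', s'⟩ ⟨ht', hs'⟩ h
  simp only [Set.mem_Ioi] at hs hs' h
  have hP := H.Ppos
  have hss : s = s' ∧ ∃ n : ℤ, t = t' + n * P := by
    rcases hσ with rfl | rfl
    · simpa using H.tanPt_inj (Or.inl ⟨by linarith, by linarith⟩) h
    · simpa using H.tanPt_inj (Or.inr ⟨by linarith, by linarith⟩) h
  obtain ⟨rfl, n, rfl⟩ := hss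
  simp only [Set.mem_Ioc] at ht ht'
  have h1 : (n:ℝ) < 1 := by
    by_contra! hc; nlinarith
  have h2 : -1 < (n:ℝ) := by
    by_contra! hc; nlinarith
  have : n = 0 := by
    have : n < 1 := by exact_mod_cast h1
    have : -1 < n := by exact_mod_cast h2
    omega
  simp [this]

lemma image_tanPt {H : Hill y₁ y₂ g₁ g₂ k Θ P} {K : Set (ℝ × ℝ)} (hK : H.Table K) {σ : ℝ}
    (hσ : σ = 1 ∨ σ = -1) :
    (fun p : ℝ × ℝ => tanPt y₁ y₂ g₁ g₂ p.1 (σ * p.2)) '' dom P = Kᶜ := by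
  ext z
  constructor
  · rintro ⟨⟨t, s⟩, ⟨-, hs⟩, rfl⟩
    simp only [Set.mem_Ioi] at hs
    refine tanPt_notMem hK _ (mul_ne_zero ?_ hs.ne')
    rcases hσ with rfl | rfl <;> norm_num
  · intro hz
    obtain ⟨⟨t, ht, s, hs, e⟩, ⟨t', ht', s', hs', e'⟩⟩ := exists_tanPt hK hz
    rcases hσ with rfl | rfl
    · exact ⟨(t, s), ⟨ht, hs⟩, by simpa using e⟩
    · exact ⟨(t', s'), ⟨ht', hs'⟩, by simpa using e'⟩

/-- For both orientations `σ` the Jacobian determinant of the parametrization is `-s`. -/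
lemma map_tanPt {H : Hill y₁ y₂ g₁ g₂ k Θ P} {K : Set (ℝ × ℝ)} (hK : H.Table K) {σ : ℝ}
    (hσ : σ = 1 ∨ σ = -1) :
    (areaM P).map (fun p : ℝ × ℝ => tanPt y₁ y₂ g₁ g₂ p.1 (σ * p.2)) = volume.restrict Kᶜ := by
  have := map_withDensity_abs_det_fderiv_eq_addHaar (volume : Measure (ℝ × ℝ))
    (measurableSet_dom P).nullMeasurableSet (fun p _ => (H.hasFDerivAt_tanPt σ p).hasFDerivWithinAt)
    (H.injOn_tanPt hσ)
  rw [image_tanPt hK hσ] at this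
  rw [← this, areaM]
  congr 2
  ext p
  congr 1
  rw [mat2_det]
  have h2 : σ ^ 2 = 1 := by rcases hσ with rfl | rfl <;> norm_num
  rw [show (-(k p.1 * y₂ p.1) - σ * p.2 * g₂ p.1) * (σ * y₁ p.1) -
    -(σ * y₂ p.1) * (k p.1 * y₁ p.1 + σ * p.2 * g₁ p.1) = -p.2 by
      linear_combination (-p.2 * (y₁ p.1 * g₂ p.1 - y₂ p.1 * g₁ p.1)) * h2 - p.2 * H.det p.1,
    abs_neg]

/-- A measurable inverse of the parametrization `(t, s) ↦ tanPt t (-s)` of the exterior. -/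
lemma exists_coord {H : Hill y₁ y₂ g₁ g₂ k Θ P} {K : Set (ℝ × ℝ)} (hK : H.Table K) :
    ∃ E : ℝ × ℝ → ℝ × ℝ, Measurable E ∧ (∀ p ∈ dom P, E (tanPt y₁ y₂ g₁ g₂ p.1 (-p.2)) = p) ∧
      ∀ z, z ∉ K → 0 < (E z).2 ∧ tanPt y₁ y₂ g₁ g₂ (E z).1 (-(E z).2) = z := by
  have hemb := measurableEmbedding_of_fderivWithin (measurableSet_dom P)
    (fun p _ => (H.hasFDerivAt_tanPt (-1) p).hasFDerivWithinAt) (H.injOn_tanPt (Or.inr rfl))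
  obtain ⟨E, hEm, hE⟩ := hemb.exists_measurable_extend measurable_subtype_coe
    (fun _ => ⟨(0, 0)⟩)
  have h1 : ∀ p ∈ dom P, E (tanPt y₁ y₂ g₁ g₂ p.1 (-p.2)) = p := fun p hp => by
    simpa using congrFun hE ⟨p, hp⟩
  refine ⟨E, hEm, h1, fun z hz => ?_⟩
  obtain ⟨-, t, ht, s, hs, rfl⟩ := exists_tanPt hK hz
  have := h1 (t, s) ⟨ht, hs⟩
  simp only at this
  rw [this]
  exact ⟨hs, rfl⟩

/-- In the coordinates `(t, s)` the outer billiard map preserves the area form. -/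
lemma measurePreserving_next {H : Hill y₁ y₂ g₁ g₂ k Θ P} {K : Set (ℝ × ℝ)} (hK : H.Table K)
    {E : ℝ × ℝ → ℝ × ℝ} (hEm : Measurable E)
    (hE : ∀ p ∈ dom P, E (tanPt y₁ y₂ g₁ g₂ p.1 (-p.2)) = p) :
    MeasurePreserving (fun p : ℝ × ℝ => E (tanPt y₁ y₂ g₁ g₂ p.1 p.2)) (areaM P) (areaM P) := by
  have m1 := H.measurable_tanPt 1
  have m2 := H.measurable_tanPt (-1)
  have e1 := map_tanPt hK (σ := 1) (Or.inl rfl)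
  have e2 := map_tanPt hK (σ := -1) (Or.inr rfl)
  simp only [one_mul, neg_mul] at m1 m2 e1 e2
  refine ⟨hEm.comp m1, ?_⟩
  have := Measure.map_map (μ := areaM P) hEm m1
  rw [e1, ← e2, Measure.map_map hEm m2] at this
  change (areaM P).map (E ∘ fun p : ℝ × ℝ => tanPt y₁ y₂ g₁ g₂ p.1 p.2) = _
  rw [← this]
  have hae : (E ∘ fun p : ℝ × ℝ => tanPt y₁ y₂ g₁ g₂ p.1 (-p.2)) =ᵐ[areaM P] id :=
    (withDensity_absolutelyContinuous _ _).ae_le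
      ((ae_restrict_iff' (measurableSet_dom P)).2 (Filter.Eventually.of_forall hE))
  rw [Measure.map_congr hae, Measure.map_id]

end Hill

/-! ### Averaging over the exterior -/

namespace Hill

variable {y₁ y₂ g₁ g₂ k Θ : ℝ → ℝ} {P : ℝ}

lemma vtxSnd_eq (t s ε : ℝ) :
    vtxSnd y₁ y₂ g₁ g₂ ε t s = -vtxFst y₁ y₂ g₁ g₂ ε t (-s) := by
  simp only [vtxSnd, vtxFst, ← neg_div]
  congr 1 <;> ring

/-- Decay in `s` of the contribution of a vertex, with constants continuous in `t`. -/
lemma bound_aux {b Y G ε s : ℝ} (hY : 0 < Y) (hG : Y * G = 1 + b ^ 2) (hε : 0 < ε) :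
    |s * ((b + s * Y) / ((G + 2 * b * s + Y * s ^ 2) *
      (1 + ε ^ 2 * (G + 2 * b * s + Y * s ^ 2))))| ≤
      (1 + |b|) * (1 + 2 * b ^ 2 / Y ^ 2 + 2 / (Y * ε ^ 2)) * (1 + s ^ 2)⁻¹ := by
  have hYR : Y * (G + 2 * b * s + Y * s ^ 2) = 1 + (b + s * Y) ^ 2 := by linear_combination hG
  set R := G + 2 * b * s + Y * s ^ 2 with hR
  set u := b + s * Y with hu
  have hR0 : 0 < R := (pos_iff_pos_of_mul_pos (by rw [hYR]; positivity)).1 hY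
  have h1 : |s * u| ≤ (1 + |b|) * R := by
    have e : Y * (s * u) = u * u - b * u := by rw [hu]; ring
    have h2 : |Y * (s * u)| ≤ Y * ((1 + |b|) * R) := by
      rw [e, show Y * ((1 + |b|) * R) = (1 + |b|) * (1 + u ^ 2) by rw [← hYR]; ring]
      calc |u * u - b * u| ≤ |u * u| + |b * u| := abs_sub _ _
        _ = |u| ^ 2 + |b| * |u| := by rw [abs_mul, abs_mul]; ring
        _ ≤ (1 + |b|) * (1 + |u| ^ 2) := by
          nlinarith [mul_nonneg (abs_nonneg b) (sq_nonneg (|u| - 1)), abs_nonneg b, abs_nonneg u,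
            mul_nonneg (abs_nonneg b) (sq_nonneg |u|)]
        _ = _ := by rw [sq_abs]
    rw [abs_mul, abs_of_pos hY] at h2
    exact le_of_mul_le_mul_left h2 hY
  have h2 : 1 + s ^ 2 ≤ (1 + 2 * b ^ 2 / Y ^ 2 + 2 / (Y * ε ^ 2)) * (1 + ε ^ 2 * R) := by
    have e1 : s ^ 2 ≤ 2 * b ^ 2 / Y ^ 2 + 2 * R / Y := by
      rw [show 2 * b ^ 2 / Y ^ 2 + 2 * R / Y = (2 * b ^ 2 + 2 * (Y * R)) / Y ^ 2 by field_simp,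
        le_div_iff₀ (by positivity), hYR]
      nlinarith [sq_nonneg (u + b)]
    have e2 : 2 / (Y * ε ^ 2) * (ε ^ 2 * R) = 2 * R / Y := by field_simp
    have p1 : 0 ≤ 2 * b ^ 2 / Y ^ 2 := by positivity
    have p2 : 0 ≤ 2 / (Y * ε ^ 2) := by positivity
    have p3 : 0 ≤ ε ^ 2 * R := by positivity
    nlinarith [mul_nonneg p1 p3]
  rw [← mul_div_assoc, abs_div, abs_of_pos (show 0 < R * (1 + ε ^ 2 * R) by positivity),
    ← div_eq_mul_inv, div_le_div_iff₀ (by positivity) (by positivity)]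
  calc |s * u| * (1 + s ^ 2) ≤ ((1 + |b|) * R) *
      ((1 + 2 * b ^ 2 / Y ^ 2 + 2 / (Y * ε ^ 2)) * (1 + ε ^ 2 * R)) := by gcongr
    _ = _ := by ring

/-- Decay in `s` of `gain`. -/
lemma bound_aux' {Y G ε κ s : ℝ} (hY : 0 < Y) (hG : 0 < G) (hε : 0 < ε) (hκ : 0 < κ) :
    |s * (2 * s / ((κ + s ^ 2) * (1 + ε ^ 2 * (G + s ^ 2 * Y))))| ≤
      2 * (1 + 1 / (ε ^ 2 * Y)) * (1 + s ^ 2)⁻¹ := by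
  have h2 : 1 + s ^ 2 ≤ (1 + 1 / (ε ^ 2 * Y)) * (1 + ε ^ 2 * (G + s ^ 2 * Y)) := by
    have e2 : 1 / (ε ^ 2 * Y) * (ε ^ 2 * (s ^ 2 * Y)) = s ^ 2 := by field_simp
    have p2 : 0 ≤ 1 / (ε ^ 2 * Y) := by positivity
    have p3 : 0 ≤ ε ^ 2 * G := by positivity
    have p4 : 0 ≤ ε ^ 2 * (s ^ 2 * Y) := by positivity
    nlinarith [mul_nonneg p2 p3]
  rw [← mul_div_assoc, show s * (2 * s) = 2 * s ^ 2 by ring, abs_of_nonneg (by positivity),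
    ← div_eq_mul_inv, div_le_div_iff₀ (by positivity) (by positivity)]
  calc 2 * s ^ 2 * (1 + s ^ 2) ≤ 2 * (κ + s ^ 2) *
      ((1 + 1 / (ε ^ 2 * Y)) * (1 + ε ^ 2 * (G + s ^ 2 * Y))) := by gcongr; linarith
    _ = _ := by ring

lemma Gpos (H : Hill y₁ y₂ g₁ g₂ k Θ P) (t : ℝ) : 0 < g₁ t ^ 2 + g₂ t ^ 2 :=
  (pos_iff_pos_of_mul_pos (by rw [H.YG t]; positivity)).1 (H.Ypos t)

/-- Integrability with respect to the area form, from a decay estimate that is uniform in the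
periodic variable. -/
lemma integrable_of_bound (H : Hill y₁ y₂ g₁ g₂ k Θ P) {f : ℝ × ℝ → ℝ} (hf : Measurable f)
    {c : ℝ → ℝ} (hc : Continuous c) (hper : ∀ t, c (t + P) = c t)
    (hb : ∀ t s : ℝ, |s * f (t, s)| ≤ c t * (1 + s ^ 2)⁻¹) :
    Integrable f (areaM P) := by
  obtain ⟨C, hC, hcC⟩ := H.exists_bound hc hper
  rw [areaM, integrable_withDensity_iff_integrable_smul' (by fun_prop) (by simp)]
  have hdom : Integrable (fun p : ℝ × ℝ => C * (1 + p.2 ^ 2)⁻¹) (volume.restrict (dom P)) := by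
    rw [dom, Measure.volume_eq_prod, ← Measure.prod_restrict]
    exact Integrable.mul_prod (integrable_const C)
      (integrable_inv_one_add_sq.mono_measure Measure.restrict_le_self)
  refine hdom.mono' (by fun_prop) (Filter.Eventually.of_forall fun p => ?_)
  rw [ENNReal.toReal_ofReal (abs_nonneg _), smul_eq_mul, Real.norm_eq_abs, abs_mul, abs_abs,
    ← abs_mul]
  refine (hb p.1 p.2).trans ?_
  gcongr
  exact (le_abs_self _).trans (hcC _)

lemma integrable_vtxFst (H : Hill y₁ y₂ g₁ g₂ k Θ P) {ε : ℝ} (hε : 0 < ε) :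
    Integrable (fun p : ℝ × ℝ => vtxFst y₁ y₂ g₁ g₂ ε p.1 p.2) (areaM P) := by
  have c1 := H.cy₁
  have c2 := H.cy₂
  have c3 := H.cg₁
  have c4 := H.cg₂
  have hY := fun t => (H.Ypos t).ne'
  have m1 := c1.measurable
  have m2 := c2.measurable
  have m3 := c3.measurable
  have m4 := c4.measurable
  refine H.integrable_of_bound (by unfold vtxFst; fun_prop)
    (c := fun t => (1 + |y₁ t * g₁ t + y₂ t * g₂ t|) *
      (1 + 2 * (y₁ t * g₁ t + y₂ t * g₂ t) ^ 2 / (y₁ t ^ 2 + y₂ t ^ 2) ^ 2 +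
        2 / ((y₁ t ^ 2 + y₂ t ^ 2) * ε ^ 2)))
    (by
      have h1 : ∀ t, (y₁ t ^ 2 + y₂ t ^ 2) ^ 2 ≠ 0 := fun t => pow_ne_zero _ (hY t)
      have h2 : ∀ t, (y₁ t ^ 2 + y₂ t ^ 2) * ε ^ 2 ≠ 0 := fun t =>
        mul_ne_zero (hY t) (by positivity)
      fun_prop (disch := assumption))
    (fun t => by simp only [H.pery₁, H.pery₂, H.perg₁, H.perg₂]) fun t s => ?_
  exact bound_aux (H.Ypos t) (H.YG t) hε

lemma integrable_vtxSnd (H : Hill y₁ y₂ g₁ g₂ k Θ P) {ε : ℝ} (hε : 0 < ε) :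
    Integrable (fun p : ℝ × ℝ => vtxSnd y₁ y₂ g₁ g₂ ε p.1 p.2) (areaM P) := by
  have c1 := H.cy₁
  have c2 := H.cy₂
  have c3 := H.cg₁
  have c4 := H.cg₂
  have hY := fun t => (H.Ypos t).ne'
  have m1 := c1.measurable
  have m2 := c2.measurable
  have m3 := c3.measurable
  have m4 := c4.measurable
  refine H.integrable_of_bound (by unfold vtxSnd; fun_prop)
    (c := fun t => (1 + |y₁ t * g₁ t + y₂ t * g₂ t|) *
      (1 + 2 * (y₁ t * g₁ t + y₂ t * g₂ t) ^ 2 / (y₁ t ^ 2 + y₂ t ^ 2) ^ 2 +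
        2 / ((y₁ t ^ 2 + y₂ t ^ 2) * ε ^ 2)))
    (by
      have h1 : ∀ t, (y₁ t ^ 2 + y₂ t ^ 2) ^ 2 ≠ 0 := fun t => pow_ne_zero _ (hY t)
      have h2 : ∀ t, (y₁ t ^ 2 + y₂ t ^ 2) * ε ^ 2 ≠ 0 := fun t =>
        mul_ne_zero (hY t) (by positivity)
      fun_prop (disch := assumption))
    (fun t => by simp only [H.pery₁, H.pery₂, H.perg₁, H.perg₂]) fun t s => ?_
  have := bound_aux (s := -s) (H.Ypos t) (H.YG t) hε
  rw [neg_sq s] at this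
  rw [vtxSnd_eq, mul_neg, ← neg_mul]
  simpa only [vtxFst, neg_sq] using this

lemma integrable_gain (H : Hill y₁ y₂ g₁ g₂ k Θ P) {ε : ℝ} (hε : 0 < ε) :
    Integrable (fun p : ℝ × ℝ => gain y₁ y₂ g₁ g₂ k ε p.1 p.2) (areaM P) := by
  have c1 := H.cy₁
  have c2 := H.cy₂
  have m1 := c1.measurable
  have m2 := c2.measurable
  have m3 := H.cg₁.measurable
  have m4 := H.cg₂.measurable
  have m5 := H.hk.measurable
  refine H.integrable_of_bound (by unfold gain; fun_prop)
    (c := fun t => 2 * (1 + 1 / (ε ^ 2 * (y₁ t ^ 2 + y₂ t ^ 2))))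
    (by
      have h2 : ∀ t, ε ^ 2 * (y₁ t ^ 2 + y₂ t ^ 2) ≠ 0 := fun t =>
        mul_ne_zero (by positivity) (H.Ypos t).ne'
      fun_prop (disch := assumption))
    (fun t => by simp only [H.pery₁, H.pery₂]) fun t s => ?_
  exact bound_aux' (H.Ypos t) (H.Gpos t) hε (H.kpos t)

/-- Averaging the orbit inequality over the exterior of the table. -/
lemma integral_vtx_nonneg {H : Hill y₁ y₂ g₁ g₂ k Θ P} {K : Set (ℝ × ℝ)} (hK : H.Table K)
    (hconv : Convex ℝ K) (hcl : IsClosed K) {S : ℝ → ℝ → ℝ} (hS : IsGenFun K S)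
    {T : ℝ × ℝ → ℝ × ℝ} (hT : IsOuterBilliard K T) (hmin : AllOrbitsLocMin K T S)
    {ε : ℝ} (hε : 0 < ε) :
    0 ≤ ∫ p, (vtxFst y₁ y₂ g₁ g₂ ε p.1 p.2 + vtxSnd y₁ y₂ g₁ g₂ ε p.1 p.2 -
      gain y₁ y₂ g₁ g₂ k ε p.1 p.2) ∂(areaM P) := by
  obtain ⟨E, hEm, hE1, hE2⟩ := exists_coord hK
  refine integral_nonneg_of_orbits (measurePreserving_next hK hEm hE1) (H.integrable_vtxFst hε)
    (H.integrable_vtxSnd hε)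
    (((H.integrable_vtxFst hε).add (H.integrable_vtxSnd hε)).sub (H.integrable_gain hε)) ?_
  refine (withDensity_absolutelyContinuous _ _).ae_le
      ((ae_restrict_iff' (measurableSet_dom P)).2 (Filter.Eventually.of_forall fun p hp m => ?_))
  have hp2 : (0:ℝ) < p.2 := hp.2
  exact orbit_ineq hK hconv hcl hS hT hmin hE2 ε
    (ω := fun n => (fun p : ℝ × ℝ => E (tanPt y₁ y₂ g₁ g₂ p.1 p.2))^[n] p)
    (tanPt_notMem hK p.1 (neg_ne_zero.2 hp2.ne')) (hE1 p hp).symm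
    (fun n => by simp only [Function.iterate_succ_apply']) m

/-- Averaging gives `0 ≤ π ∫ (√k - 1 / |y|²) + ε J` for all `ε > 0`, with `J` independent of `ε`. -/
lemma integral_sqrt_ge {H : Hill y₁ y₂ g₁ g₂ k Θ P} {K : Set (ℝ × ℝ)} (hK : H.Table K)
    (hconv : Convex ℝ K) (hcl : IsClosed K) {S : ℝ → ℝ → ℝ} (hS : IsGenFun K S)
    {T : ℝ × ℝ → ℝ × ℝ} (hT : IsOuterBilliard K T) (hmin : AllOrbitsLocMin K T S) :
    2 * π ≤ ∫ t in (0:ℝ)..P, √(k t) := by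
  have hP := H.Ppos
  have hYne := fun t => (H.Ypos t).ne'
  have c1 := H.cy₁
  have c2 := H.cy₂
  have c3 := H.cg₁
  have c4 := H.cg₂
  have ck := H.hk
  have cA : Continuous fun t => π * (√(k t) - 1 / (y₁ t ^ 2 + y₂ t ^ 2)) := by
    fun_prop (disch := assumption)
  have cB : Continuous fun t => π * (1 / (2 * (y₁ t ^ 2 + y₂ t ^ 2) * √(y₁ t ^ 2 + y₂ t ^ 2)) +
      (g₁ t ^ 2 + g₂ t ^ 2) / (2 * √(y₁ t ^ 2 + y₂ t ^ 2))) := by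
    have hs : ∀ t, √(y₁ t ^ 2 + y₂ t ^ 2) ≠ 0 := fun t => (Real.sqrt_pos.2 (H.Ypos t)).ne'
    have h1 : ∀ t, 2 * (y₁ t ^ 2 + y₂ t ^ 2) * √(y₁ t ^ 2 + y₂ t ^ 2) ≠ 0 := fun t =>
      mul_ne_zero (mul_ne_zero two_ne_zero (hYne t)) (hs t)
    have h2 : ∀ t, 2 * √(y₁ t ^ 2 + y₂ t ^ 2) ≠ 0 := fun t => mul_ne_zero two_ne_zero (hs t)
    fun_prop (disch := assumption)
  set I := ∫ t in (0:ℝ)..P, π * (√(k t) - 1 / (y₁ t ^ 2 + y₂ t ^ 2)) with hI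
  set J := ∫ t in (0:ℝ)..P, π * (1 / (2 * (y₁ t ^ 2 + y₂ t ^ 2) * √(y₁ t ^ 2 + y₂ t ^ 2)) +
      (g₁ t ^ 2 + g₂ t ^ 2) / (2 * √(y₁ t ^ 2 + y₂ t ^ 2))) with hJ
  have key : ∀ ε : ℝ, 0 < ε → 0 ≤ I + ε * J := by
    intro ε hε
    have h0 := integral_vtx_nonneg hK hconv hcl hS hT hmin hε
    have hint : Integrable (fun p : ℝ × ℝ => vtxFst y₁ y₂ g₁ g₂ ε p.1 p.2 +
        vtxSnd y₁ y₂ g₁ g₂ ε p.1 p.2 - gain y₁ y₂ g₁ g₂ k ε p.1 p.2) (areaM P) :=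
      ((H.integrable_vtxFst hε).add (H.integrable_vtxSnd hε)).sub (H.integrable_gain hε)
    rw [areaM, integrable_withDensity_iff_integrable_smul' (by fun_prop) (by simp)] at hint
    rw [areaM, integral_withDensity_eq_integral_toReal_smul (by fun_prop) (by simp)] at h0
    simp only [ENNReal.toReal_ofReal (abs_nonneg _), smul_eq_mul] at h0 hint
    rw [dom, Measure.volume_eq_prod] at h0 hint
    rw [setIntegral_prod _ hint] at h0
    rw [← Measure.prod_restrict] at hint
    have cE : Continuous fun t => ε * (π * (1 / (2 * (y₁ t ^ 2 + y₂ t ^ 2) *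
        √(y₁ t ^ 2 + y₂ t ^ 2)) + (g₁ t ^ 2 + g₂ t ^ 2) / (2 * √(y₁ t ^ 2 + y₂ t ^ 2)))) :=
      continuous_const.mul cB
    have hsum : I + ε * J = ∫ t in Set.Ioc 0 P,
        (π * (√(k t) - 1 / (y₁ t ^ 2 + y₂ t ^ 2)) +
          ε * (π * (1 / (2 * (y₁ t ^ 2 + y₂ t ^ 2) * √(y₁ t ^ 2 + y₂ t ^ 2)) +
      (g₁ t ^ 2 + g₂ t ^ 2) / (2 * √(y₁ t ^ 2 + y₂ t ^ 2))))) := by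
      rw [hI, hJ, ← intervalIntegral.integral_const_mul, ← intervalIntegral.integral_add
        (cA.intervalIntegrable _ _) (cE.intervalIntegrable _ _),
        intervalIntegral.integral_of_le hP.le]
    rw [hsum]
    refine h0.trans (setIntegral_mono hint.integral_prod_left
      ((cA.add cE).integrableOn_Ioc) fun t => ?_)
    refine le_trans (le_of_eq ?_) (integral_edge_le (H.Ypos t) (H.YG t) hε (H.kpos t))
    refine setIntegral_congr_fun measurableSet_Ioi fun s hs => ?_
    simp only [abs_of_pos (Set.mem_Ioi.1 hs), vtxFst, vtxSnd, gain]
  have hI0 : 0 ≤ I := by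
    by_contra! hneg
    have := key (-I / (2 * (|J| + 1))) (div_pos (by linarith) (by positivity))
    have h1 : -I / (2 * (|J| + 1)) * J ≤ -I / 2 := by
      rw [div_mul_eq_mul_div, div_le_div_iff₀ (by positivity) two_pos]
      nlinarith [le_abs_self J]
    linarith
  have cs : Continuous fun t => √(k t) := by fun_prop
  have cY : Continuous fun t => 1 / (y₁ t ^ 2 + y₂ t ^ 2) := by fun_prop (disch := assumption)
  rw [hI, intervalIntegral.integral_const_mul, intervalIntegral.integral_sub
    (cs.intervalIntegrable _ _) (cY.intervalIntegrable _ _), H.integral_inv_Y] at hI0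
  linarith [nonneg_of_mul_nonneg_right hI0 Real.pi_pos]

end Hill

/-- If the origin is the Santalo point of `K` and every orbit of the outer
billiard map is locally minimizing with respect to the generating function `S`, then `∂K` is
an ellipse. -/
theorem outer_billiard_locally_minimizing_rigidity
    (K : Set (ℝ × ℝ)) (hconv : Convex ℝ K) (hcomp : IsCompact K)
    (hint : (interior K).Nonempty)
    (hbd : ∃ r, HasC2PosCurvBoundary K 0 r)
    (hsant : IsSantaloPoint K 0)
    (T : ℝ × ℝ → ℝ × ℝ) (hT : IsOuterBilliard K T)
    (S : ℝ → ℝ → ℝ) (hS : IsGenFun K S)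
    (hmin : AllOrbitsLocMin K T S) :
    IsEllipse (frontier K) := by
  obtain ⟨r, hr⟩ := hbd
  obtain ⟨y₁, y₂, g₁, g₂, k, Θ, P, H, hfr⟩ := exists_hill hr
  have hK := H.table hcomp hsant.1 hfr
  obtain ⟨z₁, z₂⟩ := Hill.integral_y_eq_zero hK hsant
  have hk := H.k_eq_of_le z₁ z₂
    (Hill.integral_sqrt_ge hK hconv hcomp.isClosed hS hT hmin)
  exact H.isEllipse (div_pos Real.two_pi_pos H.Ppos) hk hfr
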